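/- There exists a random point measure ξ which almost surely belongs to 𝒞₂, such that d₄(EM(W_N/N), ξ) → 0 in probability as N → ∞. Moreover, the distribution of ξ is determined by the discrete component ν_d of the spectral measure: if two processes satisfying the standing assumption have the same ν_d, the corresponding limits ξ have the same law. -/

import Mathlib

open MeasureTheory ProbabilityTheory Filter Real

noncomputable section

/-- The square `(-π, π]²` on which the spectral measure lives. -/
def specBox : Set (ℝ × ℝ) := Set.Ioc (-π) π ×ˢ Set.Ioc (-π) π

/-- `(1/N) ∑_j g(λ_j(A))`, the integral of `g` against the empirical spectral
distribution of a symmetric `N × N` real matrix `A` (junk value `0` if `A` is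
not symmetric). -/
def esdEval {N : ℕ} (A : Matrix (Fin N) (Fin N) ℝ) (g : ℝ → ℝ) : ℝ :=
  if hA : A.IsHermitian then (N : ℝ)⁻¹ * ∑ j, g (hA.eigenvalues j) else 0

/-- The (random) empirical spectral distributions of `A N` converge weakly in
probability to the probability measure `μ`: for every bounded continuous `g`,
`∫ g d(ESD(A N)) → ∫ g dμ` in probability. -/
def ESDTendstoInProb {Ω : Type*} [MeasurableSpace Ω] (P : Measure Ω)
    (A : (N : ℕ) → Ω → Matrix (Fin N) (Fin N) ℝ) (μ : Measure ℝ) : Prop :=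
  ∀ g : ℝ → ℝ, Continuous g → (∃ C, ∀ x, |g x| ≤ C) →
    ∀ ε > 0, Tendsto (fun N => P {ω | ε ≤ |esdEval (A N ω) g - ∫ x, g x ∂μ|})
      atTop (nhds 0)

/-- The symmetric matrix `W_N/√N`, where `W_N(i,j) = X_{i,j} + X_{j,i}`,
`1 ≤ i,j ≤ N`. -/
def scaledW {Ω : Type*} (X : ℤ → ℤ → Ω → ℝ) (N : ℕ) (ω : Ω) :
    Matrix (Fin N) (Fin N) ℝ :=
  fun i j => (Real.sqrt N)⁻¹ *
    (X ((i : ℕ) + 1) ((j : ℕ) + 1) ω + X ((j : ℕ) + 1) ((i : ℕ) + 1) ω)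

/-- A centered stationary Gaussian process indexed by `ℤ²` with positive
variance: every finite real linear combination is a centered Gaussian random
variable, and second moments are shift invariant. -/
structure StatGauss {Ω : Type*} [MeasurableSpace Ω] (P : Measure Ω)
    (X : ℤ → ℤ → Ω → ℝ) : Prop where
  meas : ∀ j k, Measurable (X j k)
  gauss : ∀ c : (ℤ × ℤ) →₀ ℝ, ∃ v : NNReal,
    P.map (fun ω => ∑ p ∈ c.support, c p * X p.1 p.2 ω) = gaussianReal 0 v
  var_pos : 0 < ∫ ω, (X 0 0 ω) ^ 2 ∂P
  stat : ∀ j k u v : ℤ,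
    ∫ ω, X j k ω * X (j + u) (k + v) ω ∂P = ∫ ω, X 0 0 ω * X u v ω ∂P

/-- The spectral measure `ν` of the process `X` (from the Herglotz
representation), together with the standing assumption of the paper:
`ν = ν_ac + ν_d`, where `ν_ac` is absolutely continuous with respect to
Lebesgue measure with density `f ≥ 0` and `ν_d = νd` is discrete (supported on
a countable set). -/
structure SpectralDecomp {Ω : Type*} [MeasurableSpace Ω] (P : Measure Ω)
    (X : ℤ → ℤ → Ω → ℝ) (ν νd : Measure (ℝ × ℝ)) (f : ℝ × ℝ → ℝ) : Prop where
  finite : IsFiniteMeasure ν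
  support : ν specBoxᶜ = 0
  herglotz : ∀ u v : ℤ,
    (∫ q, Complex.exp (Complex.I * ((u * q.1 + v * q.2 : ℝ) : ℂ)) ∂ν)
      = ((∫ ω, X 0 0 ω * X u v ω ∂P : ℝ) : ℂ)
  f_nonneg : ∀ q, 0 ≤ f q
  f_meas : Measurable f
  discrete : ∃ s : Set (ℝ × ℝ), s.Countable ∧ νd sᶜ = 0
  decomp : ν = (volume.restrict specBox).withDensity
      (fun q => ENNReal.ofReal (f q)) + νd

/-- A point configuration: the sequences `(α_1(ξ), α_2(ξ), …)` (nonnegative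
part) and `(α_{-1}(ξ), α_{-2}(ξ), …)` (nonpositive part) of a point measure
`ξ = ∞·δ_0 + ∑_{j≠0} δ_{α_j(ξ)}` in `𝒫`. -/
abbrev PtCfg : Type := (ℕ → ℝ) × (ℕ → ℝ)

/-- The eigen measure `EM(A) = ∞·δ_0 + ∑_j δ_{λ_j(A)}` of a symmetric matrix
`A`, recorded as a point configuration: the nonnegative parts of the
eigenvalues sorted in decreasing order (padded with `0`s) and the nonpositive
parts sorted in increasing order (padded with `0`s). -/
def EMcfg {N : ℕ} (A : Matrix (Fin N) (Fin N) ℝ) : PtCfg :=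
  if hA : A.IsHermitian then
    (fun n =>
      (List.insertionSort (· ≥ ·)
        ((List.ofFn hA.eigenvalues).map fun t => max t 0)).getD n 0,
     fun n =>
      (List.insertionSort (· ≤ ·)
        ((List.ofFn hA.eigenvalues).map fun t => min t 0)).getD n 0)
  else (fun _ => 0, fun _ => 0)

/-- `ξ ∈ 𝒞_p`: the point measure `ξ` satisfies `∑_{j≠0} |α_j(ξ)|^p < ∞`. -/
def MemC (p : ℕ) (ξ : PtCfg) : Prop :=
  Summable (fun n => |ξ.1 n| ^ p) ∧ Summable (fun n => |ξ.2 n| ^ p)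

/-- The distance `d_p(ξ₁, ξ₂) = (∑_{j≠0} |α_j(ξ₁) - α_j(ξ₂)|^p)^{1/p}` on
`𝒞_p`. -/
def dPt (p : ℕ) (ξ₁ ξ₂ : PtCfg) : ℝ :=
  ((∑' n, |ξ₁.1 n - ξ₂.1 n| ^ p) + ∑' n, |ξ₁.2 n - ξ₂.2 n| ^ p) ^ ((p : ℝ)⁻¹)

/-- The symmetric matrix `W_N/N`, where `W_N(i,j) = X_{i,j} + X_{j,i}`. -/
def scaledW1 {Ω : Type*} (X : ℤ → ℤ → Ω → ℝ) (N : ℕ) (ω : Ω) :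
    Matrix (Fin N) (Fin N) ℝ :=
  fun i j => (N : ℝ)⁻¹ *
    (X ((i : ℕ) + 1) ((j : ℕ) + 1) ω + X ((j : ℕ) + 1) ((i : ℕ) + 1) ω)

/-!
Write `Xd` for the component of `X` carried by the atoms of `ν`. The covariance of `X - Xd` has
spectral measure `f`, so it tends to zero at infinity by the Riemann-Lebesgue lemma; a fourth moment
computation then shows that the scaled matrices of `X - Xd` have small square in Frobenius norm, and
hence that the traces of the powers `k ≥ 4` of the scaled matrices of `X` and of `Xd` differ by a
null sequence in probability. Up to an error small in `L²`, `Xd` is a finite sum of terms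
`exp (i ⟨a, (j, k)⟩) * Z a`, for which the scaled matrix has rank bounded in `N` and its traces
converge pathwise, by Cesàro summation of characters. So the traces for `Xd` are Cauchy in
probability.

On sorted configurations with bounded fourth moment, convergence of the moments of order at least
four is convergence of the configurations: their points decay uniformly and are determined by the
moments. The traces therefore produce the limit `ξ`. As the second moments are bounded in mean,
Fatou's lemma puts `ξ` in `𝒞₂`, and convergence of the points improves to convergence in `d₄`. The
same `ξ` is the limit of the eigen measures of `Xd`, whose laws depend only on `νd`.
-/

/-! ### Point configurations and their moments -/

lemma hasSum_polynomial_eval_mul_pow {ι : Type*} {x : ι → ℝ} {k : ℕ}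
    (hx : ∀ j, Summable fun i => x i ^ (k + j)) (p : Polynomial ℝ) :
    HasSum (fun i => p.eval (x i) * x i ^ k)
      (∑ j ∈ Finset.range (p.natDegree + 1), p.coeff j * ∑' i, x i ^ (k + j)) := by
  have hsum : HasSum (fun i => ∑ j ∈ Finset.range (p.natDegree + 1), p.coeff j * x i ^ (k + j))
      (∑ j ∈ Finset.range (p.natDegree + 1), p.coeff j * ∑' i, x i ^ (k + j)) :=
    hasSum_sum fun j _ => (hx j).hasSum.mul_left _
  refine hsum.congr_fun fun i => ?_
  rw [Polynomial.eval_eq_sum_range, Finset.sum_mul]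
  exact Finset.sum_congr rfl fun j _ => by ring

lemma tendsto_tsum_mul_pow {ι : Type*} {x : ι → ℝ} {k : ℕ} {R : ℝ} (hR : ∀ i, |x i| ≤ R)
    (hx : Summable fun i => |x i| ^ k) {F : ℕ → ℝ → ℝ} {f : ℝ → ℝ} (hf : Continuous f)
    (hF : TendstoUniformlyOn F f atTop (Set.Icc (-R) R)) :
    Tendsto (fun n => ∑' i, F n (x i) * x i ^ k) atTop (nhds (∑' i, f (x i) * x i ^ k)) := by
  obtain ⟨B, hB⟩ := (isCompact_Icc (a := -R) (b := R)).exists_bound_of_continuousOn hf.continuousOn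
  refine tendsto_tsum_of_dominated_convergence (hx.mul_left (B + 1)) (fun i => ?_) ?_
  · exact (hF.tendsto_at (abs_le.1 (hR i))).mul_const _
  · filter_upwards [Metric.tendstoUniformlyOn_iff.1 hF 1 one_pos] with n hn i
    have hi : x i ∈ Set.Icc (-R) R := abs_le.1 (hR i)
    have hFB : ‖F n (x i)‖ ≤ B + 1 := by
      have := norm_sub_norm_le (F n (x i)) (f (x i))
      have := hn _ hi
      rw [dist_comm, dist_eq_norm] at this
      linarith [hB _ hi]
    rw [norm_mul, norm_pow, Real.norm_eq_abs (x i)]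
    gcongr

lemma exists_polynomial_seq_tendstoUniformlyOn {f : ℝ → ℝ} (hf : Continuous f) (a b : ℝ) :
    ∃ p : ℕ → Polynomial ℝ,
      TendstoUniformlyOn (fun n x => (p n).eval x) f atTop (Set.Icc a b) := by
  choose p hp using fun n : ℕ =>
    exists_polynomial_near_of_continuousOn a b f hf.continuousOn _ (Nat.one_div_pos_of_nat (n := n))
  refine ⟨p, Metric.tendstoUniformlyOn_iff.2 fun ε hε => ?_⟩
  filter_upwards [(tendsto_one_div_add_atTop_nhds_zero_nat (𝕜 := ℝ)).eventually_lt_const hε]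
    with n hn x hx
  rw [dist_comm]
  exact (hp n x hx).trans hn

lemma tsum_mul_pow_eq_of_moments_eq {ι κ : Type*} {x : ι → ℝ} {y : κ → ℝ} {k : ℕ} {R : ℝ}
    (hxR : ∀ i, |x i| ≤ R) (hyR : ∀ i, |y i| ≤ R)
    (hx : ∀ j, Summable fun i => x i ^ (k + j)) (hy : ∀ j, Summable fun i => y i ^ (k + j))
    (h : ∀ j, ∑' i, x i ^ (k + j) = ∑' i, y i ^ (k + j)) {f : ℝ → ℝ} (hf : Continuous f) :
    ∑' i, f (x i) * x i ^ k = ∑' i, f (y i) * y i ^ k := by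
  obtain ⟨p, hp⟩ := exists_polynomial_seq_tendstoUniformlyOn hf (-R) R
  have hx_abs : Summable fun i => |x i| ^ k := by
    simpa only [abs_pow, add_zero] using (hx 0).abs
  have hy_abs : Summable fun i => |y i| ^ k := by
    simpa only [abs_pow, add_zero] using (hy 0).abs
  refine tendsto_nhds_unique (tendsto_tsum_mul_pow hxR hx_abs hf hp)
    ((tendsto_tsum_mul_pow hyR hy_abs hf hp).congr fun n => ?_)
  rw [(hasSum_polynomial_eval_mul_pow hx (p n)).tsum_eq,
    (hasSum_polynomial_eval_mul_pow hy (p n)).tsum_eq]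
  simp only [h]

/-- At the first index where two such sequences differ, the test function `x ↦ max (x - c) 0`
with `c` the smaller of the two values separates them. -/
lemma antitone_eq_of_tsum_max_sub_mul_pow_eq {x y : ℕ → ℝ} (hx : Antitone x) (hy : Antitone y)
    (hx0 : ∀ n, 0 ≤ x n) (hy0 : ∀ n, 0 ≤ y n) {k : ℕ}
    (hxs : ∀ c, Summable fun n => max (x n - c) 0 * x n ^ k)
    (hys : ∀ c, Summable fun n => max (y n - c) 0 * y n ^ k)
    (h : ∀ c, 0 ≤ c → ∑' n, max (x n - c) 0 * x n ^ k = ∑' n, max (y n - c) 0 * y n ^ k) :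
    x = y := by
  have le_of_eq_below {u v : ℕ → ℝ} (hv : Antitone v) (hu0 : ∀ n, 0 ≤ u n) (hv0 : ∀ n, 0 ≤ v n)
      (hus : ∀ c, Summable fun n => max (u n - c) 0 * u n ^ k)
      (huv : ∀ c, 0 ≤ c → ∑' n, max (u n - c) 0 * u n ^ k = ∑' n, max (v n - c) 0 * v n ^ k)
      (n : ℕ) (heq : ∀ i < n, u i = v i) : u n ≤ v n := by
    by_contra! hlt
    have hv_sum : ∑' i, max (v i - v n) 0 * v i ^ k
        = ∑ i ∈ Finset.range n, max (v i - v n) 0 * v i ^ k := by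
      refine tsum_eq_sum fun i hi => ?_
      have := hv (not_lt.1 (Finset.mem_range.not.1 hi))
      rw [max_eq_right (by linarith), zero_mul]
    have hu_sum := (hus (v n)).sum_le_tsum (Finset.range (n + 1)) fun i _ =>
      mul_nonneg (le_max_right _ _) (pow_nonneg (hu0 i) k)
    have hpos : 0 < max (u n - v n) 0 * u n ^ k :=
      mul_pos (lt_max_of_lt_left (by linarith)) (pow_pos (by linarith [hv0 n]) _)
    rw [Finset.sum_range_succ, huv _ (hv0 n), hv_sum,
      Finset.sum_congr rfl fun i hi => by rw [heq i (Finset.mem_range.1 hi)]] at hu_sum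
    linarith
  ext n
  induction n using Nat.strong_induction_on with
  | _ n ih =>
    exact le_antisymm (le_of_eq_below hy hx0 hy0 hxs h n ih)
      (le_of_eq_below hx hy0 hx0 hys (fun c hc => (h c hc).symm) n fun i hi => (ih i hi).symm)

lemma summable_const_div_natCast_add_one_sq (c : ℝ) :
    Summable fun n : ℕ => c / ((n : ℝ) + 1) ^ 2 := by
  have := (summable_nat_add_iff 1).2 (Real.summable_nat_pow_inv.2 one_lt_two)
  simpa [div_eq_mul_inv] using this.mul_left c

namespace PtCfg

/-- The points of a configuration as one family: `Sum.inl n` carries the paper's index `n + 1`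
and `Sum.inr n` the index `-(n + 1)`. -/
def point (s : PtCfg) : ℕ ⊕ ℕ → ℝ := Sum.elim s.1 s.2

/-- The position of an index among the indices of the same sign, starting from `0`. -/
def rank : ℕ ⊕ ℕ → ℕ := Sum.elim id id

/-- The ordering and sign conditions that make a pair of sequences the point sequences
`(α_j)_{j ≥ 1}`, `(α_{-j})_{j ≥ 1}` of a point measure. -/
structure Sorted (s : PtCfg) : Prop where
  antitone : Antitone s.1
  monotone : Monotone s.2
  nonneg : ∀ n, 0 ≤ s.1 n
  nonpos : ∀ n, s.2 n ≤ 0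

/-- The sorted configurations whose points decay uniformly, `(rank i + 1) * α_i ^ 4 ≤ C`. The
eigen measures of matrices with `tr A ^ 4 ≤ C` lie in this compact set. -/
def decaySet (C : ℝ) : Set PtCfg :=
  {s | s.Sorted ∧ ∀ i, ((rank i : ℝ) + 1) * s.point i ^ 4 ≤ C}

/-- The sum of the `k`-th powers of the points. -/
def moment (k : ℕ) (s : PtCfg) : ℝ := ∑' i, s.point i ^ k

lemma ext_point {s t : PtCfg} (h : ∀ i, s.point i = t.point i) : s = t :=
  Prod.ext (funext fun n => h (.inl n)) (funext fun n => h (.inr n))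

lemma continuous_point (i : ℕ ⊕ ℕ) : Continuous fun s : PtCfg => s.point i := by
  cases i with
  | inl n => exact (continuous_apply n).comp continuous_fst
  | inr n => exact (continuous_apply n).comp continuous_snd

lemma summable_rank_add_one (c : ℝ) : Summable fun i : ℕ ⊕ ℕ => c / ((rank i : ℝ) + 1) ^ 2 :=
  Summable.sum _ (summable_const_div_natCast_add_one_sq c) (summable_const_div_natCast_add_one_sq c)

lemma isClosed_setOf_sorted : IsClosed {s : PtCfg | s.Sorted} := by
  have hfst (n : ℕ) : Continuous fun s : PtCfg => s.1 n := continuous_point (.inl n)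
  have hsnd (n : ℕ) : Continuous fun s : PtCfg => s.2 n := continuous_point (.inr n)
  have heq : {s : PtCfg | s.Sorted} = {s | (∀ m n, m ≤ n → s.1 n ≤ s.1 m) ∧
      (∀ m n, m ≤ n → s.2 m ≤ s.2 n) ∧ (∀ n, 0 ≤ s.1 n) ∧ ∀ n, s.2 n ≤ 0} := by
    ext s
    exact ⟨fun h => ⟨fun _ _ hmn => h.antitone hmn, fun _ _ hmn => h.monotone hmn, h.nonneg,
      h.nonpos⟩, fun h => ⟨fun _ _ hmn => h.1 _ _ hmn, fun _ _ hmn => h.2.1 _ _ hmn, h.2.2.1,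
      h.2.2.2⟩⟩
  simp only [heq, Set.ofPred_and, Set.ofPred_forall]
  refine .inter ?_ (.inter ?_ (.inter ?_ ?_))
  · exact isClosed_iInter fun m => isClosed_iInter fun n => isClosed_iInter fun _ =>
      isClosed_le (hfst n) (hfst m)
  · exact isClosed_iInter fun m => isClosed_iInter fun n => isClosed_iInter fun _ =>
      isClosed_le (hsnd m) (hsnd n)
  · exact isClosed_iInter fun n => isClosed_le continuous_const (hfst n)
  · exact isClosed_iInter fun n => isClosed_le (hsnd n) continuous_const

lemma isClosed_decaySet (C : ℝ) : IsClosed (decaySet C) := by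
  simp only [decaySet, Set.ofPred_and, Set.ofPred_forall]
  exact isClosed_setOf_sorted.inter <| isClosed_iInter fun i =>
    isClosed_le (continuous_const.mul ((continuous_point i).pow 4)) continuous_const

lemma decaySet_mono {C C' : ℝ} (h : C ≤ C') : decaySet C ⊆ decaySet C' :=
  fun _ hs => ⟨hs.1, fun i => (hs.2 i).trans h⟩

variable {C : ℝ} {s t : PtCfg}

lemma point_pow_four_le (hs : s ∈ decaySet C) (i : ℕ ⊕ ℕ) :
    s.point i ^ 4 ≤ C / ((rank i : ℝ) + 1) := by
  rw [le_div_iff₀ (by positivity), mul_comm]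
  exact hs.2 i

lemma abs_point_le (hs : s ∈ decaySet C) (i : ℕ ⊕ ℕ) : |s.point i| ≤ max 1 C := by
  by_contra! hlt
  have hone : 1 < |s.point i| := (le_max_left _ _).trans_lt hlt
  have hpow : |s.point i| ≤ s.point i ^ 4 := by
    rw [← (show Even 4 by decide).pow_abs]
    exact le_self_pow₀ hone.le (by norm_num)
  have hC : s.point i ^ 4 ≤ C :=
    (le_mul_of_one_le_left (by positivity) (by linarith [Nat.cast_nonneg (α := ℝ) (rank i)])).trans
      (hs.2 i)
  linarith [le_max_right 1 C]

lemma norm_point_pow_le (hs : s ∈ decaySet C) (i : ℕ ⊕ ℕ) (j : ℕ) :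
    ‖s.point i ^ (8 + j)‖ ≤ max 1 C ^ j * C ^ 2 / ((rank i : ℝ) + 1) ^ 2 := by
  have height : |s.point i| ^ 8 ≤ C ^ 2 / ((rank i : ℝ) + 1) ^ 2 := by
    calc |s.point i| ^ 8 = (s.point i ^ 4) ^ 2 := by
          rw [(show Even 8 by decide).pow_abs, ← pow_mul]
      _ ≤ (C / ((rank i : ℝ) + 1)) ^ 2 := by
          gcongr
          exact point_pow_four_le hs i
      _ = C ^ 2 / ((rank i : ℝ) + 1) ^ 2 := div_pow _ _ _
  calc ‖s.point i ^ (8 + j)‖ = |s.point i| ^ j * |s.point i| ^ 8 := by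
        rw [norm_pow, Real.norm_eq_abs, pow_add, mul_comm]
    _ ≤ max 1 C ^ j * (C ^ 2 / ((rank i : ℝ) + 1) ^ 2) := by
        gcongr
        exact abs_point_le hs i
    _ = _ := by ring

lemma summable_point_pow (hs : s ∈ decaySet C) (j : ℕ) : Summable fun i => s.point i ^ (8 + j) :=
  .of_norm_bounded (summable_rank_add_one _) fun i => norm_point_pow_le hs i j

lemma isCompact_decaySet (C : ℝ) : IsCompact (decaySet C) := by
  have hbox : IsCompact ((Set.univ.pi fun _ : ℕ => Set.Icc (-(max 1 C)) (max 1 C)) ×ˢ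
      (Set.univ.pi fun _ : ℕ => Set.Icc (-(max 1 C)) (max 1 C))) :=
    (isCompact_univ_pi fun _ => isCompact_Icc).prod (isCompact_univ_pi fun _ => isCompact_Icc)
  refine hbox.of_isClosed_subset (isClosed_decaySet C) fun s hs => ?_
  exact ⟨fun n _ => abs_le.1 (abs_point_le hs (.inl n)),
    fun n _ => abs_le.1 (abs_point_le hs (.inr n))⟩

lemma continuousOn_moment (C : ℝ) (j : ℕ) : ContinuousOn (moment (8 + j)) (decaySet C) :=
  continuousOn_tsum (fun i => ((continuous_point i).pow _).continuousOn) (summable_rank_add_one _)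
    fun i _ hs => norm_point_pow_le hs i j

lemma summable_test_mul_point_pow (hs : s ∈ decaySet C) {f : ℝ → ℝ} (hf : Continuous f) :
    Summable fun i => f (s.point i) * s.point i ^ 8 := by
  obtain ⟨B, hB⟩ := (isCompact_Icc (a := -(max 1 C)) (b := max 1 C)).exists_bound_of_continuousOn
    hf.continuousOn
  refine .of_norm_bounded ((summable_point_pow hs 0).norm.mul_left B) fun i => ?_
  rw [norm_mul]
  gcongr
  exact hB _ (abs_le.1 (abs_point_le hs i))

lemma summable_test_mul_fst_pow (hs : s ∈ decaySet C) {f : ℝ → ℝ} (hf : Continuous f) :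
    Summable fun n => f (s.1 n) * s.1 n ^ 8 :=
  (summable_test_mul_point_pow hs hf).comp_injective Sum.inl_injective

lemma summable_test_mul_snd_pow (hs : s ∈ decaySet C) {f : ℝ → ℝ} (hf : Continuous f) :
    Summable fun n => f (s.2 n) * s.2 n ^ 8 :=
  (summable_test_mul_point_pow hs hf).comp_injective Sum.inr_injective

lemma tsum_test_mul_point_pow_eq (hs : s ∈ decaySet C) (ht : t ∈ decaySet C)
    (h : ∀ j, moment (8 + j) s = moment (8 + j) t) {f : ℝ → ℝ} (hf : Continuous f) :
    (∑' n, f (s.1 n) * s.1 n ^ 8) + ∑' n, f (s.2 n) * s.2 n ^ 8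
      = (∑' n, f (t.1 n) * t.1 n ^ 8) + ∑' n, f (t.2 n) * t.2 n ^ 8 := by
  have split {u : PtCfg} (hu : u ∈ decaySet C) : ∑' i, f (u.point i) * u.point i ^ 8
      = (∑' n, f (u.1 n) * u.1 n ^ 8) + ∑' n, f (u.2 n) * u.2 n ^ 8 :=
    Summable.tsum_sum (summable_test_mul_fst_pow hu hf) (summable_test_mul_snd_pow hu hf)
  rw [← split hs, ← split ht]
  exact tsum_mul_pow_eq_of_moments_eq (k := 8) (abs_point_le hs) (abs_point_le ht)
    (summable_point_pow hs) (summable_point_pow ht) h hf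

lemma fst_eq_of_moment_eq (hs : s ∈ decaySet C) (ht : t ∈ decaySet C)
    (h : ∀ j, moment (8 + j) s = moment (8 + j) t) : s.1 = t.1 := by
  have hf (c : ℝ) : Continuous fun x : ℝ => max (x - c) 0 := by fun_prop
  have hsummable {u : PtCfg} (hu : u ∈ decaySet C) (c : ℝ) :
      Summable fun n => max (u.1 n - c) 0 * u.1 n ^ 8 :=
    summable_test_mul_fst_pow hu (hf c)
  have hnonpos {u : PtCfg} (hu : u ∈ decaySet C) {c : ℝ} (hc : 0 ≤ c) :
      ∑' n, max (u.2 n - c) 0 * u.2 n ^ 8 = 0 := by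
    refine (tsum_congr fun n => ?_).trans tsum_zero
    rw [max_eq_right (by linarith [hu.1.nonpos n]), zero_mul]
  refine antitone_eq_of_tsum_max_sub_mul_pow_eq hs.1.antitone ht.1.antitone hs.1.nonneg ht.1.nonneg
    (hsummable hs) (hsummable ht) fun c hc => ?_
  have := tsum_test_mul_point_pow_eq hs ht h (hf c)
  rwa [hnonpos hs hc, hnonpos ht hc, add_zero, add_zero] at this

lemma eq_of_moment_eq (hs : s ∈ decaySet C) (ht : t ∈ decaySet C)
    (h : ∀ j, moment (8 + j) s = moment (8 + j) t) : s = t := by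
  have hf (c : ℝ) : Continuous fun x : ℝ => max (-x - c) 0 := by fun_prop
  have hpow (x : ℝ) : (-x) ^ 8 = x ^ 8 := (show Even 8 by decide).neg_pow x
  have hsummable {u : PtCfg} (hu : u ∈ decaySet C) (c : ℝ) :
      Summable fun n => max (-u.2 n - c) 0 * (-u.2 n) ^ 8 := by
    simp only [hpow]
    exact summable_test_mul_snd_pow hu (hf c)
  have hfst := fst_eq_of_moment_eq hs ht h
  have hsnd : (fun n => -s.2 n) = fun n => -t.2 n := by
    refine antitone_eq_of_tsum_max_sub_mul_pow_eq (fun _ _ hmn => neg_le_neg (hs.1.monotone hmn))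
      (fun _ _ hmn => neg_le_neg (ht.1.monotone hmn)) (fun n => neg_nonneg.2 (hs.1.nonpos n))
      (fun n => neg_nonneg.2 (ht.1.nonpos n)) (hsummable hs) (hsummable ht) fun c _ => ?_
    have := tsum_test_mul_point_pow_eq hs ht h (hf c)
    simp only [hpow]
    rwa [hfst, add_right_inj] at this
  exact Prod.ext hfst (neg_injective hsnd)

lemma exists_tendsto_of_tendsto_moment {F : ℕ → PtCfg} (hF : ∀ n, F n ∈ decaySet C) {m : ℕ → ℝ}
    (hm : ∀ j, Tendsto (fun n => moment (8 + j) (F n)) atTop (nhds (m j))) :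
    ∃ s ∈ decaySet C, Tendsto F atTop (nhds s) ∧ ∀ j, moment (8 + j) s = m j := by
  have : CompactSpace (decaySet C) := isCompact_iff_compactSpace.1 (isCompact_decaySet C)
  have hcont : Continuous fun (s : decaySet C) (j : ℕ) => moment (8 + j) s.1 :=
    continuous_pi fun j => continuousOn_iff_continuous_domRestrict.1 (continuousOn_moment C j)
  have hemb := hcont.isClosedEmbedding fun s t hst =>
    Subtype.ext (eq_of_moment_eq s.2 t.2 (congrFun hst))
  have hlim : Tendsto (fun n j => moment (8 + j) (F n)) atTop (nhds m) := tendsto_pi_nhds.2 hm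
  obtain ⟨s, rfl⟩ := hemb.isClosed_range.mem_of_tendsto hlim
    (Eventually.of_forall fun n => ⟨⟨F n, hF n⟩, rfl⟩)
  have hconv : Tendsto (fun n => (⟨F n, hF n⟩ : decaySet C)) atTop (nhds s) := by
    rw [hemb.isInducing.tendsto_nhds_iff]
    exact hlim
  exact ⟨s, s.2, (continuous_subtype_val.tendsto s).comp hconv, fun _ => rfl⟩

end PtCfg

namespace PtCfg

lemma Sorted.abs_point_le_of_rank_le {s : PtCfg} (hs : s.Sorted) {i : ℕ ⊕ ℕ} {m : ℕ}
    (hm : m ≤ rank i) : |s.point i| ≤ |s.point (i.map (fun _ => m) fun _ => m)| := by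
  rcases i with n | n
  · simpa [point, abs_of_nonneg (hs.nonneg _)] using hs.antitone (show m ≤ n from hm)
  · simpa [point, abs_of_nonpos (hs.nonpos _)] using hs.monotone (show m ≤ n from hm)

lemma Sorted.rank_add_one_mul_point_pow_le {s : PtCfg} (hs : s.Sorted) {k : ℕ} (hk : Even k)
    {S : ℝ} (hS : HasSum (fun i => s.point i ^ k) S) (i : ℕ ⊕ ℕ) :
    ((rank i : ℝ) + 1) * s.point i ^ k ≤ S := by
  have hinj : Function.Injective fun m : ℕ => i.map (fun _ => m) fun _ => m := by
    cases i <;> intro m n hmn <;> simpa using hmn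
  calc ((rank i : ℝ) + 1) * s.point i ^ k
      = ∑ _m ∈ Finset.range (rank i + 1), s.point i ^ k := by simp
    _ ≤ ∑ m ∈ Finset.range (rank i + 1), s.point (i.map (fun _ => m) fun _ => m) ^ k := by
        refine Finset.sum_le_sum fun m hm => ?_
        rw [← hk.pow_abs, ← hk.pow_abs (s.point (i.map _ _))]
        exact pow_le_pow_left₀ (abs_nonneg _)
          (hs.abs_point_le_of_rank_le (Nat.lt_succ_iff.1 (Finset.mem_range.1 hm))) k
    _ = ∑ j ∈ (Finset.range (rank i + 1)).map ⟨_, hinj⟩, s.point j ^ k := by simp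
    _ ≤ S := sum_le_hasSum _ (fun j _ => hk.pow_nonneg _) hS

lemma Sorted.mem_decaySet {s : PtCfg} (hs : s.Sorted) {C : ℝ}
    (hC : HasSum (fun i => s.point i ^ 4) C) : s ∈ decaySet C :=
  ⟨hs, hs.rank_add_one_mul_point_pow_le (by decide) hC⟩

end PtCfg

/-! ### Eigen measures of symmetric matrices -/

lemma hasSum_list_getD {α M : Type*} [AddCommGroup M] [TopologicalSpace M]
    [IsTopologicalAddGroup M] (l : List α) {d : α} {φ : α → M} (hd : φ d = 0) :
    HasSum (fun n => φ (l.getD n d)) (l.map φ).sum := by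
  induction l with
  | nil => simp [hd]
  | cons a l ih =>
    rw [← hasSum_nat_add_iff' 1]
    simpa using ih

lemma forall_list_getD {α : Type*} {p : α → Prop} {l : List α} {d : α} (hl : ∀ x ∈ l, p x)
    (hd : p d) (n : ℕ) : p (l.getD n d) := by
  rcases lt_or_ge n l.length with h | h
  · rw [List.getD_eq_getElem _ _ h]
    exact hl _ (List.getElem_mem h)
  · rwa [List.getD_eq_default _ _ h]

lemma list_pairwise_rel_getD {α : Type*} {r : α → α → Prop} (hr : ∀ x, r x x) {l : List α}
    (hl : l.Pairwise r) {d : α} (hd : ∀ x ∈ l, r x d) {m n : ℕ} (hmn : m ≤ n) :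
    r (l.getD m d) (l.getD n d) := by
  rcases lt_or_ge n l.length with hn | hn
  · rw [List.getD_eq_getElem _ _ hn, List.getD_eq_getElem _ _ (hmn.trans_lt hn)]
    rcases hmn.eq_or_lt with rfl | hlt
    · exact hr _
    · exact List.pairwise_iff_getElem.1 hl _ _ _ _ hlt
  · rw [List.getD_eq_default _ _ hn]
    exact forall_list_getD hd (hr d) m

lemma trace_pow_eq_sum_eigenvalues_pow {ι : Type*} [Fintype ι] [DecidableEq ι] {A : Matrix ι ι ℝ}
    (hA : A.IsHermitian) (k : ℕ) : (A ^ k).trace = ∑ i, hA.eigenvalues i ^ k := by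
  conv_lhs => rw [hA.spectral_theorem]
  rw [← map_pow, Unitary.conjStarAlgAut_apply, Matrix.trace_mul_comm, ← mul_assoc]
  simp [Matrix.diagonal_pow, Matrix.trace_diagonal]

namespace EMcfg

variable {N : ℕ} {A : Matrix (Fin N) (Fin N) ℝ}

lemma sorted (hA : A.IsHermitian) : (EMcfg A).Sorted := by
  set l := List.ofFn hA.eigenvalues
  have hpos : ∀ x ∈ (l.map fun t => max t 0).insertionSort (· ≥ ·), 0 ≤ x := by
    simp +contextual [List.mem_insertionSort, eq_comm]
  have hneg : ∀ x ∈ (l.map fun t => min t 0).insertionSort (· ≤ ·), x ≤ 0 := by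
    simp +contextual [List.mem_insertionSort, eq_comm]
  simp only [EMcfg, hA, dif_pos]
  exact ⟨fun m n => list_pairwise_rel_getD (r := (· ≥ ·)) le_refl
      (List.pairwise_insertionSort (· ≥ ·) _) hpos,
    fun m n => list_pairwise_rel_getD le_refl (List.pairwise_insertionSort (· ≤ ·) _) hneg,
    forall_list_getD hpos le_rfl, forall_list_getD hneg le_rfl⟩

lemma hasSum_point_pow (hA : A.IsHermitian) {k : ℕ} (hk : k ≠ 0) :
    HasSum (fun i => (EMcfg A).point i ^ k) (A ^ k).trace := by
  have hasSum_sorted (r : ℝ → ℝ → Prop) [DecidableRel r] (c : ℝ → ℝ) :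
      HasSum (fun n => (((List.ofFn hA.eigenvalues).map c).insertionSort r).getD n 0 ^ k)
        (∑ i, c (hA.eigenvalues i) ^ k) := by
    have h := hasSum_list_getD (φ := fun x : ℝ => x ^ k) (d := 0)
      (((List.ofFn hA.eigenvalues).map c).insertionSort r) (zero_pow hk)
    rw [((List.perm_insertionSort r _).map _).sum_eq, List.map_map] at h
    rw [List.map_ofFn (f := hA.eigenvalues) (g := (fun x => x ^ k) ∘ c), List.sum_ofFn] at h
    exact h
  have hsplit (x : ℝ) : max x 0 ^ k + min x 0 ^ k = x ^ k := by
    rcases le_total x 0 with h | h <;> simp [h, hk]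
  rw [trace_pow_eq_sum_eigenvalues_pow hA, ← Finset.sum_congr rfl fun i _ => hsplit _,
    Finset.sum_add_distrib]
  refine HasSum.sum ?_ ?_ <;> simp only [EMcfg, hA, dif_pos] <;> exact hasSum_sorted _ _

lemma mem_decaySet (hA : A.IsHermitian) : EMcfg A ∈ PtCfg.decaySet (A ^ 4).trace :=
  (sorted hA).mem_decaySet (hasSum_point_pow hA (by norm_num))

lemma moment_eq_trace (hA : A.IsHermitian) {k : ℕ} (hk : k ≠ 0) :
    (EMcfg A).moment k = (A ^ k).trace :=
  (hasSum_point_pow hA hk).tsum_eq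

lemma continuous_comp {Y : Type*} [TopologicalSpace Y] [SequentialSpace Y]
    {F : Y → Matrix (Fin N) (Fin N) ℝ} (hF : Continuous F) (hherm : ∀ y, (F y).IsHermitian) :
    Continuous fun y => EMcfg (F y) := by
  have htrace (k : ℕ) : Continuous fun y => (F y ^ k).trace := (hF.pow k).matrix_trace
  refine continuous_iff_seqContinuous.2 fun y y₀ hy => ?_
  have htendsto (k : ℕ) := ((htrace k).tendsto y₀).comp hy
  obtain ⟨C, hC⟩ := (htendsto 4).bddAbove_range
  have hmem (n : ℕ) : EMcfg (F (y n)) ∈ PtCfg.decaySet (max C (F y₀ ^ 4).trace) :=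
    PtCfg.decaySet_mono ((hC ⟨n, rfl⟩).trans (le_max_left _ _)) (mem_decaySet (hherm _))
  obtain ⟨s, hs, hlim, hmoment⟩ := PtCfg.exists_tendsto_of_tendsto_moment hmem
    (m := fun j => (F y₀ ^ (8 + j)).trace) fun j => by
      simpa only [Function.comp_def, moment_eq_trace (hherm _) (show 8 + j ≠ 0 by omega)]
        using htendsto (8 + j)
  suffices s = EMcfg (F y₀) from this ▸ hlim
  refine PtCfg.eq_of_moment_eq hs
    (PtCfg.decaySet_mono (le_max_right _ _) (mem_decaySet (hherm y₀))) fun j => ?_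
  rw [hmoment, moment_eq_trace (hherm y₀) (by omega)]

end EMcfg

/-! ### Convergence in measure -/

section ConvergenceInMeasure

variable {Ω E : Type*} [MeasurableSpace Ω] {P : Measure Ω} [PseudoMetricSpace E]

lemma ae_eventually_lt_half_pow {d : ℕ → Ω → ℝ} [IsFiniteMeasure P]
    (h : ∀ᶠ i in atTop, P.real {ω | (1 / 2) ^ i ≤ d i ω} ≤ (1 / 2) ^ i) :
    ∀ᵐ ω ∂P, ∀ᶠ i in atTop, d i ω < (1 / 2) ^ i := by
  obtain ⟨k, hk⟩ := eventually_atTop.1 h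
  have hbound (i : ℕ) :
      P {ω | (1 / 2) ^ (i + k) ≤ d (i + k) ω} ≤ ENNReal.ofReal ((1 / 2) ^ (i + k)) :=
    (ENNReal.le_ofReal_iff_toReal_le (measure_ne_top _ _) (by positivity)).2 (hk _ (by omega))
  have hsum : ∑' i, P {ω | (1 / 2) ^ (i + k) ≤ d (i + k) ω} ≠ ⊤ := by
    refine ne_top_of_le_ne_top ?_ (ENNReal.tsum_le_tsum hbound)
    rw [← ENNReal.ofReal_tsum_of_nonneg (fun i => by positivity)
      ((summable_nat_add_iff k).2 summable_geometric_two)]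
    exact ENNReal.ofReal_ne_top
  filter_upwards [ae_eventually_notMem hsum] with ω hω
  rw [← map_add_atTop_eq_nat k]
  exact hω.mono fun i hi => not_le.1 hi

lemma measureReal_add_le_dist_le [IsFiniteMeasure P] (x y z : Ω → E) (a b : ℝ) :
    P.real {ω | a + b ≤ dist (x ω) (z ω)}
      ≤ P.real {ω | a ≤ dist (x ω) (y ω)} + P.real {ω | b ≤ dist (y ω) (z ω)} := by
  refine (measureReal_mono fun ω hω => ?_).trans (measureReal_union_le _ _)
  simp only [Set.mem_union, Set.mem_ofPred_eq] at hω ⊢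
  by_contra! hlt
  linarith [dist_triangle (x ω) (y ω) (z ω), hlt.1, hlt.2]

lemma tendstoInMeasure_iff_eventually_measureReal_le [IsFiniteMeasure P] {ι : Type*}
    {l : Filter ι} {f : ι → Ω → E} {g : Ω → E} : TendstoInMeasure P f l g ↔
      ∀ ε > 0, ∀ᶠ n in l, P.real {ω | ε ≤ dist (f n ω) (g ω)} ≤ ε := by
  rw [tendstoInMeasure_iff_measureReal_dist]
  refine ⟨fun h ε hε => ((tendsto_order.1 (h ε hε)).2 ε hε).mono fun _ => le_of_lt,
    fun h ε hε => tendsto_order.2 ⟨fun a ha => .of_forall fun _ => ha.trans_le measureReal_nonneg,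
      fun a ha => ?_⟩⟩
  filter_upwards [h (min ε (a / 2)) (by positivity)] with n hn
  calc P.real {ω | ε ≤ dist (f n ω) (g ω)}
      ≤ P.real {ω | min ε (a / 2) ≤ dist (f n ω) (g ω)} :=
        measureReal_mono fun ω (hω : ε ≤ _) => show _ ≤ _ from (min_le_left _ _).trans hω
    _ ≤ a / 2 := hn.trans (min_le_right _ _)
    _ < a := half_lt_self ha

/-- The sequence `f` is Cauchy for convergence in probability. The tail condition `M ≥ N` is
one-sided, and the same `ε` bounds the distance and the probability. -/
def CauchyInMeasure (P : Measure Ω) (f : ℕ → Ω → E) : Prop :=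
  ∀ ε > 0, ∀ᶠ N in atTop, ∀ M ≥ N, P.real {ω | ε ≤ dist (f N ω) (f M ω)} ≤ ε

variable [IsFiniteMeasure P]

lemma cauchyInMeasure_of_tendstoInMeasure {f : ℕ → Ω → E} {g : Ω → E}
    (h : TendstoInMeasure P f atTop g) : CauchyInMeasure P f := by
  intro ε hε
  filter_upwards [eventually_forall_ge_atTop.2
    (tendstoInMeasure_iff_eventually_measureReal_le.1 h (ε / 2) (half_pos hε))] with N hN M hM
  rw [← add_halves ε]
  refine (measureReal_add_le_dist_le _ g _ _ _).trans (add_le_add (hN N le_rfl) ?_)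
  simpa only [dist_comm] using hN M hM

lemma cauchyInMeasure_of_forall_exists_close {f : ℕ → Ω → E}
    (h : ∀ ε > 0, ∃ g : ℕ → Ω → E, CauchyInMeasure P g ∧
      ∀ n, P.real {ω | ε ≤ dist (f n ω) (g n ω)} ≤ ε) : CauchyInMeasure P f := by
  intro ε hε
  obtain ⟨g, hg, hfg⟩ := h (ε / 3) (by positivity)
  filter_upwards [hg (ε / 3) (by positivity)] with N hN M hM
  calc P.real {ω | ε ≤ dist (f N ω) (f M ω)}
      = P.real {ω | ε / 3 + (ε / 3 + ε / 3) ≤ dist (f N ω) (f M ω)} := by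
        rw [← add_assoc, add_thirds]
    _ ≤ P.real {ω | ε / 3 ≤ dist (f N ω) (g N ω)}
        + (P.real {ω | ε / 3 ≤ dist (g N ω) (g M ω)}
          + P.real {ω | ε / 3 ≤ dist (g M ω) (f M ω)}) :=
        (measureReal_add_le_dist_le _ (g N) _ _ _).trans
          (add_le_add_right (measureReal_add_le_dist_le _ _ _ _ _) _)
    _ ≤ ε / 3 + (ε / 3 + ε / 3) := by
        refine add_le_add (hfg N) (add_le_add (hN M hM) ?_)
        simpa only [dist_comm] using hfg M
    _ = ε := by rw [← add_assoc, add_thirds]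

lemma CauchyInMeasure.exists_subseq_ae_tendsto [CompleteSpace E] {f : ℕ → Ω → E}
    (h : CauchyInMeasure P f) :
    ∃ ns : ℕ → ℕ, StrictMono ns ∧ ∀ᵐ ω ∂P, ∃ x, Tendsto (fun i => f (ns i) ω) atTop (nhds x) := by
  obtain ⟨ns, hns, hclose⟩ := extraction_forall_of_eventually fun i =>
    h ((1 / 2) ^ i) (by positivity)
  refine ⟨ns, hns, ?_⟩
  filter_upwards [ae_eventually_lt_half_pow (P := P)
    (d := fun i ω => dist (f (ns i) ω) (f (ns (i + 1)) ω))
    (.of_forall fun i => hclose i _ (hns i.lt_succ_self).le)] with ω hω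
  refine cauchySeq_tendsto_of_complete (cauchySeq_of_summable_dist ?_)
  exact .of_norm_bounded_eventually_nat summable_geometric_two
    (hω.mono fun i hi => by simpa only [Real.norm_of_nonneg dist_nonneg] using hi.le)

theorem CauchyInMeasure.exists_tendstoInMeasure [CompleteSpace E] [MeasurableSpace E]
    [BorelSpace E] [SecondCountableTopology E] {f : ℕ → Ω → E} (hf : ∀ n, AEMeasurable (f n) P)
    (h : CauchyInMeasure P f) : ∃ T : Ω → E, TendstoInMeasure P f atTop T := by
  obtain ⟨ns, hns, hlim⟩ := h.exists_subseq_ae_tendsto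
  obtain ⟨T, -, hT⟩ := measurable_limit_of_tendsto_metrizable_ae (fun i => hf (ns i)) hlim
  have hsub := tendstoInMeasure_iff_eventually_measureReal_le.1
    (tendstoInMeasure_of_tendsto_ae (fun i => (hf (ns i)).aestronglyMeasurable) hT)
  refine ⟨T, tendstoInMeasure_iff_eventually_measureReal_le.2 fun ε hε => ?_⟩
  filter_upwards [h (ε / 2) (half_pos hε)] with N hN
  obtain ⟨i, hi, hNi⟩ := ((hsub (ε / 2) (half_pos hε)).and
    (hns.tendsto_atTop.eventually_ge_atTop N)).exists
  rw [← add_halves ε]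
  exact (measureReal_add_le_dist_le _ (f (ns i)) _ _ _).trans (add_le_add (hN _ hNi) hi)

theorem exists_subseq_forall_ae_tendsto {f : ℕ → ℕ → Ω → E} {T : ℕ → Ω → E}
    (h : ∀ k, TendstoInMeasure P (f k) atTop (T k)) : ∃ ns : ℕ → ℕ, StrictMono ns ∧
      ∀ᵐ ω ∂P, ∀ k, Tendsto (fun i => f k (ns i) ω) atTop (nhds (T k ω)) := by
  have hclose (i : ℕ) : ∀ᶠ n in atTop, ∀ k ∈ Set.Iic i,
      P.real {ω | (1 / 2) ^ i ≤ dist (f k n ω) (T k ω)} ≤ (1 / 2) ^ i :=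
    (Set.finite_Iic i).eventually_all.2 fun k _ =>
      tendstoInMeasure_iff_eventually_measureReal_le.1 (h k) _ (by positivity)
  obtain ⟨ns, hns, hclose⟩ := extraction_forall_of_eventually hclose
  refine ⟨ns, hns, ae_all_iff.2 fun k => ?_⟩
  filter_upwards [ae_eventually_lt_half_pow (P := P) (d := fun i ω => dist (f k (ns i) ω) (T k ω))
    ((eventually_ge_atTop k).mono fun i hi => hclose i k hi)] with ω hω
  exact tendsto_iff_dist_tendsto_zero.2 <| squeeze_zero' (.of_forall fun _ => dist_nonneg)
    (hω.mono fun i hi => hi.le) (tendsto_pow_atTop_nhds_zero_of_lt_one (by norm_num) (by norm_num))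

lemma tendstoInMeasure_zero_of_indicator {D : ℕ → Ω → ℝ} {B : ℕ → Ω → ENNReal} {K : ENNReal}
    (hB : ∀ n, AEMeasurable (B n) P) (hK : K ≠ ⊤) (hBK : ∀ n, ∫⁻ ω, B n ω ∂P ≤ K)
    (hD : ∀ R : ℕ, TendstoInMeasure P (fun n => {ω | B n ω ≤ R}.indicator (D n)) atTop 0) :
    TendstoInMeasure P D atTop 0 := by
  refine tendstoInMeasure_iff_eventually_measureReal_le.2 fun ε hε => ?_
  have hmarkov : Tendsto (fun R : ℕ => K / R) atTop (nhds 0) := by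
    simpa using ENNReal.Tendsto.const_div ENNReal.tendsto_nat_nhds_top (.inr hK)
  obtain ⟨R, hR, hR₀⟩ := ((hmarkov.eventually_le_const
    (ENNReal.ofReal_pos.2 (half_pos hε))).and (eventually_ne_atTop 0)).exists
  have htail (n : ℕ) : P.real {ω | R ≤ B n ω} ≤ ε / 2 := by
    refine ENNReal.toReal_le_of_le_ofReal (half_pos hε).le (le_trans ?_ hR)
    exact (meas_ge_le_lintegral_div (hB n) (by simpa) (ENNReal.natCast_ne_top R)).trans
      (ENNReal.div_le_div_right (hBK n) _)
  filter_upwards [tendstoInMeasure_iff_eventually_measureReal_le.1 (hD R) (ε / 2) (half_pos hε)]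
    with n hn
  suffices hsubset : {ω | ε ≤ dist (D n ω) 0} ⊆
      {ω | ε / 2 ≤ dist ({ω | B n ω ≤ R}.indicator (D n) ω) 0} ∪ {ω | R ≤ B n ω} from
    (measureReal_mono hsubset).trans
      ((measureReal_union_le _ _).trans ((add_le_add hn (htail n)).trans (add_halves ε).le))
  intro ω hω
  rcases le_total (R : ENNReal) (B n ω) with hRB | hRB
  · exact .inr hRB
  · refine .inl ((half_le_self hε.le).trans ?_)
    rwa [Set.indicator_of_mem (s := {ω | B n ω ≤ R}) hRB]

lemma tendstoInMeasure_of_tendstoInMeasure_sub {ι F : Type*} [SeminormedAddCommGroup F]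
    {l : Filter ι} {f g : ι → Ω → F} {h : Ω → F}
    (hfg : TendstoInMeasure P (fun n ω => f n ω - g n ω) l fun _ => 0)
    (hg : TendstoInMeasure P g l h) : TendstoInMeasure P f l h := by
  rw [tendstoInMeasure_iff_eventually_measureReal_le] at hfg hg ⊢
  intro ε hε
  filter_upwards [hfg (ε / 2) (half_pos hε), hg (ε / 2) (half_pos hε)] with n hfgn hgn
  simp only [dist_zero_right, ← dist_eq_norm] at hfgn
  have htriangle := measureReal_add_le_dist_le (P := P) (f n) (g n) h (ε / 2) (ε / 2)
  rw [add_halves] at htriangle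
  linarith

end ConvergenceInMeasure

/-! ### The distance `d₄` under a bound on the sum of squares -/

lemma summable_sumType_iff {α β : Type*} {f : α ⊕ β → ℝ} :
    Summable f ↔ Summable (fun a => f (.inl a)) ∧ Summable fun b => f (.inr b) :=
  ⟨fun h => ⟨h.comp_injective Sum.inl_injective, h.comp_injective Sum.inr_injective⟩,
    fun h => Summable.sum f h.1 h.2⟩

lemma tsum_sumType {α β : Type*} {f : α ⊕ β → ℝ} (hf : Summable f) :
    ∑' i, f i = (∑' a, f (.inl a)) + ∑' b, f (.inr b) :=
  Summable.tsum_sum (summable_sumType_iff.1 hf).1 (summable_sumType_iff.1 hf).2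

namespace PtCfg

/-- The sum of the squares of the points, with value `∞` if it diverges; it is finite exactly
on `𝒞₂`. -/
def sqSum (s : PtCfg) : ENNReal := ∑' i, ENNReal.ofReal (s.point i ^ 2)

lemma lowerSemicontinuous_sqSum : LowerSemicontinuous sqSum :=
  lowerSemicontinuous_tsum fun i =>
    (ENNReal.continuous_ofReal.comp ((continuous_point i).pow 2)).lowerSemicontinuous

lemma hasSum_sq_of_sqSum_ne_top {s : PtCfg} (h : s.sqSum ≠ ⊤) :
    HasSum (fun i => s.point i ^ 2) s.sqSum.toReal := by
  rw [sqSum, ENNReal.tsum_toReal_eq fun i => ENNReal.ofReal_ne_top]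
  simpa only [ENNReal.toReal_ofReal (sq_nonneg _)] using ENNReal.hasSum_toReal h

lemma memC_iff_summable_point {p : ℕ} {s : PtCfg} :
    MemC p s ↔ Summable fun i => |s.point i| ^ p :=
  (summable_sumType_iff (f := fun i => |s.point i| ^ p)).symm

lemma memC_two_of_sqSum_ne_top {s : PtCfg} (h : s.sqSum ≠ ⊤) : MemC 2 s := by
  simpa only [memC_iff_summable_point, sq_abs] using (hasSum_sq_of_sqSum_ne_top h).summable

lemma memC_mono {p q : ℕ} (hp : p ≠ 0) (hpq : p ≤ q) {s : PtCfg} (h : MemC p s) : MemC q s := by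
  rw [memC_iff_summable_point] at h ⊢
  refine .of_norm_bounded_eventually h ?_
  filter_upwards [h.tendsto_cofinite_zero.eventually_le_const one_pos] with i hi
  rw [Real.norm_of_nonneg (by positivity)]
  exact pow_le_pow_of_le_one (abs_nonneg _) ((pow_le_one_iff_of_nonneg (abs_nonneg _) hp).1 hi) hpq

lemma summable_abs_point_sub_pow {p : ℕ} {s t : PtCfg} (hs : MemC p s) (ht : MemC p t) :
    Summable fun i => |s.point i - t.point i| ^ p := by
  rw [memC_iff_summable_point] at hs ht
  refine .of_nonneg_of_le (fun i => by positivity) (fun i => ?_)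
    ((hs.add ht).mul_left (2 ^ (p - 1)))
  exact (pow_le_pow_left₀ (abs_nonneg _) (abs_sub _ _) p).trans
    (add_pow_le (abs_nonneg _) (abs_nonneg _) p)

lemma dPt_eq_tsum_point {p : ℕ} {s t : PtCfg}
    (h : Summable fun i => |s.point i - t.point i| ^ p) :
    dPt p s t = (∑' i, |s.point i - t.point i| ^ p) ^ (p : ℝ)⁻¹ :=
  congrArg (· ^ (p : ℝ)⁻¹) (tsum_sumType h).symm

lemma abs_point_sub_le_dPt {p : ℕ} (hp : p ≠ 0) {s t : PtCfg} (hs : MemC p s) (ht : MemC p t)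
    (i : ℕ ⊕ ℕ) : |s.point i - t.point i| ≤ dPt p s t := by
  have h := summable_abs_point_sub_pow hs ht
  rw [dPt_eq_tsum_point h, Real.le_rpow_inv_iff_of_pos (abs_nonneg _)
    (tsum_nonneg fun i => by positivity) (by positivity), Real.rpow_natCast]
  exact h.le_tsum i fun j _ => by positivity

lemma measurable_dPt (p : ℕ) : Measurable fun q : PtCfg × PtCfg => dPt p q.1 q.2 := by
  have hhalf (f g : PtCfg × PtCfg → ℕ → ℝ) (hf : Measurable f) (hg : Measurable g) :
      Measurable fun q => ∑' n, |f q n - g q n| ^ p := by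
    have heq (q : PtCfg × PtCfg) : ∑' n, |f q n - g q n| ^ p
        = (∑' n, ENNReal.ofReal (|f q n - g q n| ^ p)).toReal := by
      rw [ENNReal.tsum_toReal_eq fun n => ENNReal.ofReal_ne_top]
      exact tsum_congr fun n => (ENNReal.toReal_ofReal (by positivity)).symm
    simp only [heq]
    fun_prop
  exact ((hhalf _ _ (by fun_prop) (by fun_prop)).add
    (hhalf _ _ (by fun_prop) (by fun_prop))).pow_const _

lemma Sorted.point_pow_four_le_of_sqSum_le {s : PtCfg} (hs : s.Sorted) {R : NNReal}
    (hR : s.sqSum ≤ R) (i : ℕ ⊕ ℕ) : s.point i ^ 4 ≤ R ^ 2 / ((rank i : ℝ) + 1) ^ 2 := by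
  have hsq : ((rank i : ℝ) + 1) * s.point i ^ 2 ≤ R :=
    (hs.rank_add_one_mul_point_pow_le (by decide)
      (hasSum_sq_of_sqSum_ne_top (ne_top_of_le_ne_top ENNReal.coe_ne_top hR)) i).trans
      (ENNReal.toReal_mono ENNReal.coe_ne_top hR)
  rw [← div_pow, show 4 = 2 * 2 from rfl, pow_mul]
  exact pow_le_pow_left₀ (sq_nonneg _) ((le_div_iff₀' (by positivity)).2 hsq) 2

lemma tendsto_dPt_four {F : ℕ → PtCfg} {s : PtCfg} (hF : ∀ n, (F n).Sorted) {R : NNReal}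
    (hR : ∀ n, (F n).sqSum ≤ R) (hlim : Tendsto F atTop (nhds s)) :
    Tendsto (fun n => dPt 4 (F n) s) atTop (nhds 0) := by
  have hs : s.Sorted := isClosed_setOf_sorted.mem_of_tendsto hlim (.of_forall hF)
  have hsR : s.sqSum ≤ R :=
    (lowerSemicontinuous_sqSum.isClosed_preimage R).mem_of_tendsto hlim (.of_forall hR)
  have hbound (n : ℕ) (i : ℕ ⊕ ℕ) :
      ‖|(F n).point i - s.point i| ^ 4‖ ≤ 16 * (R : ℝ) ^ 2 / ((rank i : ℝ) + 1) ^ 2 := by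
    rw [Real.norm_of_nonneg (by positivity), (show Even 4 by decide).pow_abs, mul_div_assoc]
    have hsub := (show Even 4 by decide).add_pow_le (a := (F n).point i) (b := -s.point i)
    rw [← sub_eq_add_neg, (show Even 4 by decide).neg_pow] at hsub
    norm_num only at hsub
    linarith [(hF n).point_pow_four_le_of_sqSum_le (hR n) i,
      hs.point_pow_four_le_of_sqSum_le hsR i]
  have hterm (i : ℕ ⊕ ℕ) : Tendsto (fun n => |(F n).point i - s.point i| ^ 4) atTop (nhds 0) := by
    simpa using (((((continuous_point i).tendsto s).comp hlim).sub_const (s.point i)).abs).pow 4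
  have hsum := tendsto_tsum_of_dominated_convergence (summable_rank_add_one _) hterm
    (.of_forall hbound)
  simp only [dPt_eq_tsum_point (.of_norm_bounded (summable_rank_add_one _) (hbound _))]
  simpa using hsum.rpow_const (p := ((4 : ℕ) : ℝ)⁻¹) (.inr (by positivity))

lemma tendsto_indicator_dPt_four {F : ℕ → PtCfg} {s : PtCfg} (hF : ∀ n, (F n).Sorted)
    (hs : s.sqSum ≠ ⊤) (hlim : Tendsto F atTop (nhds s)) (R : ℕ) :
    Tendsto ({n | (F n).sqSum ≤ R}.indicator fun n => dPt 4 (F n) s) atTop (nhds 0) := by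
  classical
  set G : ℕ → PtCfg := fun n => if (F n).sqSum ≤ R then F n else s
  have hG : Tendsto G atTop (nhds s) := hlim.if' tendsto_const_nhds
  have hGR (n : ℕ) : (G n).sqSum ≤ (max R s.sqSum.toNNReal : NNReal) := by
    rw [ENNReal.coe_max, ENNReal.coe_toNNReal hs]
    by_cases h : (F n).sqSum ≤ R <;> simp [G, h]
  have hGsorted (n : ℕ) : (G n).Sorted := by
    have := isClosed_setOf_sorted.mem_of_tendsto hlim (.of_forall hF)
    simp only [G]
    split_ifs
    exacts [hF n, this]
  refine (tendsto_dPt_four hGsorted hGR hG).congr fun n => ?_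
  by_cases h : (F n).sqSum ≤ R <;> simp [G, h, dPt]

end PtCfg

lemma EMcfg.sqSum_eq {N : ℕ} {A : Matrix (Fin N) (Fin N) ℝ} (hA : A.IsHermitian) :
    (EMcfg A).sqSum = ENNReal.ofReal (A ^ 2).trace := by
  have hsum := EMcfg.hasSum_point_pow hA two_ne_zero
  rw [PtCfg.sqSum, ← hsum.tsum_eq, ENNReal.ofReal_tsum_of_nonneg (fun _ => sq_nonneg _)
    hsum.summable]

/-! ### Limits of random point configurations -/

namespace PtCfg

/-- The configuration `s` has `k`-th moment `m k` for all `k ≥ 8`. Membership in some `decaySet`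
makes these series converge, so that the equations do not hold by a junk value of `tsum`. -/
def HasMoments (s : PtCfg) (m : ℕ → ℝ) : Prop :=
  (∃ C, s ∈ decaySet C) ∧ ∀ k ≥ 8, moment k s = m k

lemma HasMoments.unique {s t : PtCfg} {m : ℕ → ℝ} (hs : s.HasMoments m) (ht : t.HasMoments m) :
    s = t := by
  obtain ⟨⟨C, hC⟩, hs⟩ := hs
  obtain ⟨⟨C', hC'⟩, ht⟩ := ht
  exact eq_of_moment_eq (decaySet_mono (le_max_left C C') hC)
    (decaySet_mono (le_max_right C C') hC')
    fun j => (hs (8 + j) (by omega)).trans (ht (8 + j) (by omega)).symm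

lemma exists_hasMoments_tendsto {F : ℕ → PtCfg} (hF : ∀ n, F n ∈ decaySet (moment 4 (F n)))
    {m : ℕ → ℝ} (hm : ∀ k ≥ 4, Tendsto (fun n => moment k (F n)) atTop (nhds (m k))) :
    ∃ s : PtCfg, s.HasMoments m ∧ Tendsto F atTop (nhds s) := by
  obtain ⟨C, hC⟩ := (hm 4 le_rfl).bddAbove_range
  obtain ⟨s, hs, hlim, hmoment⟩ := exists_tendsto_of_tendsto_moment (C := C)
    (m := fun j => m (8 + j)) (fun n => decaySet_mono (hC ⟨n, rfl⟩) (hF n))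
    fun j => hm (8 + j) (by omega)
  refine ⟨s, ⟨⟨C, hs⟩, fun k hk => ?_⟩, hlim⟩
  obtain ⟨j, rfl⟩ := Nat.exists_eq_add_of_le hk
  exact hmoment j

end PtCfg

section RandomConfigurations

variable {Ω : Type*} [MeasurableSpace Ω] {P : Measure Ω} {F G : ℕ → Ω → PtCfg} {ξ : Ω → PtCfg}

/-- Coordinatewise convergence in probability of random configurations, phrased through almost
surely convergent subsequences. -/
def SubseqAETendsto (P : Measure Ω) (F : ℕ → Ω → PtCfg) (ξ : Ω → PtCfg) : Prop :=
  ∀ ns : ℕ → ℕ, StrictMono ns → ∃ ms : ℕ → ℕ, StrictMono ms ∧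
    ∀ᵐ ω ∂P, Tendsto (fun i => F (ns (ms i)) ω) atTop (nhds (ξ ω))

lemma exists_subseq_ae_hasMoments [IsFiniteMeasure P]
    (hF : ∀ n ω, F n ω ∈ PtCfg.decaySet ((F n ω).moment 4)) {T : ℕ → Ω → ℝ}
    (hT : ∀ k ≥ 4, TendstoInMeasure P (fun n ω => (F n ω).moment k) atTop (T k)) :
    ∃ ns : ℕ → ℕ, StrictMono ns ∧ ∀ᵐ ω ∂P, ∃ s : PtCfg, s.HasMoments (T · ω) ∧
      Tendsto (fun i => F (ns i) ω) atTop (nhds s) := by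
  obtain ⟨ns, hns, hlim⟩ := exists_subseq_forall_ae_tendsto fun j => hT (4 + j) (by omega)
  refine ⟨ns, hns, hlim.mono fun ω hω => ?_⟩
  refine PtCfg.exists_hasMoments_tendsto (fun i => hF (ns i) ω) fun k hk => ?_
  obtain ⟨j, rfl⟩ := Nat.exists_eq_add_of_le hk
  exact hω j

theorem exists_forall_subseqAETendsto [IsFiniteMeasure P] (hFmeas : ∀ n, AEMeasurable (F n) P)
    (hF : ∀ n ω, F n ω ∈ PtCfg.decaySet ((F n ω).moment 4)) {T : ℕ → Ω → ℝ}
    (hT : ∀ k ≥ 4, TendstoInMeasure P (fun n ω => (F n ω).moment k) atTop (T k)) :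
    ∃ ξ : Ω → PtCfg, AEMeasurable ξ P ∧ ∀ G : ℕ → Ω → PtCfg,
      (∀ n ω, G n ω ∈ PtCfg.decaySet ((G n ω).moment 4)) →
      (∀ k ≥ 4, TendstoInMeasure P (fun n ω => (G n ω).moment k) atTop (T k)) →
      SubseqAETendsto P G ξ := by
  obtain ⟨ns, -, hlim⟩ := exists_subseq_ae_hasMoments hF hT
  choose! ξ hξ using fun ω (hω : ∃ s : PtCfg, s.HasMoments (T · ω) ∧
    Tendsto (fun i => F (ns i) ω) atTop (nhds s)) => hω
  replace hξ := hlim.mono hξ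
  refine ⟨ξ, aemeasurable_of_tendsto_metrizable_ae atTop (fun i => hFmeas (ns i))
    (hξ.mono fun ω hω => hω.2), fun G hG hTG ns hns => ?_⟩
  obtain ⟨ms, hms, hGlim⟩ := exists_subseq_ae_hasMoments (F := fun i => G (ns i))
    (fun i => hG (ns i)) fun k hk => (hTG k hk).comp hns.tendsto_atTop
  refine ⟨ms, hms, ?_⟩
  filter_upwards [hξ, hGlim] with ω hω ⟨s, hs, hslim⟩
  exact hs.unique hω.1 ▸ hslim

namespace SubseqAETendsto

theorem map_eq [IsProbabilityMeasure P] {Ω' : Type*} [MeasurableSpace Ω'] {P' : Measure Ω'}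
    [IsProbabilityMeasure P'] {F' : ℕ → Ω' → PtCfg} {ξ' : Ω' → PtCfg}
    (h : SubseqAETendsto P F ξ) (h' : SubseqAETendsto P' F' ξ') (hF : ∀ n, AEMeasurable (F n) P)
    (hF' : ∀ n, AEMeasurable (F' n) P') (hmap : ∀ n, P'.map (F' n) = P.map (F n)) :
    P'.map ξ' = P.map ξ := by
  obtain ⟨ns, hns, hlim⟩ := h id strictMono_id
  obtain ⟨ms, hms, hlim'⟩ := h' ns hns
  replace hlim : ∀ᵐ ω ∂P, Tendsto (fun i => F (ns (ms i)) ω) atTop (nhds (ξ ω)) :=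
    hlim.mono fun ω hω => hω.comp hms.tendsto_atTop
  have hdist := tendstoInDistribution_of_ae_tendsto (fun i => hF (ns (ms i)))
    (aemeasurable_of_tendsto_metrizable_ae atTop (fun i => hF (ns (ms i))) hlim) hlim
  have hdist' := tendstoInDistribution_of_ae_tendsto (fun i => hF' (ns (ms i)))
    (aemeasurable_of_tendsto_metrizable_ae atTop (fun i => hF' (ns (ms i))) hlim') hlim'
  refine tendstoInDistribution_unique _ hdist'
    ⟨fun i => hF' (ns (ms i)), hdist.aemeasurable_limit, ?_⟩
  simpa only [hmap] using hdist.tendsto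

variable {K : ENNReal}

lemma ae_sqSum_ne_top (h : SubseqAETendsto P F ξ) (hF : ∀ n, AEMeasurable (F n) P)
    (hξ : AEMeasurable ξ P) (hK : K ≠ ⊤)
    (hFK : ∀ n, ∫⁻ ω, (F n ω).sqSum ∂P ≤ K) : ∀ᵐ ω ∂P, (ξ ω).sqSum ≠ ⊤ := by
  obtain ⟨ns, -, hlim⟩ := h id strictMono_id
  have hmeas (i : ℕ) : AEMeasurable (fun ω => (F (ns i) ω).sqSum) P :=
    PtCfg.lowerSemicontinuous_sqSum.measurable.comp_aemeasurable (hF (ns i))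
  have hfatou : ∫⁻ ω, liminf (fun i => (F (ns i) ω).sqSum) atTop ∂P ≤ K :=
    (lintegral_liminf_le' hmeas).trans <|
      (liminf_le_liminf (.of_forall fun i => hFK (ns i))).trans_eq (liminf_const K)
  have hle : ∫⁻ ω, (ξ ω).sqSum ∂P ≤ K := (lintegral_mono_ae <| hlim.mono fun ω hω =>
    (PtCfg.lowerSemicontinuous_sqSum.le_liminf (ξ ω)).trans <|
      (liminf_le_liminf_of_le hω).trans_eq (liminf_comp PtCfg.sqSum _ atTop).symm).trans hfatou
  exact (ae_lt_top' (PtCfg.lowerSemicontinuous_sqSum.measurable.comp_aemeasurable hξ)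
    (ne_top_of_le_ne_top hK hle)).mono fun ω hω => hω.ne

theorem tendstoInMeasure_dPt_four [IsFiniteMeasure P] (h : SubseqAETendsto P F ξ)
    (hF : ∀ n, AEMeasurable (F n) P) (hξ : AEMeasurable ξ P)
    (hsorted : ∀ n ω, (F n ω).Sorted) (hK : K ≠ ⊤) (hFK : ∀ n, ∫⁻ ω, (F n ω).sqSum ∂P ≤ K) :
    TendstoInMeasure P (fun n ω => dPt 4 (F n ω) (ξ ω)) atTop 0 := by
  have hsq (n : ℕ) : AEMeasurable (fun ω => (F n ω).sqSum) P :=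
    PtCfg.lowerSemicontinuous_sqSum.measurable.comp_aemeasurable (hF n)
  refine tendstoInMeasure_zero_of_indicator hsq hK hFK fun R => ?_
  refine (exists_seq_tendstoInMeasure_atTop_iff fun n => ?_).2 fun ns hns => ?_
  · exact (((PtCfg.measurable_dPt 4).comp_aemeasurable ((hF n).prodMk hξ)).indicator₀
      (nullMeasurableSet_le (hsq n) aemeasurable_const)).aestronglyMeasurable
  · obtain ⟨ms, hms, hlim⟩ := h ns hns
    refine ⟨ms, hms, ?_⟩
    filter_upwards [hlim, h.ae_sqSum_ne_top hF hξ hK hFK] with ω hω hfin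
    exact PtCfg.tendsto_indicator_dPt_four (fun i => hsorted _ ω) hfin hω R

end SubseqAETendsto

lemma ae_eq_of_tendstoInMeasure_dPt {ξ' : Ω → PtCfg} {p : ℕ} (hp : p ≠ 0)
    (hF : ∀ n ω, MemC p (F n ω)) (hξ : ∀ᵐ ω ∂P, MemC p (ξ ω)) (hξ' : ∀ᵐ ω ∂P, MemC p (ξ' ω))
    (h : TendstoInMeasure P (fun n ω => dPt p (F n ω) (ξ ω)) atTop 0)
    (h' : TendstoInMeasure P (fun n ω => dPt p (F n ω) (ξ' ω)) atTop 0) : ξ =ᵐ[P] ξ' := by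
  have hpoint {η : Ω → PtCfg} (hη : ∀ᵐ ω ∂P, MemC p (η ω))
      (h : TendstoInMeasure P (fun n ω => dPt p (F n ω) (η ω)) atTop 0) (i : ℕ ⊕ ℕ) :
      TendstoInMeasure P (fun n ω => (F n ω).point i) atTop fun ω => (η ω).point i := by
    rw [tendstoInMeasure_iff_norm] at h ⊢
    refine fun ε hε => tendsto_of_tendsto_of_tendsto_of_le_of_le tendsto_const_nhds (h ε hε)
      (fun n => zero_le) fun n => measure_mono_ae ?_
    filter_upwards [hη] with ω hω hle
    exact hle.trans ((PtCfg.abs_point_sub_le_dPt hp (hF n ω) hω i).trans (by simp [le_abs_self]))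
  filter_upwards [ae_all_iff.2 fun i =>
    tendstoInMeasure_ae_unique (hpoint hξ h i) (hpoint hξ' h' i)] with ω hω
  exact PtCfg.ext_point hω

end RandomConfigurations

/-! ### The Frobenius norm and traces of powers -/

section Frobenius

open scoped Matrix.Norms.Frobenius Matrix

theorem norm_pow_add_two_sub_pow_le {α : Type*} [SeminormedRing α] {a b : α} {R ρ : ℝ}
    (ha : ‖a‖ ≤ R) (hb : ‖b‖ ≤ R) (hleft : ‖(a - b) * a‖ ≤ ρ) (hright : ‖b * (a - b)‖ ≤ ρ)
    (m : ℕ) : ‖a ^ (m + 2) - b ^ (m + 2)‖ ≤ (m + 2) * R ^ m * ρ := by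
  have hR : 0 ≤ R := (norm_nonneg a).trans ha
  have hρ : 0 ≤ ρ := (norm_nonneg _).trans hleft
  induction m with
  | zero =>
    calc ‖a ^ (0 + 2) - b ^ (0 + 2)‖ = ‖(a - b) * a + b * (a - b)‖ := by congr 1; noncomm_ring
      _ ≤ ((0 : ℕ) + 2) * R ^ 0 * ρ := by
        push_cast
        linarith [norm_add_le ((a - b) * a) (b * (a - b))]
  | succ m ih =>
    calc ‖a ^ (m + 1 + 2) - b ^ (m + 1 + 2)‖
        = ‖(a ^ (m + 2) - b ^ (m + 2)) * a + b ^ (m + 1) * (b * (a - b))‖ := by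
          rw [pow_succ a, pow_succ b (m + 1 + 1), ← mul_assoc, ← pow_succ b]
          congr 1
          noncomm_ring
      _ ≤ ‖a ^ (m + 2) - b ^ (m + 2)‖ * ‖a‖ + ‖b‖ ^ (m + 1) * ‖b * (a - b)‖ :=
          (norm_add_le _ _).trans <| add_le_add (norm_mul_le _ _) <|
            (norm_mul_le _ _).trans (by gcongr; exact norm_pow_le' b m.succ_pos)
      _ ≤ (m + 2) * R ^ m * ρ * R + R ^ (m + 1) * ρ := by gcongr
      _ = ((m + 1 : ℕ) + 2) * R ^ (m + 1) * ρ := by push_cast; ring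

variable {𝕜 n : Type*} [RCLike 𝕜] [Fintype n]

theorem frobenius_norm_sq_eq_sum (A : Matrix n n 𝕜) : ‖A‖ ^ 2 = ∑ i, ∑ j, ‖A i j‖ ^ 2 := by
  rw [Matrix.frobenius_norm_def, ← Real.sqrt_eq_rpow, Real.sq_sqrt (by positivity)]
  simp only [Real.rpow_two]

theorem norm_trace_mul_le_frobenius (A B : Matrix n n 𝕜) : ‖(A * B).trace‖ ≤ ‖A‖ * ‖B‖ := by
  have hsqrt (C : Matrix n n 𝕜) : ‖C‖ = √(∑ i, ∑ j, ‖C i j‖ ^ 2) := by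
    rw [← frobenius_norm_sq_eq_sum, Real.sqrt_sq (norm_nonneg C)]
  calc ‖(A * B).trace‖ ≤ ∑ p : n × n, ‖A p.1 p.2‖ * ‖B p.2 p.1‖ := by
        simp only [Matrix.trace, Matrix.diag_apply, Matrix.mul_apply, Fintype.sum_prod_type]
        exact (norm_sum_le _ _).trans <| Finset.sum_le_sum fun i _ =>
          norm_sum_le_of_le _ fun j _ => (norm_mul _ _).le
    _ ≤ √(∑ p : n × n, ‖A p.1 p.2‖ ^ 2) * √(∑ p : n × n, ‖B p.2 p.1‖ ^ 2) :=
        Real.sum_mul_le_sqrt_mul_sqrt _ _ _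
    _ = ‖A‖ * ‖B‖ := by
        rw [hsqrt A, hsqrt B, Fintype.sum_prod_type, Fintype.sum_prod_type_right]

theorem frobenius_norm_sq_eq_trace (A : Matrix n n 𝕜) :
    ((‖A‖ ^ 2 : ℝ) : 𝕜) = (Aᴴ * A).trace := by
  rw [frobenius_norm_sq_eq_sum, Matrix.trace, Finset.sum_comm]
  push_cast
  simp only [Matrix.diag_apply, Matrix.mul_apply, Matrix.conjTranspose_apply, RCLike.star_def,
    RCLike.conj_mul]

theorem norm_trace_conjTranspose_mul_self (A : Matrix n n 𝕜) : ‖(Aᴴ * A).trace‖ = ‖A‖ ^ 2 := by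
  rw [← frobenius_norm_sq_eq_trace, RCLike.norm_of_nonneg (sq_nonneg _)]

theorem frobenius_norm_mul_sq_le (D A : Matrix n n 𝕜) : ‖D * A‖ ^ 2 ≤ ‖Dᴴ * D‖ * ‖A‖ ^ 2 :=
  calc ‖D * A‖ ^ 2 = ‖((Dᴴ * D) * (A * Aᴴ)).trace‖ := by
        rw [← norm_trace_conjTranspose_mul_self, Matrix.conjTranspose_mul, mul_assoc,
          Matrix.trace_mul_comm]
        simp only [mul_assoc]
    _ ≤ ‖Dᴴ * D‖ * ‖A * Aᴴ‖ := norm_trace_mul_le_frobenius _ _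
    _ ≤ ‖Dᴴ * D‖ * (‖A‖ * ‖Aᴴ‖) := by gcongr; exact Matrix.frobenius_norm_mul A Aᴴ
    _ = ‖Dᴴ * D‖ * ‖A‖ ^ 2 := by rw [Matrix.frobenius_norm_conjTranspose, sq]

theorem frobenius_norm_mul_le_mul_sqrt {D : Matrix n n 𝕜} (hD : D.IsHermitian)
    (A : Matrix n n 𝕜) : ‖D * A‖ ≤ ‖A‖ * √‖D * D‖ := by
  refine le_of_sq_le_sq ?_ (by positivity)
  rw [mul_pow, Real.sq_sqrt (norm_nonneg _), mul_comm]
  simpa only [hD.eq] using frobenius_norm_mul_sq_le D A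

theorem frobenius_norm_mul_le_mul_sqrt' {D : Matrix n n 𝕜} (hD : D.IsHermitian)
    (A : Matrix n n 𝕜) : ‖A * D‖ ≤ ‖A‖ * √‖D * D‖ := by
  rw [← Matrix.frobenius_norm_conjTranspose (A * D), ← Matrix.frobenius_norm_conjTranspose A,
    Matrix.conjTranspose_mul, hD.eq]
  exact frobenius_norm_mul_le_mul_sqrt hD Aᴴ

theorem norm_trace_pow_sub_trace_pow_le [DecidableEq n] {A B : Matrix n n 𝕜} {R ρ : ℝ}
    (hA : ‖A‖ ≤ R) (hB : ‖B‖ ≤ R) (hleft : ‖(A - B) * A‖ ≤ ρ) (hright : ‖B * (A - B)‖ ≤ ρ)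
    (m : ℕ) : ‖(A ^ (m + 4)).trace - (B ^ (m + 4)).trace‖ ≤ (m + 4) * R ^ (m + 2) * ρ := by
  have : 0 ≤ R := (norm_nonneg A).trans hA
  have hρ : 0 ≤ ρ := (norm_nonneg _).trans hleft
  have hA' : ‖A ^ (m + 2)‖ ≤ R ^ (m + 2) := (norm_pow_le' A (by lia)).trans (by gcongr)
  have hB' : ‖B ^ 2‖ ≤ R ^ 2 := (norm_pow_le' B two_pos).trans (by gcongr)
  have hsq : ‖A ^ 2 - B ^ 2‖ ≤ 2 * ρ := by
    simpa using norm_pow_add_two_sub_pow_le hA hB hleft hright 0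
  calc ‖(A ^ (m + 4)).trace - (B ^ (m + 4)).trace‖
      = ‖((A ^ 2 - B ^ 2) * A ^ (m + 2)).trace
          + (B ^ 2 * (A ^ (m + 2) - B ^ (m + 2))).trace‖ := by
        rw [← Matrix.trace_sub, ← Matrix.trace_add, show m + 4 = 2 + (m + 2) by ring, pow_add A,
          pow_add B]
        congr 2
        noncomm_ring
    _ ≤ ‖A ^ 2 - B ^ 2‖ * ‖A ^ (m + 2)‖ + ‖B ^ 2‖ * ‖A ^ (m + 2) - B ^ (m + 2)‖ :=
        norm_add_le_of_le (norm_trace_mul_le_frobenius _ _) (norm_trace_mul_le_frobenius _ _)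
    _ ≤ 2 * ρ * R ^ (m + 2) + R ^ 2 * ((m + 2) * R ^ m * ρ) := by
        gcongr
        exact norm_pow_add_two_sub_pow_le hA hB hleft hright m
    _ = (m + 4) * R ^ (m + 2) * ρ := by ring

theorem frobenius_norm_transpose_mul_self (Y : Matrix n n ℝ) : ‖Yᵀ * Y‖ = ‖Y * Yᵀ‖ := by
  simp only [← Matrix.conjTranspose_eq_transpose_of_trivial]
  refine (sq_eq_sq₀ (norm_nonneg _) (norm_nonneg _)).1 ?_
  simp only [← norm_trace_conjTranspose_mul_self, Matrix.conjTranspose_mul,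
    Matrix.conjTranspose_conjTranspose]
  rw [Matrix.mul_assoc, Matrix.trace_mul_comm]
  simp only [Matrix.mul_assoc]

theorem frobenius_norm_mul_self_le (Y : Matrix n n ℝ) : ‖Y * Y‖ ≤ ‖Y * Yᵀ‖ := by
  simp only [← Matrix.conjTranspose_eq_transpose_of_trivial]
  refine le_of_sq_le_sq ?_ (norm_nonneg _)
  calc ‖Y * Y‖ ^ 2 = ‖((Yᴴ * Y) * (Y * Yᴴ)).trace‖ := by
        rw [← norm_trace_conjTranspose_mul_self, Matrix.conjTranspose_mul, mul_assoc,
          Matrix.trace_mul_comm]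
        simp only [mul_assoc]
    _ ≤ ‖Yᴴ * Y‖ * ‖Y * Yᴴ‖ := norm_trace_mul_le_frobenius _ _
    _ = ‖Y * Yᴴ‖ ^ 2 := by
        rw [Matrix.conjTranspose_eq_transpose_of_trivial, frobenius_norm_transpose_mul_self, sq]

theorem frobenius_norm_add_transpose_mul_self_le (Y : Matrix n n ℝ) :
    ‖(Y + Yᵀ) * (Y + Yᵀ)‖ ≤ 4 * ‖Y * Yᵀ‖ := by
  have htr : ‖Yᵀ * Yᵀ‖ = ‖Y * Y‖ := by
    rw [← Matrix.transpose_mul, Matrix.frobenius_norm_transpose]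
  calc ‖(Y + Yᵀ) * (Y + Yᵀ)‖ = ‖Y * Y + Y * Yᵀ + Yᵀ * Y + Yᵀ * Yᵀ‖ := by
        rw [Matrix.add_mul, Matrix.mul_add, Matrix.mul_add, ← add_assoc]
    _ ≤ ‖Y * Y‖ + ‖Y * Yᵀ‖ + ‖Yᵀ * Y‖ + ‖Yᵀ * Yᵀ‖ := norm_add₄_le
    _ ≤ 4 * ‖Y * Yᵀ‖ := by
        rw [htr, frobenius_norm_transpose_mul_self]
        linarith [frobenius_norm_mul_self_le Y]

end Frobenius

/-! ### Spectral integrals -/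

section L2

variable {α E : Type*} [MeasurableSpace α] {μ : Measure α}

theorem tendsto_eLpNorm_sub_of_bounded [IsFiniteMeasure μ] [NormedAddCommGroup E]
    {p : ENNReal} (hp : 1 ≤ p) (hp' : p ≠ ⊤) {f : ℕ → α → E} {g : α → E} {C : ℝ}
    (hf : ∀ n, AEStronglyMeasurable (f n) μ) (hg : MemLp g p μ) (hC : ∀ n a, ‖f n a‖ ≤ C)
    (hlim : ∀ᵐ a ∂μ, Tendsto (fun n => f n a) atTop (nhds (g a))) :
    Tendsto (fun n => eLpNorm (f n - g) p μ) atTop (nhds 0) := by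
  refine tendsto_Lp_finite_of_tendsto_ae hp hp' hf hg (unifIntegrable_of hp hp' hf
    fun ε _ => ⟨C.toNNReal + 1, fun n => ?_⟩) hlim
  have hempty : {a | C.toNNReal + 1 ≤ ‖f n a‖₊} = ∅ :=
    Set.eq_empty_of_forall_notMem fun a (ha : C.toNNReal + 1 ≤ ‖f n a‖₊) => by
      have : (C.toNNReal : ℝ) + 1 ≤ ‖f n a‖ := by exact_mod_cast ha
      linarith [hC n a, Real.le_coe_toNNReal C]
  simp [hempty]

theorem integral_inner_eq_inner_toLp {g g' : α → ℂ} (hg : MemLp g 2 μ) (hg' : MemLp g' 2 μ) :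
    ∫ a, inner ℂ (g a) (g' a) ∂μ = inner ℂ (hg.toLp g) (hg'.toLp g') := by
  rw [L2.inner_def]
  refine integral_congr_ae ?_
  filter_upwards [hg.coeFn_toLp, hg'.coeFn_toLp] with a ha ha'
  rw [ha, ha']

theorem integral_norm_sq_eq_norm_toLp_sq {g : α → ℂ} (hg : MemLp g 2 μ) :
    ∫ a, ‖g a‖ ^ 2 ∂μ = ‖hg.toLp g‖ ^ 2 := by
  have hinner := integral_inner_eq_inner_toLp hg hg
  simp only [inner_self_eq_norm_sq_to_K, ← RCLike.ofReal_pow] at hinner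
  rw [integral_ofReal] at hinner
  exact RCLike.ofReal_injective hinner

end L2

section ClosedGraph

variable {ι H₁ H₂ : Type*} [NormedAddCommGroup H₁] [NormedAddCommGroup H₂]

/-- The closed `R`-linear relation generated by `e i ↦ x i`: the closure in `H₁ × H₂` of the set of
all `R`-linear combinations of the pairs `(e i, x i)`. When `e` and `x` have the same Gram matrix it
is the graph of an isometry. -/
def closedGraph (R : Type*) [NormedField R] [NormedSpace R H₁] [NormedSpace R H₂] (e : ι → H₁)
    (x : ι → H₂) : Submodule R (H₁ × H₂) :=
  (Submodule.span R (Set.range fun i => (e i, x i))).topologicalClosure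

variable {R : Type*} [NormedField R] [NormedSpace R H₁] [NormedSpace R H₂] {e : ι → H₁} {x : ι → H₂}

theorem mem_closedGraph_generator (i : ι) : (e i, x i) ∈ closedGraph R e x :=
  Submodule.le_topologicalClosure _ (Submodule.subset_span ⟨i, rfl⟩)

variable [InnerProductSpace ℂ H₁] [InnerProductSpace ℂ H₂]

theorem closedGraph_le_complex [SMul R ℂ] [IsScalarTower R ℂ H₁] [IsScalarTower R ℂ H₂] :
    (closedGraph R e x : Set (H₁ × H₂)) ⊆ closedGraph ℂ e x :=
  closure_mono (Submodule.span_le_restrictScalars R ℂ _)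

theorem inner_fst_eq_inner_snd_of_mem_closedGraph
    (h : ∀ i j, inner ℂ (e i) (e j) = inner ℂ (x i) (x j)) {z w : H₁ × H₂}
    (hz : z ∈ closedGraph ℂ e x) (hw : w ∈ closedGraph ℂ e x) :
    inner ℂ z.1 w.1 = inner ℂ z.2 w.2 := by
  have hspan (z w : H₁ × H₂) (hz : z ∈ Submodule.span ℂ (Set.range fun i => (e i, x i)))
      (hw : w ∈ Submodule.span ℂ (Set.range fun i => (e i, x i))) :
      inner ℂ z.1 w.1 = inner ℂ z.2 w.2 := by
    induction hz, hw using Submodule.span_induction₂ with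
    | mem_mem _ _ hi hj =>
      obtain ⟨i, rfl⟩ := hi
      obtain ⟨j, rfl⟩ := hj
      exact h i j
    | zero_left | zero_right => simp
    | add_left _ _ _ _ _ _ h₁ h₂ => simp [h₁, h₂]
    | add_right _ _ _ _ _ _ h₁ h₂ => simp [h₁, h₂]
    | smul_left _ _ _ _ _ h₁ => simp [h₁]
    | smul_right _ _ _ _ _ h₁ => simp [h₁]
  have hclosed : IsClosed {y : (H₁ × H₂) × (H₁ × H₂) |
      inner ℂ y.1.1 y.2.1 = inner ℂ y.1.2 y.2.2} :=
    isClosed_eq (by fun_prop) (by fun_prop)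
  refine closure_minimal (fun y hy => hspan y.1 y.2 hy.1 hy.2) hclosed
    (?_ : (z, w) ∈ closure (_ ×ˢ _))
  rw [closure_prod_eq]
  exact ⟨hz, hw⟩

theorem norm_fst_eq_norm_snd_of_mem_closedGraph
    (h : ∀ i j, inner ℂ (e i) (e j) = inner ℂ (x i) (x j)) {z : H₁ × H₂}
    (hz : z ∈ closedGraph ℂ e x) : ‖z.1‖ = ‖z.2‖ := by
  have hinner := inner_fst_eq_inner_snd_of_mem_closedGraph h hz hz
  rw [inner_self_eq_norm_sq_to_K, inner_self_eq_norm_sq_to_K] at hinner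
  exact (sq_eq_sq₀ (norm_nonneg _) (norm_nonneg _)).1 (by exact_mod_cast hinner)

theorem exists_mem_closedGraph [SMul R ℂ] [IsScalarTower R ℂ H₁] [IsScalarTower R ℂ H₂]
    [CompleteSpace H₂] (h : ∀ i j, inner ℂ (e i) (e j) = inner ℂ (x i) (x j)) {g : H₁}
    (hg : g ∈ (Submodule.span R (Set.range e)).topologicalClosure) :
    ∃ y, (g, y) ∈ closedGraph R e x := by
  obtain ⟨u, hu, hug⟩ := mem_closure_iff_seq_limit.1 hg
  have hmap : Submodule.span R (Set.range e)
      = (Submodule.span R (Set.range fun i => (e i, x i))).map (LinearMap.fst R H₁ H₂) := by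
    rw [Submodule.map_span, ← Set.range_comp]
    rfl
  have hlift (n : ℕ) : ∃ y, (u n, y) ∈ Submodule.span R (Set.range fun i => (e i, x i)) := by
    have hun : u n ∈ Submodule.span R (Set.range e) := hu n
    rw [hmap] at hun
    obtain ⟨⟨a, b⟩, hab, rfl⟩ := hun
    exact ⟨b, hab⟩
  choose y hy using hlift
  have hdist (m n : ℕ) : dist (y m) (y n) = dist (u m) (u n) := by
    rw [dist_eq_norm, dist_eq_norm]
    exact (norm_fst_eq_norm_snd_of_mem_closedGraph h
      (closedGraph_le_complex (subset_closure (Submodule.sub_mem _ (hy m) (hy n))))).symm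
  have hcauchy : CauchySeq y := by
    have hu' := hug.cauchySeq
    simpa only [Metric.cauchySeq_iff, hdist] using hu'
  obtain ⟨y₀, hy₀⟩ := cauchySeq_tendsto_of_complete hcauchy
  exact ⟨y₀, mem_closure_of_tendsto (hug.prodMk_nhds hy₀) (.of_forall hy)⟩

end ClosedGraph

section SpectralPair

variable {ι α Ω : Type*} [MeasurableSpace α] [MeasurableSpace Ω] {μ : Measure α} {P : Measure Ω}

/-- `Y` is the stochastic integral of `g` for the isometry `e i ↦ x i`, restricted to limits of
linear combinations with coefficients in `R`. For the characters `e` and the coordinates `x` of a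
stationary process, this is integration against the random spectral measure. -/
def IsSpectralPair (R : Type*) [NormedField R] [NormedAlgebra R ℂ] (e : ι → Lp ℂ 2 μ)
    (x : ι → Lp ℂ 2 P) (g : α → ℂ) (Y : Ω → ℂ) : Prop :=
  ∃ (hg : MemLp g 2 μ) (hY : MemLp Y 2 P), (hg.toLp g, hY.toLp Y) ∈ closedGraph R e x

/-- `g` belongs to the closed `R`-linear span of the family `e` in `L²`. -/
def MemClosedSpan (R : Type*) [NormedField R] [NormedAlgebra R ℂ] (e : ι → Lp ℂ 2 μ)
    (g : α → ℂ) : Prop :=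
  ∃ hg : MemLp g 2 μ, hg.toLp g ∈ (Submodule.span R (Set.range e)).topologicalClosure

variable {R : Type*} [NormedField R] [NormedAlgebra R ℂ] {e : ι → Lp ℂ 2 μ} {x : ι → Lp ℂ 2 P}
  {g g' : α → ℂ} {Y Y' : Ω → ℂ}

namespace IsSpectralPair

theorem congr (h : IsSpectralPair R e x g Y) (hg : g =ᵐ[μ] g') (hY : Y =ᵐ[P] Y') :
    IsSpectralPair R e x g' Y' := by
  obtain ⟨hg₂, hY₂, hmem⟩ := h
  refine ⟨hg₂.ae_eq hg, hY₂.ae_eq hY, ?_⟩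
  rwa [← MemLp.toLp_congr hg₂ (hg₂.ae_eq hg) hg, ← MemLp.toLp_congr hY₂ (hY₂.ae_eq hY) hY]

theorem generator {φ : ι → α → ℂ} {ψ : ι → Ω → ℂ} (hφ : ∀ i, MemLp (φ i) 2 μ)
    (hψ : ∀ i, MemLp (ψ i) 2 P) (i : ι) :
    IsSpectralPair R (fun i => (hφ i).toLp (φ i)) (fun i => (hψ i).toLp (ψ i)) (φ i) (ψ i) :=
  ⟨hφ i, hψ i, mem_closedGraph_generator (e := fun i => (hφ i).toLp (φ i)) i⟩

theorem zero : IsSpectralPair R e x 0 0 :=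
  ⟨MemLp.zero, MemLp.zero, by
    rw [MemLp.toLp_zero, MemLp.toLp_zero]
    exact (closedGraph R e x).zero_mem⟩

theorem add (h : IsSpectralPair R e x g Y) (h' : IsSpectralPair R e x g' Y') :
    IsSpectralPair R e x (g + g') (Y + Y') := by
  obtain ⟨hg, hY, hmem⟩ := h
  obtain ⟨hg', hY', hmem'⟩ := h'
  refine ⟨hg.add hg', hY.add hY', ?_⟩
  rw [MemLp.toLp_add hg hg', MemLp.toLp_add hY hY']
  exact (closedGraph R e x).add_mem hmem hmem'

theorem smul (r : R) (h : IsSpectralPair R e x g Y) : IsSpectralPair R e x (r • g) (r • Y) := by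
  obtain ⟨hg, hY, hmem⟩ := h
  refine ⟨hg.const_smul r, hY.const_smul r, ?_⟩
  rw [MemLp.toLp_const_smul r hg, MemLp.toLp_const_smul r hY]
  exact (closedGraph R e x).smul_mem r hmem

theorem sub (h : IsSpectralPair R e x g Y) (h' : IsSpectralPair R e x g' Y') :
    IsSpectralPair R e x (g - g') (Y - Y') := by
  simpa [sub_eq_add_neg] using h.add (h'.smul (-1 : R))

theorem sum {κ : Type*} (s : Finset κ) {g : κ → α → ℂ} {Y : κ → Ω → ℂ}
    (h : ∀ k ∈ s, IsSpectralPair R e x (g k) (Y k)) :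
    IsSpectralPair R e x (∑ k ∈ s, g k) (∑ k ∈ s, Y k) := by
  classical
  induction s using Finset.induction_on with
  | empty => simpa using zero
  | insert a s ha ih =>
    rw [Finset.sum_insert ha, Finset.sum_insert ha]
    exact (h a (s.mem_insert_self a)).add (ih fun k hk => h k (Finset.mem_insert_of_mem hk))

theorem toComplex (h : IsSpectralPair R e x g Y) : IsSpectralPair ℂ e x g Y := by
  obtain ⟨hg, hY, hmem⟩ := h
  exact ⟨hg, hY, closedGraph_le_complex hmem⟩

variable (hgram : ∀ i j, inner ℂ (e i) (e j) = inner ℂ (x i) (x j))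
include hgram

theorem integral_inner_eq (h : IsSpectralPair ℂ e x g Y) (h' : IsSpectralPair ℂ e x g' Y') :
    ∫ a, inner ℂ (g a) (g' a) ∂μ = ∫ ω, inner ℂ (Y ω) (Y' ω) ∂P := by
  obtain ⟨hg, hY, hmem⟩ := h
  obtain ⟨hg', hY', hmem'⟩ := h'
  rw [integral_inner_eq_inner_toLp hg hg', integral_inner_eq_inner_toLp hY hY']
  exact inner_fst_eq_inner_snd_of_mem_closedGraph hgram hmem hmem'

theorem integral_norm_sq_eq (h : IsSpectralPair ℂ e x g Y) :
    ∫ a, ‖g a‖ ^ 2 ∂μ = ∫ ω, ‖Y ω‖ ^ 2 ∂P := by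
  obtain ⟨hg, hY, hmem⟩ := h
  rw [integral_norm_sq_eq_norm_toLp_sq hg, integral_norm_sq_eq_norm_toLp_sq hY,
    norm_fst_eq_norm_snd_of_mem_closedGraph hgram hmem]

end IsSpectralPair

namespace MemClosedSpan

theorem exists_isSpectralPair (hgram : ∀ i j, inner ℂ (e i) (e j) = inner ℂ (x i) (x j))
    (h : MemClosedSpan R e g) : ∃ Y, StronglyMeasurable Y ∧ IsSpectralPair R e x g Y := by
  obtain ⟨hg, hmem⟩ := h
  obtain ⟨y, hy⟩ := exists_mem_closedGraph hgram hmem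
  exact ⟨y, Lp.stronglyMeasurable y, hg, Lp.memLp y, by rwa [Lp.toLp_coeFn]⟩

theorem of_mem_span {φ : ι → α → ℂ} (hφ : ∀ i, MemLp (φ i) 2 μ)
    (hg : g ∈ Submodule.span R (Set.range φ)) :
    MemClosedSpan R (fun i => (hφ i).toLp (φ i)) g := by
  suffices ∃ hg : MemLp g 2 μ,
      hg.toLp g ∈ Submodule.span R (Set.range fun i => (hφ i).toLp (φ i)) from
    this.imp fun _ h => Submodule.le_topologicalClosure _ h
  induction hg using Submodule.span_induction with
  | mem _ hi =>
    obtain ⟨i, rfl⟩ := hi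
    exact ⟨hφ i, Submodule.subset_span ⟨i, rfl⟩⟩
  | zero => exact ⟨MemLp.zero, by rw [MemLp.toLp_zero]; exact Submodule.zero_mem _⟩
  | add _ _ _ _ ih ih' =>
    obtain ⟨h, hmem⟩ := ih
    obtain ⟨h', hmem'⟩ := ih'
    exact ⟨h.add h', by rw [MemLp.toLp_add h h']; exact Submodule.add_mem _ hmem hmem'⟩
  | smul r _ _ ih =>
    obtain ⟨h, hmem⟩ := ih
    exact ⟨h.const_smul r, by rw [MemLp.toLp_const_smul r h]; exact Submodule.smul_mem _ r hmem⟩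

theorem of_tendsto_of_bounded [IsFiniteMeasure μ] {f : ℕ → α → ℂ} {C : ℝ}
    (hf : ∀ n, MemClosedSpan R e (f n)) (hC : ∀ n a, ‖f n a‖ ≤ C)
    (hlim : ∀ᵐ a ∂μ, Tendsto (fun n => f n a) atTop (nhds (g a))) : MemClosedSpan R e g := by
  choose hmemLp hmem using hf
  have hg : MemLp g 2 μ :=
    MemLp.of_bound (aestronglyMeasurable_of_tendsto_ae atTop (fun n => (hmemLp n).1) hlim) C <|
      hlim.mono fun a ha => le_of_tendsto ha.norm (.of_forall fun n => hC n a)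
  exact ⟨hg, (Submodule.isClosed_topologicalClosure _).mem_of_tendsto
    ((Lp.tendsto_Lp_iff_tendsto_eLpNorm'' f hmemLp g hg).2 <| tendsto_eLpNorm_sub_of_bounded
      one_le_two ENNReal.ofNat_ne_top (fun n => (hmemLp n).1) hg hC hlim) (.of_forall hmem)⟩

end MemClosedSpan

end SpectralPair

section Gaussian

variable {Ω : Type*} [MeasurableSpace Ω] {P : Measure Ω}

theorem integral_sq_of_map_eq_gaussianReal {Y : Ω → ℝ} {v : NNReal} (hY : AEMeasurable Y P)
    (h : P.map Y = gaussianReal 0 v) : ∫ ω, Y ω ^ 2 ∂P = v := by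
  have hvar := variance_fun_id_gaussianReal (μ := 0) (v := v)
  rwa [variance_of_integral_eq_zero (by fun_prop) integral_id_gaussianReal, ← h,
    integral_map hY (by fun_prop)] at hvar

theorem map_eq_gaussianReal_of_tendstoInMeasure [IsProbabilityMeasure P] {Y : ℕ → Ω → ℝ}
    {Y₀ : Ω → ℝ} {v : ℕ → NNReal} {v₀ : NNReal} (hY : ∀ n, AEMeasurable (Y n) P)
    (hlaw : ∀ n, P.map (Y n) = gaussianReal 0 (v n)) (hlim : TendstoInMeasure P Y atTop Y₀)
    (hv : Tendsto v atTop (nhds v₀)) : P.map Y₀ = gaussianReal 0 v₀ := by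
  have hY₀ : AEMeasurable Y₀ P := hlim.aemeasurable hY
  have := Measure.isProbabilityMeasure_map hY₀
  refine Measure.ext_of_charFun (funext fun t => ?_)
  have hdist := (hlim.tendstoInDistribution hY).tendsto
  have hchar := ProbabilityMeasure.tendsto_iff_tendsto_charFun.1 hdist t
  simp only [ProbabilityMeasure.coe_mk, hlaw, charFun_gaussianReal] at hchar ⊢
  refine tendsto_nhds_unique hchar ?_
  have hv' : Tendsto (fun n => (v n : ℂ)) atTop (nhds (v₀ : ℂ)) :=
    (Complex.continuous_ofReal.comp NNReal.continuous_coe).continuousAt.tendsto.comp hv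
  exact (Complex.continuous_exp.tendsto _).comp
    (tendsto_const_nhds.sub ((hv'.mul_const _).div_const _))

theorem memLp_of_map_eq_gaussianReal {Y : Ω → ℝ} {v : NNReal} (hY : AEMeasurable Y P)
    (h : P.map Y = gaussianReal 0 v) (r : NNReal) : MemLp Y r P := by
  have hid := memLp_id_gaussianReal (μ := 0) (v := v) r
  rwa [← h, memLp_map_measure_iff aestronglyMeasurable_id hY] at hid

/-- A family of real random variables all of whose finite linear combinations are centered
Gaussian. -/
structure IsCenteredGaussian {ι : Type*} (P : Measure Ω) (X : ι → Ω → ℝ) : Prop where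
  meas : ∀ i, Measurable (X i)
  gauss : ∀ c : ι →₀ ℝ, ∃ v, P.map (fun ω => ∑ i ∈ c.support, c i * X i ω) = gaussianReal 0 v

namespace IsCenteredGaussian

variable {ι : Type*} {X : ι → Ω → ℝ} (hX : IsCenteredGaussian P X)

include hX

theorem memLp (i : ι) (r : NNReal) : MemLp (X i) r P := by
  obtain ⟨v, hv⟩ := hX.gauss (Finsupp.single i 1)
  refine memLp_of_map_eq_gaussianReal (hX.meas i).aemeasurable (v := v) ?_ r
  simpa [Finsupp.support_single i one_ne_zero] using hv

theorem memLp_ofReal (i : ι) : MemLp (fun ω => (X i ω : ℂ)) 2 P :=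
  (hX.memLp i 2).ofReal

/-- The random variable `X i` as an element of the complex `L²` space. -/
def toLp (i : ι) : Lp ℂ 2 P := (hX.memLp_ofReal i).toLp fun ω => (X i ω : ℂ)

end IsCenteredGaussian

end Gaussian

section GaussianSpectralPair

variable {ι α Ω : Type*} [MeasurableSpace α] [MeasurableSpace Ω] {μ : Measure α} {P : Measure Ω}
  {e : ι → Lp ℂ 2 μ} {X : ι → Ω → ℝ} (hX : ∀ i, MemLp (fun ω => (X i ω : ℂ)) 2 P)

include hX

theorem exists_finsupp_ae_eq_of_mem_span {z : Lp ℂ 2 μ × Lp ℂ 2 P}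
    (hz : z ∈ Submodule.span ℝ (Set.range fun i => (e i, (hX i).toLp fun ω => (X i ω : ℂ)))) :
    ∃ c : ι →₀ ℝ, z.2 =ᵐ[P] fun ω => ((∑ i ∈ c.support, c i * X i ω : ℝ) : ℂ) := by
  obtain ⟨c, rfl⟩ := Finsupp.mem_span_range_iff_exists_finsupp.1 hz
  refine ⟨c, ?_⟩
  rw [Finsupp.sum, Prod.snd_sum]
  refine (Lp.coeFn_finsetSum _ _).trans ?_
  have hterm : ∀ᵐ ω ∂P, ∀ i ∈ c.support,
      (c i • (hX i).toLp _ : Lp ℂ 2 P) ω = ((c i * X i ω : ℝ) : ℂ) := by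
    refine (eventually_countable_ball c.support.countable_toSet).2 fun i _ => ?_
    filter_upwards [Lp.coeFn_smul (c i) ((hX i).toLp _), (hX i).coeFn_toLp] with ω hsmul hcoe
    rw [hsmul, Pi.smul_apply, hcoe, Complex.real_smul, Complex.ofReal_mul]
  filter_upwards [hterm] with ω hω
  rw [Finset.sum_apply, Complex.ofReal_sum]
  exact Finset.sum_congr rfl hω

namespace IsSpectralPair

variable {g : α → ℂ} {Y : Ω → ℂ}

theorem ae_eq_ofReal_re (h : IsSpectralPair ℝ e (fun i => (hX i).toLp fun ω => (X i ω : ℂ)) g Y) :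
    Y =ᵐ[P] fun ω => ((Y ω).re : ℂ) := by
  obtain ⟨hg, hY, hmem⟩ := h
  have hclosed : IsClosed {z : Lp ℂ 2 μ × Lp ℂ 2 P | Complex.imCLM.compLpL 2 P z.2 = 0} :=
    isClosed_eq (by fun_prop) continuous_const
  have him : Complex.imCLM.compLpL 2 P (hY.toLp Y) = 0 := by
    refine closure_minimal (fun z hz => ?_) hclosed hmem
    obtain ⟨c, hc⟩ := exists_finsupp_ae_eq_of_mem_span hX hz
    refine Lp.ext ?_
    filter_upwards [hc, Complex.imCLM.coeFn_compLpL (p := 2) (μ := P) z.2,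
      Lp.coeFn_zero ℝ 2 P] with ω hcω him hzero
    rw [him, hcω, hzero, Complex.imCLM_apply, Complex.ofReal_im, Pi.zero_apply]
  filter_upwards [Complex.imCLM.coeFn_compLpL (p := 2) (μ := P) (hY.toLp Y),
    Lp.coeFn_zero ℝ 2 P, hY.coeFn_toLp] with ω hcomp hzero hcoe
  rw [him, hzero, hcoe] at hcomp
  exact Complex.ext rfl hcomp.symm

omit hX in
theorem map_eq_gaussianReal [IsProbabilityMeasure P] (hX : IsCenteredGaussian P X)
    (hgram : ∀ i j, inner ℂ (e i) (e j) = inner ℂ (hX.toLp i) (hX.toLp j)) {Y : Ω → ℝ}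
    (h : IsSpectralPair ℝ e hX.toLp g fun ω => (Y ω : ℂ)) :
    P.map Y = gaussianReal 0 (∫ a, ‖g a‖ ^ 2 ∂μ).toNNReal := by
  obtain ⟨hg, hY, hmem⟩ := h
  obtain ⟨u, hu, hlim⟩ := mem_closure_iff_seq_limit.1 hmem
  have hlaw (n : ℕ) : P.map (fun ω => ((u n).2 ω).re) = gaussianReal 0 (‖(u n).1‖₊ ^ 2) := by
    obtain ⟨c, hc⟩ := exists_finsupp_ae_eq_of_mem_span hX.memLp_ofReal (hu n)
    obtain ⟨v, hv⟩ := hX.gauss c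
    have hre : (fun ω => ((u n).2 ω).re) =ᵐ[P] fun ω => ∑ i ∈ c.support, c i * X i ω := by
      filter_upwards [hc] with ω hω
      rw [hω, Complex.ofReal_re]
    have hsq : ‖(u n).1‖ ^ 2 = v := by
      have hcoe : (fun ω => ‖(u n).2 ω‖ ^ 2) =ᵐ[P] fun ω => ((u n).2 ω).re ^ 2 := by
        filter_upwards [hc] with ω hω
        rw [hω, Complex.norm_real, Complex.ofReal_re, Real.norm_eq_abs, sq_abs]
      rw [norm_fst_eq_norm_snd_of_mem_closedGraph hgram (closedGraph_le_complex
        (subset_closure (hu n))), ← Lp.toLp_coeFn (u n).2 (Lp.memLp _),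
        ← integral_norm_sq_eq_norm_toLp_sq, integral_congr_ae hcoe]
      exact integral_sq_of_map_eq_gaussianReal (by fun_prop) ((Measure.map_congr hre).trans hv)
    rw [Measure.map_congr hre, hv]
    congr 1
    exact NNReal.eq hsq.symm
  have hnorm : Tendsto (fun n => ‖(u n).1‖₊ ^ 2) atTop
      (nhds (∫ a, ‖g a‖ ^ 2 ∂μ).toNNReal) := by
    rw [integral_norm_sq_eq_norm_toLp_sq hg, Real.toNNReal_pow (norm_nonneg _), norm_toNNReal]
    exact ((continuous_fst.tendsto _).comp hlim).nnnorm.pow 2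
  have hmeas := tendstoInMeasure_of_tendsto_Lp <| ((Complex.reCLM.compLpL 2 P).continuous.tendsto _
    |>.comp (continuous_snd.tendsto _)).comp hlim
  refine map_eq_gaussianReal_of_tendstoInMeasure (fun n => by fun_prop) hlaw
    (hmeas.congr (fun n => Complex.reCLM.coeFn_compLpL _) ?_) hnorm
  filter_upwards [Complex.reCLM.coeFn_compLpL (p := 2) (μ := P) (hY.toLp _), hY.coeFn_toLp]
    with ω hcomp hcoe
  rw [hcomp, hcoe, Complex.reCLM_apply, Complex.ofReal_re]

end IsSpectralPair

end GaussianSpectralPair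

/-! ### Trigonometric polynomials and the atoms of the spectral measure -/

/-- The character `q ↦ exp (i ⟨p, q⟩)` of the torus, in the coordinates of the Herglotz
representation. -/
def torusChar (p : ℤ × ℤ) (q : ℝ × ℝ) : ℂ :=
  Complex.exp (Complex.I * ((p.1 * q.1 + p.2 * q.2 : ℝ) : ℂ))

namespace torusChar

@[fun_prop]
theorem continuous (p : ℤ × ℤ) : Continuous (torusChar p) := by
  unfold torusChar
  fun_prop

theorem norm_eq_one (p : ℤ × ℤ) (q : ℝ × ℝ) : ‖torusChar p q‖ = 1 := by
  rw [torusChar, mul_comm, Complex.norm_exp_ofReal_mul_I]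

theorem zero : torusChar 0 = 1 := by
  funext q
  simp [torusChar]

theorem add (p p' : ℤ × ℤ) : torusChar (p + p') = torusChar p * torusChar p' := by
  funext q
  simp only [torusChar, Pi.mul_apply, ← Complex.exp_add]
  congr 1
  push_cast [Prod.fst_add, Prod.snd_add]
  ring

theorem neg (p : ℤ × ℤ) (q : ℝ × ℝ) : torusChar (-p) q = star (torusChar p q) := by
  change _ = starRingEnd ℂ _
  rw [torusChar, torusChar, ← Complex.exp_conj]
  congr 1
  simp only [map_mul, Complex.conj_I, Complex.conj_ofReal]
  push_cast [Prod.fst_neg, Prod.snd_neg]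
  ring

theorem apply_sub (p : ℤ × ℤ) (q q' : ℝ × ℝ) :
    torusChar p (q - q') = torusChar (-p) q' * torusChar p q := by
  simp only [torusChar, ← Complex.exp_add]
  congr 1
  push_cast [Prod.fst_sub, Prod.snd_sub, Prod.fst_neg, Prod.snd_neg]
  ring

theorem memLp (ν : Measure (ℝ × ℝ)) [IsFiniteMeasure ν] (p : ℤ × ℤ) : MemLp (torusChar p) 2 ν :=
  MemLp.of_bound (by fun_prop) 1 (.of_forall fun q => (norm_eq_one p q).le)

/-- The character `torusChar p` as an element of `L²(ν)`. -/
def toLp (ν : Measure (ℝ × ℝ)) [IsFiniteMeasure ν] (p : ℤ × ℤ) : Lp ℂ 2 ν :=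
  (memLp ν p).toLp (torusChar p)

end torusChar

/-- The algebra of trigonometric polynomials with coefficients in `R`. -/
def trigPoly (R : Type*) [NormedField R] [NormedAlgebra R ℂ] : Subalgebra R (ℝ × ℝ → ℂ) :=
  (Submodule.span R (Set.range torusChar)).toSubalgebra
    (Submodule.subset_span ⟨0, torusChar.zero⟩) fun f g hf hg => by
      have hmul := Submodule.mul_mem_mul hf hg
      rw [Submodule.span_mul_span] at hmul
      refine Submodule.span_mono ?_ hmul
      rintro _ ⟨_, ⟨p, rfl⟩, _, ⟨p', rfl⟩, rfl⟩
      exact ⟨p + p', torusChar.add p p'⟩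

section TrigPoly

variable {R : Type*} [NormedField R] [NormedAlgebra R ℂ]

theorem torusChar_mem_trigPoly (p : ℤ × ℤ) : torusChar p ∈ trigPoly R :=
  Submodule.subset_span ⟨p, rfl⟩

theorem memClosedSpan_of_mem_trigPoly (ν : Measure (ℝ × ℝ)) [IsFiniteMeasure ν]
    {g : ℝ × ℝ → ℂ} (hg : g ∈ trigPoly R) : MemClosedSpan R (torusChar.toLp ν) g :=
  MemClosedSpan.of_mem_span (torusChar.memLp ν) hg

end TrigPoly

/-- The Cesàro average of the powers of `z`. -/
def geomAverage (M : ℕ) (z : ℂ) : ℂ := (M : ℂ)⁻¹ * ∑ j ∈ Finset.range M, z ^ j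

theorem norm_geomAverage_le_one (M : ℕ) {z : ℂ} (hz : ‖z‖ = 1) : ‖geomAverage M z‖ ≤ 1 := by
  rw [geomAverage, norm_mul, norm_inv, Complex.norm_natCast]
  refine inv_mul_le_one_of_le₀ ((norm_sum_le _ _).trans ?_) M.cast_nonneg
  simp [hz]

theorem tendsto_geomAverage {z : ℂ} (hz : ‖z‖ = 1) [Decidable (z = 1)] :
    Tendsto (fun M => geomAverage M z) atTop (nhds (if z = 1 then 1 else 0)) := by
  split_ifs with h
  · refine tendsto_const_nhds.congr' ?_
    filter_upwards [eventually_ne_atTop 0] with M hM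
    simp [geomAverage, h, hM]
  · have hzero : Tendsto (fun M : ℕ => (M : ℝ)⁻¹ * (2 / ‖z - 1‖)) atTop (nhds 0) := by
      simpa using (tendsto_inv_atTop_nhds_zero_nat (𝕜 := ℝ)).mul_const (2 / ‖z - 1‖)
    refine squeeze_zero_norm (fun M => ?_) hzero
    rw [geomAverage, norm_mul, norm_inv, Complex.norm_natCast, geom_sum_eq h, norm_div]
    gcongr
    calc ‖z ^ M - 1‖ ≤ ‖z ^ M‖ + ‖(1 : ℂ)‖ := norm_sub_le _ _
      _ = 2 := by rw [norm_pow, hz, norm_one, one_pow, one_add_one_eq_two]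

theorem exp_sub_mul_I_eq_one_iff {x y : ℝ} (hx : x ∈ Set.Ioc (-π) π) (hy : y ∈ Set.Ioc (-π) π) :
    Complex.exp ((x - y : ℝ) * Complex.I) = 1 ↔ x = y := by
  rw [Complex.ofReal_sub, sub_mul, Complex.exp_sub, div_eq_one_iff_eq (Complex.exp_ne_zero _)]
  refine ⟨fun h => ?_, fun h => by rw [h]⟩
  have hinj := Complex.exp_inj_of_neg_pi_lt_of_le_pi (x := x * Complex.I) (y := y * Complex.I)
    (by simpa using hx.1) (by simpa using hx.2) (by simpa using hy.1) (by simpa using hy.2) h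
  exact_mod_cast mul_right_cancel₀ Complex.I_ne_zero hinj

/-- The product of the Cesàro averages of the characters in each coordinate, which converges
boundedly to the indicator function of `0` on the torus. -/
def atomKernel (M : ℕ) (t : ℝ × ℝ) : ℂ :=
  geomAverage M (Complex.exp (t.1 * Complex.I)) * geomAverage M (Complex.exp (t.2 * Complex.I))

namespace atomKernel

@[fun_prop]
theorem continuous (M : ℕ) : Continuous (atomKernel M) := by
  unfold atomKernel geomAverage
  fun_prop

theorem norm_le_one (M : ℕ) (t : ℝ × ℝ) : ‖atomKernel M t‖ ≤ 1 := by
  rw [atomKernel, norm_mul]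
  exact mul_le_one₀ (norm_geomAverage_le_one M (Complex.norm_exp_ofReal_mul_I _)) (norm_nonneg _)
    (norm_geomAverage_le_one M (Complex.norm_exp_ofReal_mul_I _))

theorem eq_sum (M : ℕ) (t : ℝ × ℝ) : atomKernel M t =
    ∑ p ∈ Finset.range M ×ˢ Finset.range M, (M : ℂ)⁻¹ ^ 2 * torusChar (p.1, p.2) t := by
  rw [atomKernel, geomAverage, geomAverage, mul_mul_mul_comm, Finset.sum_mul_sum,
    ← Finset.sum_product', Finset.mul_sum]
  refine Finset.sum_congr rfl fun p _ => ?_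
  rw [← Complex.exp_nat_mul, ← Complex.exp_nat_mul, ← Complex.exp_add, torusChar, sq]
  congr 2
  push_cast
  ring

theorem tendsto_indicator {q a : ℝ × ℝ} (hq : q ∈ specBox) (ha : a ∈ specBox) :
    Tendsto (fun M => atomKernel M (q - a)) atTop
      (nhds (({a} : Set (ℝ × ℝ)).indicator 1 q)) := by
  classical
  have hlim := (tendsto_geomAverage (Complex.norm_exp_ofReal_mul_I (q - a).1)).mul
    (tendsto_geomAverage (Complex.norm_exp_ofReal_mul_I (q - a).2))
  have hval : ({a} : Set (ℝ × ℝ)).indicator (1 : ℝ × ℝ → ℂ) q =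
      (if Complex.exp ((q - a).1 * Complex.I) = 1 then 1 else 0) *
      (if Complex.exp ((q - a).2 * Complex.I) = 1 then 1 else 0) := by
    rw [Prod.fst_sub, Prod.snd_sub]
    simp only [exp_sub_mul_I_eq_one_iff hq.1 ha.1, exp_sub_mul_I_eq_one_iff hq.2 ha.2,
      ite_zero_mul_ite_zero, mul_one, Set.indicator_apply, Set.mem_singleton_iff, Prod.ext_iff,
      Pi.one_apply]
  rwa [hval]

end atomKernel

section Atoms

variable (ν : Measure (ℝ × ℝ)) [IsFiniteMeasure ν]

/-- The set of atoms of `ν`. -/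
def atoms : Set (ℝ × ℝ) := {q | ν {q} ≠ 0}

theorem countable_atoms : (atoms ν).Countable :=
  (Measure.countable_meas_pos_of_disjoint_iUnion (μ := ν) (As := fun q : ℝ × ℝ => {q})
    measurableSet_singleton fun _ _ h => Set.disjoint_singleton.2 h).mono
    fun _ hq => pos_iff_ne_zero.2 hq

variable {ν}

theorem memClosedSpan_indicator_singleton (hν : ν specBoxᶜ = 0) {a : ℝ × ℝ} (ha : a ∈ specBox) :
    MemClosedSpan ℂ (torusChar.toLp ν) (({a} : Set (ℝ × ℝ)).indicator 1) := by
  refine MemClosedSpan.of_tendsto_of_bounded (f := fun M q => atomKernel M (q - a)) (fun M => ?_)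
    (fun M q => atomKernel.norm_le_one M _)
    ((measure_eq_zero_iff_ae_notMem.1 hν).mono fun q hq =>
      atomKernel.tendsto_indicator (not_not.1 hq) ha)
  refine memClosedSpan_of_mem_trigPoly ν ?_
  have hsum : (fun q => atomKernel M (q - a)) = ∑ p ∈ Finset.range M ×ˢ Finset.range M,
      ((M : ℂ)⁻¹ ^ 2 * torusChar (-((p.1 : ℤ), (p.2 : ℤ))) a) • torusChar (p.1, p.2) := by
    funext q
    simp only [atomKernel.eq_sum, torusChar.apply_sub, Finset.sum_apply, Pi.smul_apply, smul_eq_mul,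
      mul_assoc]
  rw [hsum]
  exact Subalgebra.sum_mem _ fun p _ => Subalgebra.smul_mem _ (torusChar_mem_trigPoly _) _

theorem norm_average_atomKernel_le_one (M : ℕ) (q : ℝ × ℝ) :
    ‖⨍ q', atomKernel M (q' - q) ∂ν‖ ≤ 1 := by
  rw [average_eq, norm_smul, norm_inv, Real.norm_of_nonneg measureReal_nonneg]
  refine inv_mul_le_one_of_le₀ ?_ measureReal_nonneg
  simpa using norm_integral_le_of_norm_le_const (μ := ν)
    (.of_forall fun q' => atomKernel.norm_le_one M (q' - q))

theorem tendsto_average_atomKernel (hν : ν specBoxᶜ = 0) {q : ℝ × ℝ} (hq : q ∈ specBox) :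
    Tendsto (fun M => ⨍ q', atomKernel M (q' - q) ∂ν) atTop
      (nhds ((ν.real {q} / ν.real Set.univ : ℝ) : ℂ)) := by
  have hlim : Tendsto (fun M => ∫ q', atomKernel M (q' - q) ∂ν) atTop
      (nhds (∫ q', ({q} : Set (ℝ × ℝ)).indicator 1 q' ∂ν)) := by
    refine tendsto_integral_of_dominated_convergence (fun _ => 1)
      (fun M => (by fun_prop : Continuous fun q' => atomKernel M (q' - q)).aestronglyMeasurable)
      (integrable_const _) (fun M => .of_forall fun q' => atomKernel.norm_le_one M _)
      ((measure_eq_zero_iff_ae_notMem.1 hν).mono fun q' hq' =>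
        atomKernel.tendsto_indicator (not_not.1 hq') hq)
  simp only [average_eq, div_eq_inv_mul, Complex.ofReal_mul, ← Complex.real_smul]
  refine (hlim.const_smul _).trans_eq ?_
  rw [integral_indicator (measurableSet_singleton q)]
  simp [measureReal_def]

/-- The real coefficients are available because the Fourier coefficients of `ν` are real. -/
theorem average_atomKernel_mem_trigPoly {ρ : ℤ × ℤ → ℝ}
    (hρ : ∀ p, ∫ q, torusChar p q ∂ν = (ρ p : ℂ)) (M : ℕ) :
    (fun q => ⨍ q', atomKernel M (q' - q) ∂ν) ∈ trigPoly ℝ := by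
  have hsum : (fun q => ⨍ q', atomKernel M (q' - q) ∂ν) =
      ∑ p ∈ Finset.range M ×ˢ Finset.range M,
        ((ν.real Set.univ)⁻¹ * ((M : ℝ)⁻¹ ^ 2 * ρ (p.1, p.2))) •
          torusChar (-((p.1 : ℤ), (p.2 : ℤ))) := by
    funext q
    have hint (p : ℤ × ℤ) : Integrable (torusChar p) ν :=
      (torusChar.memLp ν p).integrable one_le_two
    simp only [average_eq, atomKernel.eq_sum, torusChar.apply_sub, Finset.sum_apply, Pi.smul_apply]
    rw [integral_finsetSum _ fun p _ => ((hint _).const_mul _).const_mul _, Finset.smul_sum]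
    refine Finset.sum_congr rfl fun p _ => ?_
    rw [integral_const_mul, integral_const_mul, hρ, mul_smul, Complex.real_smul (x := _ * _)]
    push_cast
    congr 1
    ring
  rw [hsum]
  exact Subalgebra.sum_mem _ fun p _ => Subalgebra.smul_mem _ (torusChar_mem_trigPoly _) _

theorem memClosedSpan_one_sub_pow_mul_torusChar (hν : ν specBoxᶜ = 0) {ρ : ℤ × ℤ → ℝ}
    (hρ : ∀ p, ∫ q, torusChar p q ∂ν = (ρ p : ℂ)) (p : ℤ × ℤ) (m : ℕ) :
    MemClosedSpan ℝ (torusChar.toLp ν) fun q =>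
      (1 - (1 - ((ν.real {q} / ν.real Set.univ : ℝ) : ℂ)) ^ m) * torusChar p q := by
  refine MemClosedSpan.of_tendsto_of_bounded (C := 1 + 2 ^ m)
    (f := fun M q => (1 - (1 - ⨍ q', atomKernel M (q' - q) ∂ν) ^ m) * torusChar p q)
    (fun M => memClosedSpan_of_mem_trigPoly ν ?_) (fun M q => ?_)
    ((measure_eq_zero_iff_ae_notMem.1 hν).mono fun q hq => ?_)
  · exact mul_mem (sub_mem (one_mem _) (pow_mem (sub_mem (one_mem _)
      (average_atomKernel_mem_trigPoly hρ M)) m)) (torusChar_mem_trigPoly p)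
  · rw [norm_mul, torusChar.norm_eq_one, mul_one]
    refine norm_sub_le_of_le norm_one.le ?_
    rw [norm_pow]
    refine pow_le_pow_left₀ (norm_nonneg _) ?_ m
    refine (norm_sub_le_of_le norm_one.le (norm_average_atomKernel_le_one M q)).trans_eq ?_
    exact one_add_one_eq_two
  · have hlim := tendsto_average_atomKernel hν (not_not.1 hq)
    exact (((hlim.const_sub 1).pow m).const_sub 1).mul_const _

theorem memClosedSpan_indicator_atoms (hν : ν specBoxᶜ = 0) {ρ : ℤ × ℤ → ℝ}
    (hρ : ∀ p, ∫ q, torusChar p q ∂ν = (ρ p : ℂ)) (p : ℤ × ℤ) :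
    MemClosedSpan ℝ (torusChar.toLp ν) ((atoms ν).indicator (torusChar p)) := by
  set w : ℝ × ℝ → ℝ := fun q => ν.real {q} / ν.real Set.univ
  have hw₀ (q) : 0 ≤ w q := by positivity
  have hw₁ (q) : w q ≤ 1 :=
    div_le_one_of_le₀ (measureReal_mono (Set.subset_univ _)) measureReal_nonneg
  refine MemClosedSpan.of_tendsto_of_bounded (C := 1)
    (memClosedSpan_one_sub_pow_mul_torusChar hν hρ p) (fun m q => ?_) (.of_forall fun q => ?_)
  · have hcast : 1 - (1 - (w q : ℂ)) ^ m = ((1 - (1 - w q) ^ m : ℝ) : ℂ) := by push_cast; rfl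
    have hnonneg : 0 ≤ (1 - w q) ^ m := pow_nonneg (by linarith [hw₁ q]) _
    have hle : (1 - w q) ^ m ≤ 1 := pow_le_one₀ (by linarith [hw₁ q]) (by linarith [hw₀ q])
    rw [norm_mul, torusChar.norm_eq_one, mul_one, hcast, Complex.norm_real,
      Real.norm_of_nonneg (by linarith)]
    linarith
  by_cases hq : q ∈ atoms ν
  · rw [Set.indicator_of_mem hq]
    have hatom : 0 < ν.real {q} := ENNReal.toReal_pos hq (measure_ne_top _ _)
    have hpos : 0 < w q := div_pos hatom (hatom.trans_le (measureReal_mono (Set.subset_univ _)))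
    have hpow : Tendsto (fun m => (1 - (w q : ℂ)) ^ m) atTop (nhds 0) := by
      refine tendsto_pow_atTop_nhds_zero_of_norm_lt_one ?_
      rw [← Complex.ofReal_one, ← Complex.ofReal_sub, Complex.norm_real,
        Real.norm_of_nonneg (by linarith [hw₁ q])]
      linarith
    simpa only [sub_zero, one_mul] using (hpow.const_sub 1).mul_const (torusChar p q)
  · have hzero : ν {q} = 0 := not_not.1 hq
    simp [Set.indicator_of_notMem hq, measureReal_def, hzero]

end Atoms

section RealSpectralPair

variable {ι α Ω : Type*} [MeasurableSpace α] [MeasurableSpace Ω] {μ : Measure α} {P : Measure Ω}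
  {e : ι → Lp ℂ 2 μ} {X : ι → Ω → ℝ} (hX : IsCenteredGaussian P X)
  (hgram : ∀ i j, inner ℂ (e i) (e j) = inner ℂ (hX.toLp i) (hX.toLp j))

include hgram

theorem MemClosedSpan.exists_real_isSpectralPair {g : α → ℂ} (h : MemClosedSpan ℝ e g) :
    ∃ Y : Ω → ℝ, Measurable Y ∧ IsSpectralPair ℝ e hX.toLp g fun ω => (Y ω : ℂ) := by
  obtain ⟨Y, hY, hpair⟩ := h.exists_isSpectralPair hgram
  exact ⟨fun ω => (Y ω).re, Complex.measurable_re.comp hY.measurable,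
    hpair.congr .rfl (hpair.ae_eq_ofReal_re hX.memLp_ofReal)⟩

theorem IsSpectralPair.map_sum_eq_gaussianReal [IsProbabilityMeasure P] {κ : Type*}
    {g : κ → α → ℂ} {Y : κ → Ω → ℝ}
    (h : ∀ k, IsSpectralPair ℝ e hX.toLp (g k) fun ω => (Y k ω : ℂ)) (s : Finset κ) (c : κ → ℝ) :
    P.map (fun ω => ∑ k ∈ s, c k * Y k ω) =
      gaussianReal 0 (∫ a, ‖∑ k ∈ s, c k • g k a‖ ^ 2 ∂μ).toNNReal := by
  refine IsSpectralPair.map_eq_gaussianReal (g := fun a => ∑ k ∈ s, c k • g k a) hX hgram ?_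
  have hsum := IsSpectralPair.sum s fun k _ => (h k).smul (c k)
  convert hsum using 1
  · ext a
    simp
  · ext ω
    simp

end RealSpectralPair

/-! ### The discrete part of a stationary Gaussian process -/

section Atoms

variable {μ νd : Measure (ℝ × ℝ)} {s : Set (ℝ × ℝ)}

theorem measure_compl_atoms_add (hs : s.Countable) (hνd : νd sᶜ = 0) :
    νd (atoms (μ + νd))ᶜ = 0 := by
  have hnull : νd (s ∩ (atoms (μ + νd))ᶜ) = 0 := by
    rw [← Set.biUnion_of_singleton (s ∩ _),
      measure_biUnion_null_iff (hs.mono Set.inter_subset_left)]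
    rintro q ⟨-, hq⟩
    have hq₀ : (μ + νd) {q} = 0 := not_not.1 hq
    rw [Measure.add_apply, add_eq_zero] at hq₀
    exact hq₀.2
  refine measure_mono_null (fun q hq => ?_) (measure_union_null hνd hnull)
  exact (em (q ∈ s)).symm.imp id fun h => ⟨h, hq⟩

variable [NullSingletonClass μ] [IsFiniteMeasure (μ + νd)]

theorem restrict_atoms_add (hs : s.Countable) (hνd : νd sᶜ = 0) :
    (μ + νd).restrict (atoms (μ + νd)) = νd := by
  rw [Measure.restrict_add, Measure.restrict_eq_zero.2 ((countable_atoms _).measure_zero μ),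
    zero_add, Measure.restrict_eq_self_of_ae_mem]
  exact measure_compl_atoms_add hs hνd

theorem restrict_compl_atoms_add (hs : s.Countable) (hνd : νd sᶜ = 0) :
    (μ + νd).restrict (atoms (μ + νd))ᶜ = μ := by
  rw [Measure.restrict_add, Measure.restrict_eq_zero.2 (measure_compl_atoms_add hs hνd), add_zero,
    Measure.restrict_eq_self_of_ae_mem]
  exact (countable_atoms _).ae_notMem μ

theorem exists_finset_measure_atoms_diff_le (ν : Measure (ℝ × ℝ)) [IsFiniteMeasure ν]
    {ε : ENNReal} (hε : 0 < ε) :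
    ∃ F : Finset (ℝ × ℝ), (F : Set (ℝ × ℝ)) ⊆ atoms ν ∧ ν (atoms ν \ F) ≤ ε := by
  classical
  have := (countable_atoms ν).to_subtype
  have hsum : ∑' a : atoms ν, ν {(a : ℝ × ℝ)} ≠ ⊤ := by
    rw [← measure_biUnion (countable_atoms ν) (fun a _ b _ => Set.disjoint_singleton.2)
      fun q _ => measurableSet_singleton q]
    exact measure_ne_top _ _
  obtain ⟨F, hF⟩ :=
    ((ENNReal.tendsto_tsum_compl_atTop_zero hsum).eventually (gt_mem_nhds hε)).exists
  refine ⟨F.map (.subtype _), by simp, (measure_mono fun q hq => ?_).trans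
    ((measure_iUnion_le fun b : {a // a ∉ F} => {((b : atoms ν) : ℝ × ℝ)}).trans hF.le)⟩
  obtain ⟨hq, hqF⟩ := hq
  refine Set.mem_iUnion.2 ⟨⟨⟨q, hq⟩, fun h => hqF ?_⟩, rfl⟩
  exact Finset.mem_map_of_mem (.subtype _) h

end Atoms

theorem tendsto_integral_torusChar_withDensity {f : ℝ × ℝ → ℝ} (hf : Measurable f)
    (hf₀ : ∀ q, 0 ≤ f q) {s : Set (ℝ × ℝ)} (hs : MeasurableSet s) :
    Tendsto (fun p => ∫ q, torusChar p q ∂(volume.restrict s).withDensity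
      fun q => ENNReal.ofReal (f q)) cofinite (nhds 0) := by
  let frequency : ℝ × ℝ →ₗ[ℝ] StrongDual ℝ (ℝ × ℝ) :=
    (LinearMap.fst ℝ ℝ ℝ).smulRight ((-1 / (2 * π)) • ContinuousLinearMap.fst ℝ ℝ ℝ) +
      (LinearMap.snd ℝ ℝ ℝ).smulRight ((-1 / (2 * π)) • ContinuousLinearMap.snd ℝ ℝ ℝ)
  have hinj : Function.Injective frequency := by
    refine (injective_iff_map_eq_zero _).2 fun p hp => ?_
    have h₁ := DFunLike.congr_fun hp (1, 0)
    have h₂ := DFunLike.congr_fun hp (0, 1)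
    simp only [frequency, LinearMap.add_apply] at h₁ h₂
    ext
    · simpa [pi_ne_zero] using h₁
    · simpa [pi_ne_zero] using h₂
  have hcast : Tendsto (fun p : ℤ × ℤ => ((p.1 : ℝ), (p.2 : ℝ))) cofinite (cocompact (ℝ × ℝ)) := by
    rw [← coprod_cofinite, ← coprod_cocompact]
    exact Int.tendsto_coe_cofinite.prodMap_coprod Int.tendsto_coe_cofinite
  have hfreq := (LinearMap.isClosedEmbedding_of_injective
    (LinearMap.ker_eq_bot.2 hinj)).tendsto_cocompact.comp hcast
  have hRL := (tendsto_integral_exp_smul_cocompact (s.indicator fun q => (f q : ℂ))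
    (volume : Measure (ℝ × ℝ))).comp hfreq
  refine hRL.congr fun p => ?_
  rw [integral_withDensity_eq_integral_toReal_smul (by fun_prop) (by simp), ← integral_indicator hs]
  refine integral_congr_ae (.of_forall fun q => ?_)
  have hchar : (Real.fourierChar (-frequency (p.1, p.2) q) : ℂ) = torusChar p q := by
    rw [Real.fourierChar_apply, torusChar, mul_comm]
    congr 3
    simp [frequency]
    field_simp
    ring
  by_cases hq : q ∈ s
  · simp only [Set.indicator_of_mem hq, ENNReal.toReal_ofReal (hf₀ q), Circle.smul_def, hchar,
      Function.comp_apply, Complex.real_smul, smul_eq_mul, mul_comm]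
  · simp only [Set.indicator_of_notMem hq, smul_zero, Function.comp_apply]

section Stationary

variable {Ω : Type*} [MeasurableSpace Ω] {P : Measure Ω} {X : ℤ → ℤ → Ω → ℝ}

theorem StatGauss.isCenteredGaussian (hX : StatGauss P X) :
    IsCenteredGaussian P fun p : ℤ × ℤ => X p.1 p.2 :=
  ⟨fun p => hX.meas p.1 p.2, hX.gauss⟩

variable {ν νd : Measure (ℝ × ℝ)} {f : ℝ × ℝ → ℝ}

namespace SpectralDecomp

variable (hν : SpectralDecomp P X ν νd f)

include hν

theorem restrict_atoms : ν.restrict (atoms ν) = νd := by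
  obtain ⟨s, hs, hνd⟩ := hν.discrete
  have := hν.finite
  rw [hν.decomp] at this ⊢
  exact restrict_atoms_add hs hνd

theorem restrict_compl_atoms : ν.restrict (atoms ν)ᶜ =
    (volume.restrict specBox).withDensity fun q => ENNReal.ofReal (f q) := by
  obtain ⟨s, hs, hνd⟩ := hν.discrete
  have := hν.finite
  rw [hν.decomp] at this ⊢
  exact restrict_compl_atoms_add hs hνd

theorem inner_toLp_torusChar_eq [IsFiniteMeasure ν] (hX : StatGauss P X) (p q : ℤ × ℤ) :
    inner ℂ (torusChar.toLp ν p) (torusChar.toLp ν q) =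
      inner ℂ (hX.isCenteredGaussian.toLp p) (hX.isCenteredGaussian.toLp q) := by
  have hstat := hX.stat p.1 p.2 (q - p).1 (q - p).2
  simp only [Prod.fst_sub, Prod.snd_sub, add_sub_cancel] at hstat
  rw [torusChar.toLp, torusChar.toLp, IsCenteredGaussian.toLp, IsCenteredGaussian.toLp,
    ← integral_inner_eq_inner_toLp, ← integral_inner_eq_inner_toLp]
  calc ∫ a, inner ℂ (torusChar p a) (torusChar q a) ∂ν
      = ∫ a, torusChar (q - p) a ∂ν := by
        refine integral_congr_ae (.of_forall fun a => ?_)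
        simp only [sub_eq_add_neg, torusChar.add, Pi.mul_apply, torusChar.neg]
        rfl
    _ = ((∫ ω, X p.1 p.2 ω * X q.1 q.2 ω ∂P : ℝ) : ℂ) := by
        rw [hstat]
        exact hν.herglotz _ _
    _ = ∫ ω, inner ℂ (X p.1 p.2 ω : ℂ) (X q.1 q.2 ω : ℂ) ∂P := by
        rw [← integral_complex_ofReal]
        simp [mul_comm]

end SpectralDecomp

end Stationary

/-- The part `Xd` of the stationary process `X` carried by the discrete part `νd` of its spectral
measure: `X - Xd` has asymptotically vanishing covariances, while `Xd` is approximated, uniformly in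
`p`, by finitely many random multiples `Z a` of the characters at the atoms of `νd`. -/
structure IsDiscretePart {Ω : Type*} [MeasurableSpace Ω] (P : Measure Ω) (X Xd : ℤ → ℤ → Ω → ℝ)
    (νd : Measure (ℝ × ℝ)) : Prop where
  meas : ∀ j k, Measurable (Xd j k)
  map_sum : ∀ c : ℤ × ℤ →₀ ℝ, P.map (fun ω => ∑ p ∈ c.support, c p * Xd p.1 p.2 ω) =
    gaussianReal 0 (∫ q, ‖∑ p ∈ c.support, c p • torusChar p q‖ ^ 2 ∂νd).toNNReal
  gauss_sub : IsCenteredGaussian P fun (p : ℤ × ℤ) ω => X p.1 p.2 ω - Xd p.1 p.2 ω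
  cov_sub : ∃ r : ℤ × ℤ → ℝ, Tendsto r cofinite (nhds 0) ∧ ∀ p q : ℤ × ℤ,
    ∫ ω, (X p.1 p.2 ω - Xd p.1 p.2 ω) * (X q.1 q.2 ω - Xd q.1 q.2 ω) ∂P = r (q - p)
  approx : ∀ ε > 0, ∃ (F : Finset (ℝ × ℝ)) (Z : ℝ × ℝ → Ω → ℂ),
    (∀ a ∈ F, Measurable (Z a)) ∧ (∀ a ∈ F, MemLp (Z a) 2 P) ∧ ∀ p : ℤ × ℤ,
      ∫ ω, ‖(Xd p.1 p.2 ω : ℂ) - ∑ a ∈ F, torusChar p a * Z a ω‖ ^ 2 ∂P ≤ ε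

namespace SpectralDecomp

variable {Ω : Type*} [MeasurableSpace Ω] {P : Measure Ω} {X Xd : ℤ → ℤ → Ω → ℝ}
  {ν νd : Measure (ℝ × ℝ)} {f : ℝ × ℝ → ℝ}
  (hν : SpectralDecomp P X ν νd f) (hX : StatGauss P X)

section DiscretePart

variable [IsFiniteMeasure ν]

section

include hν

theorem exists_isSpectralPair_indicator_atoms (p : ℤ × ℤ) :
    ∃ Y : Ω → ℝ, Measurable Y ∧ IsSpectralPair ℝ (torusChar.toLp ν) hX.isCenteredGaussian.toLp
      ((atoms ν).indicator (torusChar p)) fun ω => (Y ω : ℂ) :=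
  (memClosedSpan_indicator_atoms hν.support (fun p => hν.herglotz p.1 p.2)
    p).exists_real_isSpectralPair hX.isCenteredGaussian (hν.inner_toLp_torusChar_eq hX)

theorem exists_isSpectralPair_indicator_singleton {a : ℝ × ℝ} (ha : a ∈ atoms ν) :
    ∃ Y, Measurable Y ∧ IsSpectralPair ℂ (torusChar.toLp ν) hX.isCenteredGaussian.toLp
      (({a} : Set (ℝ × ℝ)).indicator 1) Y := by
  have hbox : a ∈ specBox := by
    by_contra hbox
    exact ha (measure_mono_null (Set.singleton_subset_iff.2 hbox) hν.support)
  obtain ⟨Y, hY, hpair⟩ := (memClosedSpan_indicator_singleton hν.support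
    hbox).exists_isSpectralPair (hν.inner_toLp_torusChar_eq hX)
  exact ⟨Y, hY.measurable, hpair⟩

end

variable (hXd : ∀ p : ℤ × ℤ, IsSpectralPair ℝ (torusChar.toLp ν) hX.isCenteredGaussian.toLp
  ((atoms ν).indicator (torusChar p)) fun ω => (Xd p.1 p.2 ω : ℂ))

include hXd

theorem isSpectralPair_sub (p : ℤ × ℤ) :
    IsSpectralPair ℝ (torusChar.toLp ν) hX.isCenteredGaussian.toLp
      ((atoms ν)ᶜ.indicator (torusChar p)) fun ω => ((X p.1 p.2 ω - Xd p.1 p.2 ω : ℝ) : ℂ) := by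
  have hgen : IsSpectralPair ℝ (torusChar.toLp ν) hX.isCenteredGaussian.toLp (torusChar p)
      fun ω => (X p.1 p.2 ω : ℂ) :=
    .generator (torusChar.memLp ν) (fun p => hX.isCenteredGaussian.memLp_ofReal p) p
  refine (hgen.sub (hXd p)).congr (.of_eq ?_) (.of_eq ?_)
  · rw [Set.indicator_compl]
  · ext ω
    simp

include hν

theorem map_sum_discretePart_eq [IsProbabilityMeasure P] (c : ℤ × ℤ →₀ ℝ) :
    P.map (fun ω => ∑ p ∈ c.support, c p * Xd p.1 p.2 ω) =
      gaussianReal 0 (∫ q, ‖∑ p ∈ c.support, c p • torusChar p q‖ ^ 2 ∂νd).toNNReal := by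
  rw [IsSpectralPair.map_sum_eq_gaussianReal hX.isCenteredGaussian (hν.inner_toLp_torusChar_eq hX)
    hXd c.support c, ← hν.restrict_atoms, ← integral_indicator (countable_atoms ν).measurableSet]
  congr with q
  by_cases hq : q ∈ atoms ν <;> simp [hq]

theorem isCenteredGaussian_sub [IsProbabilityMeasure P] (hmeas : ∀ j k, Measurable (Xd j k)) :
    IsCenteredGaussian P fun (p : ℤ × ℤ) ω => X p.1 p.2 ω - Xd p.1 p.2 ω where
  meas p := (hX.meas p.1 p.2).sub (hmeas p.1 p.2)
  gauss c := ⟨_, IsSpectralPair.map_sum_eq_gaussianReal hX.isCenteredGaussian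
    (hν.inner_toLp_torusChar_eq hX) (isSpectralPair_sub hX hXd) c.support c⟩

theorem integral_sub_mul_sub_eq (p q : ℤ × ℤ) :
    ∫ ω, (X p.1 p.2 ω - Xd p.1 p.2 ω) * (X q.1 q.2 ω - Xd q.1 q.2 ω) ∂P =
      (∫ a, torusChar (q - p) a ∂(volume.restrict specBox).withDensity
        fun a => ENNReal.ofReal (f a)).re := by
  have hinner := IsSpectralPair.integral_inner_eq (hν.inner_toLp_torusChar_eq hX)
    (isSpectralPair_sub hX hXd p).toComplex (isSpectralPair_sub hX hXd q).toComplex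
  rw [← Complex.ofReal_re (∫ ω, _ ∂P), ← integral_complex_ofReal]
  congr 1
  calc _ = ∫ ω, inner ℂ ((X p.1 p.2 ω - Xd p.1 p.2 ω : ℝ) : ℂ)
        ((X q.1 q.2 ω - Xd q.1 q.2 ω : ℝ) : ℂ) ∂P := by simp [mul_comm]
    _ = ∫ a, (atoms ν)ᶜ.indicator (torusChar (q - p)) a ∂ν := by
        rw [← hinner]
        refine integral_congr_ae (.of_forall fun a => ?_)
        by_cases ha : a ∈ (atoms ν)ᶜ
        · simp only [Set.indicator_of_mem ha, sub_eq_add_neg, torusChar.add, Pi.mul_apply,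
            torusChar.neg]
          rfl
        · simp only [Set.indicator_of_notMem ha, inner_zero_left]
    _ = _ := by
        rw [integral_indicator (countable_atoms ν).measurableSet.compl, hν.restrict_compl_atoms]

theorem exists_approx_discretePart {ε : ℝ} (hε : 0 < ε) :
    ∃ (F : Finset (ℝ × ℝ)) (Z : ℝ × ℝ → Ω → ℂ),
      (∀ a ∈ F, Measurable (Z a)) ∧ (∀ a ∈ F, MemLp (Z a) 2 P) ∧ ∀ p : ℤ × ℤ,
        ∫ ω, ‖(Xd p.1 p.2 ω : ℂ) - ∑ a ∈ F, torusChar p a * Z a ω‖ ^ 2 ∂P ≤ ε := by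
  obtain ⟨F, hF, hνF⟩ := exists_finset_measure_atoms_diff_le ν (ENNReal.ofReal_pos.2 hε)
  choose! Z hZ hpair using fun a (ha : a ∈ atoms ν) =>
    hν.exists_isSpectralPair_indicator_singleton hX ha
  refine ⟨F, Z, fun a ha => hZ a (hF ha), fun a ha => (hpair a (hF ha)).2.1, fun p => ?_⟩
  have hdiff := ((hXd p).toComplex.sub <| IsSpectralPair.sum F fun a ha =>
    (hpair a (hF ha)).smul (torusChar p a)).integral_norm_sq_eq (hν.inner_toLp_torusChar_eq hX)
  simp only [Pi.sub_apply, Finset.sum_apply, Pi.smul_apply, smul_eq_mul] at hdiff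
  rw [← hdiff]
  refine (le_of_eq ?_).trans (ENNReal.toReal_le_of_le_ofReal hε.le hνF)
  rw [← measureReal_def, ← integral_indicator_one
    ((countable_atoms ν).measurableSet.diff F.measurableSet)]
  refine integral_congr_ae (.of_forall fun q => ?_)
  have hsum : ∑ a ∈ F, torusChar p a * ({a} : Set (ℝ × ℝ)).indicator 1 q =
      (F : Set (ℝ × ℝ)).indicator (torusChar p) q := by
    classical
    simp [Set.indicator_apply]
  simp only [hsum]
  by_cases hq : q ∈ (F : Set (ℝ × ℝ))
  · simp [hq, hF hq]
  · by_cases hq' : q ∈ atoms ν <;> simp [hq, hq', torusChar.norm_eq_one]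

end DiscretePart

include hν hX

theorem exists_isDiscretePart [IsProbabilityMeasure P] : ∃ Xd, IsDiscretePart P X Xd νd := by
  have := hν.finite
  choose Xd hmeas hpair using fun j k => hν.exists_isSpectralPair_indicator_atoms hX (j, k)
  have hXd (p : ℤ × ℤ) := hpair p.1 p.2
  exact ⟨Xd,
    { meas := hmeas
      map_sum := hν.map_sum_discretePart_eq hX hXd
      gauss_sub := hν.isCenteredGaussian_sub hX hXd hmeas
      cov_sub := ⟨_, (Complex.continuous_re.tendsto _).comp (tendsto_integral_torusChar_withDensity
        hν.f_meas hν.f_nonneg (measurableSet_Ioc.prod measurableSet_Ioc)),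
        hν.integral_sub_mul_sub_eq hX hXd⟩
      approx _ hε := hν.exists_approx_discretePart hX hXd hε }⟩

end SpectralDecomp

/-! ### Fourth moments of Gaussian families -/

section FourthMoment

open Polynomial

theorem deriv_eval_mul_exp (v : ℝ) (p : ℝ[X]) :
    deriv (fun t => p.eval t * rexp (v * t ^ 2 / 2)) =
      fun t => (derivative p + C v * X * p).eval t * rexp (v * t ^ 2 / 2) := by
  funext t
  have hexp :
      HasDerivAt (fun t : ℝ => rexp (v * t ^ 2 / 2)) (rexp (v * t ^ 2 / 2) * (v * t)) t := by
    convert (((hasDerivAt_pow 2 t).const_mul v).div_const 2).exp using 1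
    norm_num
    ring
  refine ((p.hasDerivAt t).mul hexp).deriv.trans ?_
  simp only [eval_add, eval_mul, eval_C, eval_X]
  ring

theorem integral_pow_four_gaussianReal (v : NNReal) :
    ∫ x, x ^ 4 ∂gaussianReal 0 v = 3 * (v : ℝ) ^ 2 := by
  have hmoment := iteratedDeriv_mgf_zero (X := fun x => x) (μ := gaussianReal 0 v) (by simp) 4
  have hmgf : mgf (fun x => x) (gaussianReal 0 v) =
      fun t => (1 : ℝ[X]).eval t * rexp (v * t ^ 2 / 2) := by
    rw [mgf_fun_id_gaussianReal]
    simp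
  simp only [Pi.pow_apply] at hmoment
  rw [← hmoment, hmgf]
  simp only [iteratedDeriv_succ', iteratedDeriv_zero, deriv_eval_mul_exp]
  simp
  ring

end FourthMoment

section Isserlis

variable {Ω : Type*} [MeasurableSpace Ω] {P : Measure Ω}

theorem integral_pow_four_of_map_eq_gaussianReal {Y : Ω → ℝ} {v : NNReal} (hY : AEMeasurable Y P)
    (h : P.map Y = gaussianReal 0 v) : ∫ ω, Y ω ^ 4 ∂P = 3 * (∫ ω, Y ω ^ 2 ∂P) ^ 2 := by
  rw [integral_sq_of_map_eq_gaussianReal hY h, ← integral_pow_four_gaussianReal, ← h,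
    integral_map hY (by fun_prop)]

theorem integrable_pow_four_of_map_eq_gaussianReal {Y : Ω → ℝ} {v : NNReal}
    (hY : AEMeasurable Y P) (h : P.map Y = gaussianReal 0 v) :
    Integrable (fun ω => Y ω ^ 4) P := by
  refine ((memLp_of_map_eq_gaussianReal hY h 4).integrable_norm_pow (by norm_num)).congr
    (.of_forall fun ω => ?_)
  exact Even.pow_abs (by decide) _

/-- The sign vectors of length four with first entry `1`, used for polarization. -/
def signVector (s : Fin 2 × Fin 2 × Fin 2) : Fin 4 → ℝ :=
  ![1, (-1) ^ (s.1 : ℕ), (-1) ^ (s.2.1 : ℕ), (-1) ^ (s.2.2 : ℕ)]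

theorem sum_signVector_mul_pow_four (y : Fin 4 → ℝ) :
    ∑ s, (∏ i, signVector s i) * (∑ i, signVector s i * y i) ^ 4 =
      192 * (y 0 * y 1 * (y 2 * y 3)) := by
  simp only [Fintype.sum_prod_type, Fin.sum_univ_two, Fin.sum_univ_four, Fin.prod_univ_four,
    signVector, Matrix.cons_val]
  norm_num
  ring

namespace IsCenteredGaussian

variable {ι : Type*} {X : ι → Ω → ℝ} (hX : IsCenteredGaussian P X)

include hX

theorem exists_map_sum_comp_eq_gaussianReal {κ : Type*} [Fintype κ] (q : κ → ι) (c : κ → ℝ) :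
    ∃ v, P.map (fun ω => ∑ k, c k * X (q k) ω) = gaussianReal 0 v := by
  obtain ⟨v, hv⟩ := hX.gauss (∑ k, Finsupp.single (q k) (c k))
  refine ⟨v, hv ▸ congrArg (P.map ·) (funext fun ω => ?_)⟩
  change _ = (∑ k, Finsupp.single (q k) (c k)).sum fun i x => x * X i ω
  rw [← Finsupp.sum_finsetSum_index (by simp) (by intros; ring)]
  simp

theorem integrable_mul (i j : ι) : Integrable (fun ω => X i ω * X j ω) P :=
  MemLp.integrable_mul (p := 2) (q := 2) (hX.memLp i 2) (hX.memLp j 2)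

theorem integral_sum_comp_sq {κ : Type*} [Fintype κ] (q : κ → ι) (c : κ → ℝ) :
    ∫ ω, (∑ k, c k * X (q k) ω) ^ 2 ∂P =
      ∑ k, ∑ l, c k * c l * ∫ ω, X (q k) ω * X (q l) ω ∂P := by
  have hint (k l) : Integrable (fun ω => c k * c l * (X (q k) ω * X (q l) ω)) P :=
    (hX.integrable_mul _ _).const_mul _
  have hexpand (ω) : (∑ k, c k * X (q k) ω) ^ 2 =
      ∑ k, ∑ l, c k * c l * (X (q k) ω * X (q l) ω) := by
    simp only [sq, Finset.sum_mul_sum, mul_mul_mul_comm]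
  simp only [hexpand]
  rw [integral_finsetSum _ fun k _ => integrable_finsetSum _ fun l _ => hint k l]
  refine Finset.sum_congr rfl fun k _ => ?_
  rw [integral_finsetSum _ fun l _ => hint k l]
  exact Finset.sum_congr rfl fun l _ => integral_const_mul _ _

theorem integrable_sum_comp_pow_four {κ : Type*} [Fintype κ] (q : κ → ι) (c : κ → ℝ) :
    Integrable (fun ω => (∑ k, c k * X (q k) ω) ^ 4) P := by
  have := hX.meas
  obtain ⟨v, hv⟩ := hX.exists_map_sum_comp_eq_gaussianReal q c
  exact integrable_pow_four_of_map_eq_gaussianReal (by fun_prop) hv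

theorem integral_sum_comp_pow_four {κ : Type*} [Fintype κ] (q : κ → ι) (c : κ → ℝ) :
    ∫ ω, (∑ k, c k * X (q k) ω) ^ 4 ∂P =
      3 * (∑ k, ∑ l, c k * c l * ∫ ω, X (q k) ω * X (q l) ω ∂P) ^ 2 := by
  have := hX.meas
  obtain ⟨v, hv⟩ := hX.exists_map_sum_comp_eq_gaussianReal q c
  rw [integral_pow_four_of_map_eq_gaussianReal (by fun_prop) hv, hX.integral_sum_comp_sq]

theorem integrable_mul_mul_mul (q : Fin 4 → ι) :
    Integrable (fun ω => X (q 0) ω * X (q 1) ω * (X (q 2) ω * X (q 3) ω)) P := by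
  refine (integrable_const_mul_iff (c := (192 : ℝ)) (by norm_num) _).1 ?_
  have hpolar (ω) := sum_signVector_mul_pow_four fun i => X (q i) ω
  simp only [← hpolar]
  exact integrable_finsetSum _ fun s _ => (hX.integrable_sum_comp_pow_four q _).const_mul _

theorem integral_mul_mul_mul (q : Fin 4 → ι) :
    ∫ ω, X (q 0) ω * X (q 1) ω * (X (q 2) ω * X (q 3) ω) ∂P =
      (∫ ω, X (q 0) ω * X (q 1) ω ∂P) * (∫ ω, X (q 2) ω * X (q 3) ω ∂P) +
      (∫ ω, X (q 0) ω * X (q 2) ω ∂P) * (∫ ω, X (q 1) ω * X (q 3) ω ∂P) +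
      (∫ ω, X (q 0) ω * X (q 3) ω ∂P) * (∫ ω, X (q 1) ω * X (q 2) ω ∂P) := by
  refine mul_left_cancel₀ (show (192 : ℝ) ≠ 0 by norm_num) ?_
  rw [← integral_const_mul]
  have hpolar (ω) := sum_signVector_mul_pow_four fun i => X (q i) ω
  simp only [← hpolar]
  rw [integral_finsetSum _ fun s _ => (hX.integrable_sum_comp_pow_four q _).const_mul _]
  simp only [integral_const_mul, hX.integral_sum_comp_pow_four]
  have hsymm (i j) : ∫ ω, X (q i) ω * X (q j) ω ∂P = ∫ ω, X (q j) ω * X (q i) ω ∂P := by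
    simp only [mul_comm]
  simp only [Fintype.sum_prod_type, Fin.sum_univ_two, Fin.sum_univ_four, Fin.prod_univ_four,
    signVector, Matrix.cons_val]
  rw [hsymm 1 0, hsymm 2 0, hsymm 3 0, hsymm 2 1, hsymm 3 1, hsymm 3 2]
  norm_num
  ring

end IsCenteredGaussian

end Isserlis

/-! ### Matrices of decorrelating Gaussian families -/

section Average

variable {G : Type*} [AddGroup G] {κ : Type*} [Fintype κ]

theorem abs_sum_sum_sub_le {h : G → ℝ} {η : ℝ} {U : Finset G} (hU : ∀ g ∉ U, |h g| ≤ η)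
    (hη : 0 ≤ η) {f : κ → G} (hf : Function.Injective f) :
    |∑ i, ∑ k, h (f k - f i)| ≤
      Fintype.card κ * ∑ g ∈ U, |h g| + η * (Fintype.card κ : ℝ) ^ 2 := by
  classical
  have hrow (i) : |∑ k, h (f k - f i)| ≤ ∑ g ∈ U, |h g| + η * Fintype.card κ := by
    calc |∑ k, h (f k - f i)| ≤ ∑ k, |h (f k - f i)| := Finset.abs_sum_le_sum_abs _ _
      _ ≤ ∑ k, ((if f k - f i ∈ U then |h (f k - f i)| else 0) + η) := by
          gcongr with k
          split_ifs with hk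
          · exact le_add_of_nonneg_right hη
          · simpa using hU _ hk
      _ = ∑ g ∈ (Finset.univ.filter fun k => f k - f i ∈ U).image (f · - f i), |h g|
            + η * Fintype.card κ := by
          rw [Finset.sum_image fun k _ l _ hkl => hf (sub_left_injective hkl), Finset.sum_filter,
            Finset.sum_add_distrib]
          simp [mul_comm]
      _ ≤ ∑ g ∈ U, |h g| + η * Fintype.card κ := by
          gcongr
          intro g hg
          obtain ⟨k, hk, rfl⟩ := Finset.mem_image.1 hg
          exact (Finset.mem_filter.1 hk).2
  calc |∑ i, ∑ k, h (f k - f i)| ≤ ∑ i, |∑ k, h (f k - f i)| := Finset.abs_sum_le_sum_abs _ _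
    _ ≤ ∑ _i : κ, (∑ g ∈ U, |h g| + η * Fintype.card κ) := Finset.sum_le_sum fun i _ => hrow i
    _ = Fintype.card κ * ∑ g ∈ U, |h g| + η * (Fintype.card κ : ℝ) ^ 2 := by
        simp only [Finset.sum_const, Finset.card_univ, nsmul_eq_mul]
        ring

theorem tendsto_average_sub {κ : ℕ → Type*} [∀ N, Fintype (κ N)]
    (hκ : Tendsto (fun N => Fintype.card (κ N)) atTop atTop) {f : ∀ N, κ N → G}
    (hf : ∀ N, Function.Injective (f N)) {h : G → ℝ} (hh : Tendsto h cofinite (nhds 0)) :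
    Tendsto (fun N => (∑ i, ∑ k, h (f N k - f N i)) / (Fintype.card (κ N) : ℝ) ^ 2) atTop
      (nhds 0) := by
  refine Metric.tendsto_nhds.2 fun ε hε => ?_
  have hfin : {g | ¬ dist (h g) 0 < ε / 2}.Finite :=
    eventually_cofinite.1 (Metric.tendsto_nhds.1 hh _ (half_pos hε))
  have hU : ∀ g ∉ hfin.toFinset, |h g| ≤ ε / 2 := fun g hg => by
    have : dist (h g) 0 < ε / 2 := by simpa using hg
    simpa [Real.dist_eq] using this.le
  have hlarge : Tendsto (fun N => ε / 2 * (Fintype.card (κ N) : ℝ)) atTop atTop :=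
    (tendsto_natCast_atTop_atTop.comp hκ).const_mul_atTop (half_pos hε)
  filter_upwards [hlarge.eventually_gt_atTop (∑ g ∈ hfin.toFinset, |h g|), hκ.eventually_gt_atTop 0]
    with N hN hpos
  have : (0 : ℝ) < Fintype.card (κ N) := by exact_mod_cast hpos
  rw [dist_zero_right, norm_div, Real.norm_eq_abs, norm_pow, RCLike.norm_natCast,
    div_lt_iff₀ (by positivity)]
  calc |∑ i, ∑ k, h (f N k - f N i)|
      ≤ Fintype.card (κ N) * ∑ g ∈ hfin.toFinset, |h g|
          + ε / 2 * (Fintype.card (κ N) : ℝ) ^ 2 := abs_sum_sum_sub_le hU (half_pos hε).le (hf N)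
    _ < Fintype.card (κ N) * (ε / 2 * Fintype.card (κ N))
          + ε / 2 * (Fintype.card (κ N) : ℝ) ^ 2 := by gcongr
    _ = ε * (Fintype.card (κ N) : ℝ) ^ 2 := by ring

end Average

section Corner

open scoped Matrix.Norms.Frobenius Matrix

/-- The `N × N` corner of an infinite array. The rows and columns start at index `1`, as in
`scaledW1`. -/
def corner {R : Type*} (x : ℤ → ℤ → R) (N : ℕ) : Matrix (Fin N) (Fin N) R :=
  Matrix.of fun i j => x ((i : ℕ) + 1) ((j : ℕ) + 1)

theorem frobenius_norm_mul_transpose_sq {n : Type*} [Fintype n] (Y : Matrix n n ℝ) :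
    ‖Y * Yᵀ‖ ^ 2 = ∑ i, ∑ k, ∑ j, ∑ l, Y i j * Y k j * (Y i l * Y k l) := by
  rw [frobenius_norm_sq_eq_sum]
  simp only [Real.norm_eq_abs, sq_abs]
  simp only [sq, Matrix.mul_apply, Finset.sum_mul_sum, Matrix.transpose_apply]

variable {Ω : Type*} [MeasurableSpace Ω] {P : Measure Ω} {Y : ℤ → ℤ → Ω → ℝ}

theorem integrable_mul_mul_mul_rectangle (hY : IsCenteredGaussian P fun (p : ℤ × ℤ) => Y p.1 p.2)
    (i k j l : ℤ) : Integrable (fun ω => Y i j ω * Y k j ω * (Y i l ω * Y k l ω)) P :=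
  hY.integrable_mul_mul_mul ![(i, j), (k, j), (i, l), (k, l)]

theorem integral_mul_mul_mul_rectangle (hY : IsCenteredGaussian P fun (p : ℤ × ℤ) => Y p.1 p.2)
    {r : ℤ × ℤ → ℝ} (hr : ∀ p q : ℤ × ℤ, ∫ ω, Y p.1 p.2 ω * Y q.1 q.2 ω ∂P = r (q - p))
    (i k j l : ℤ) :
    ∫ ω, Y i j ω * Y k j ω * (Y i l ω * Y k l ω) ∂P =
      r (k - i, 0) ^ 2 + r (0, l - j) ^ 2 + r (k - i, l - j) * r (i - k, l - j) := by
  have hcov (i j k l) : ∫ ω, Y i j ω * Y k l ω ∂P = r (k - i, l - j) := hr (i, j) (k, l)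
  have h := hY.integral_mul_mul_mul ![(i, j), (k, j), (i, l), (k, l)]
  simp only [Matrix.cons_val, hcov, sub_self] at h
  rw [h, sq, sq]

theorem integrable_frobenius_norm_corner_mul_transpose_sq
    (hY : IsCenteredGaussian P fun (p : ℤ × ℤ) => Y p.1 p.2) (N : ℕ) :
    Integrable (fun ω => ‖corner (Y · · ω) N * (corner (Y · · ω) N)ᵀ‖ ^ 2) P := by
  simp only [frobenius_norm_mul_transpose_sq]
  exact integrable_finsetSum _ fun i _ => integrable_finsetSum _ fun k _ =>
    integrable_finsetSum _ fun j _ => integrable_finsetSum _ fun l _ =>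
      integrable_mul_mul_mul_rectangle hY _ _ _ _

theorem integral_frobenius_norm_corner_mul_transpose_sq
    (hY : IsCenteredGaussian P fun (p : ℤ × ℤ) => Y p.1 p.2) {r : ℤ × ℤ → ℝ}
    (hr : ∀ p q : ℤ × ℤ, ∫ ω, Y p.1 p.2 ω * Y q.1 q.2 ω ∂P = r (q - p)) (N : ℕ) :
    ∫ ω, ‖corner (Y · · ω) N * (corner (Y · · ω) N)ᵀ‖ ^ 2 ∂P =
      ∑ i : Fin N, ∑ k : Fin N, ∑ j : Fin N, ∑ l : Fin N, (r ((k : ℤ) - i, 0) ^ 2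
        + r (0, (l : ℤ) - j) ^ 2
        + r ((k : ℤ) - i, (l : ℤ) - j) * r ((i : ℤ) - k, (l : ℤ) - j)) := by
  have hint (i k j l : ℤ) := integrable_mul_mul_mul_rectangle hY i k j l
  simp only [frobenius_norm_mul_transpose_sq, corner, Matrix.of_apply]
  rw [integral_finsetSum _ fun i _ => integrable_finsetSum _ fun k _ =>
    integrable_finsetSum _ fun j _ => integrable_finsetSum _ fun l _ => hint _ _ _ _]
  refine Finset.sum_congr rfl fun i _ => ?_
  rw [integral_finsetSum _ fun k _ => integrable_finsetSum _ fun j _ =>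
    integrable_finsetSum _ fun l _ => hint _ _ _ _]
  refine Finset.sum_congr rfl fun k _ => ?_
  rw [integral_finsetSum _ fun j _ => integrable_finsetSum _ fun l _ => hint _ _ _ _]
  refine Finset.sum_congr rfl fun j _ => ?_
  rw [integral_finsetSum _ fun l _ => hint _ _ _ _]
  refine Finset.sum_congr rfl fun l _ => ?_
  simp only [integral_mul_mul_mul_rectangle hY hr, add_sub_add_right_eq_sub]

theorem tendsto_integral_frobenius_norm_corner_mul_transpose_sq
    (hY : IsCenteredGaussian P fun (p : ℤ × ℤ) => Y p.1 p.2) {r : ℤ × ℤ → ℝ}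
    (hr : ∀ p q : ℤ × ℤ, ∫ ω, Y p.1 p.2 ω * Y q.1 q.2 ω ∂P = r (q - p))
    (hr0 : Tendsto r cofinite (nhds 0)) :
    Tendsto (fun N : ℕ => (∫ ω, ‖corner (Y · · ω) N * (corner (Y · · ω) N)ᵀ‖ ^ 2 ∂P) /
      (N : ℝ) ^ 4) atTop (nhds 0) := by
  have hfst : Tendsto (fun a => r (a, 0) ^ 2) cofinite (nhds 0) := by
    simpa using (hr0.comp (Prod.mk_left_injective 0).tendsto_cofinite).pow 2
  have hsnd : Tendsto (fun b => r (0, b) ^ 2) cofinite (nhds 0) := by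
    simpa using (hr0.comp (Prod.mk_right_injective 0).tendsto_cofinite).pow 2
  have hmixed : Tendsto (fun p : ℤ × ℤ => r p * r (-p.1, p.2)) cofinite (nhds 0) := by
    have hinj : Function.Injective fun p : ℤ × ℤ => (-p.1, p.2) :=
      neg_injective.prodMap Function.injective_id
    simpa using hr0.mul (hr0.comp hinj.tendsto_cofinite)
  have hcard : Tendsto (fun N => Fintype.card (Fin N)) atTop atTop :=
    tendsto_id.congr fun N => (Fintype.card_fin N).symm
  have hcard₂ : Tendsto (fun N => Fintype.card (Fin N × Fin N)) atTop atTop := by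
    simpa only [Fintype.card_prod] using hcard.atTop_mul_atTop₀ hcard
  have hcast (N : ℕ) : Function.Injective fun i : Fin N => (i : ℤ) :=
    Nat.cast_injective.comp Fin.val_injective
  have hlim := ((tendsto_average_sub hcard hcast hfst).add
    (tendsto_average_sub hcard hcast hsnd)).add
    (tendsto_average_sub hcard₂ (fun N => (hcast N).prodMap (hcast N)) hmixed)
  simp only [add_zero] at hlim
  refine hlim.congr' ?_
  filter_upwards [eventually_gt_atTop 0] with N hN
  have : (N : ℝ) ≠ 0 := by positivity
  simp only [integral_frobenius_norm_corner_mul_transpose_sq hY hr, Finset.sum_add_distrib,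
    Finset.sum_const, Finset.card_univ, Fintype.card_prod, Fintype.card_fin, nsmul_eq_mul,
    ← Finset.mul_sum, Fintype.sum_prod_type, Prod.map_apply, Prod.mk_sub_mk, neg_sub, Nat.cast_mul]
  rw [Finset.sum_congr rfl fun i _ => Finset.sum_comm]
  field_simp

end Corner

/-! ### Comparison of traces -/

section ScaledSymm

open scoped Matrix.Norms.Frobenius Matrix

variable {𝕜 : Type*} [RCLike 𝕜]

/-- The scaled symmetrised corner `N⁻¹ (x + xᵀ)` of an infinite array with entries in `ℝ` or `ℂ`,
extending `scaledW1` to complex arrays. -/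
def scaledSymm (x : ℤ → ℤ → 𝕜) (N : ℕ) : Matrix (Fin N) (Fin N) 𝕜 :=
  (N : 𝕜)⁻¹ • (corner x N + (corner x N)ᵀ)

theorem scaledW1_eq_scaledSymm {Ω : Type*} (X : ℤ → ℤ → Ω → ℝ) (N : ℕ) (ω : Ω) :
    scaledW1 X N ω = scaledSymm (X · · ω) N := rfl

theorem scaledSymm_sub (x y : ℤ → ℤ → 𝕜) (N : ℕ) :
    scaledSymm (fun j k => x j k - y j k) N = scaledSymm x N - scaledSymm y N := by
  ext i j
  simp only [scaledSymm, corner, Matrix.smul_apply, Matrix.add_apply, Matrix.sub_apply,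
    Matrix.transpose_apply, Matrix.of_apply, smul_eq_mul]
  ring

theorem isHermitian_scaledSymm (x : ℤ → ℤ → ℝ) (N : ℕ) : (scaledSymm x N).IsHermitian := by
  ext i j
  simp [scaledSymm, mul_add, add_comm]

theorem trace_scaledSymm_ofReal_pow (x : ℤ → ℤ → ℝ) (N k : ℕ) :
    (scaledSymm (fun i j => (x i j : ℂ)) N ^ k).trace = ((scaledSymm x N ^ k).trace : ℝ) := by
  have hmap : scaledSymm (fun i j => (x i j : ℂ)) N =
      Complex.ofRealHom.mapMatrix (scaledSymm x N) := by
    ext i j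
    simp [scaledSymm, corner, mul_add]
  rw [hmap, ← map_pow]
  simp [Matrix.trace]

theorem frobenius_norm_scaledSymm_sq_le (x : ℤ → ℤ → 𝕜) (N : ℕ) :
    ‖scaledSymm x N‖ ^ 2 ≤ 4 * (N : ℝ)⁻¹ ^ 2 * ∑ i : Fin N, ∑ j : Fin N,
      ‖x ((i : ℕ) + 1) ((j : ℕ) + 1)‖ ^ 2 := by
  calc ‖scaledSymm x N‖ ^ 2 = ((N : ℝ)⁻¹ * ‖corner x N + (corner x N)ᵀ‖) ^ 2 := by
        rw [scaledSymm, norm_smul, norm_inv, RCLike.norm_natCast]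
    _ ≤ ((N : ℝ)⁻¹ * (‖corner x N‖ + ‖(corner x N)ᵀ‖)) ^ 2 := by gcongr; exact norm_add_le _ _
    _ = 4 * (N : ℝ)⁻¹ ^ 2 * ‖corner x N‖ ^ 2 := by
        rw [Matrix.frobenius_norm_transpose]
        ring
    _ = _ := by rw [frobenius_norm_sq_eq_sum]; rfl

theorem frobenius_norm_scaledSymm_mul_self_le (y : ℤ → ℤ → ℝ) (N : ℕ) :
    ‖scaledSymm y N * scaledSymm y N‖ ≤
      (N : ℝ)⁻¹ ^ 2 * (4 * ‖corner y N * (corner y N)ᵀ‖) := by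
  rw [scaledSymm, smul_mul_smul_comm, norm_smul, ← sq, norm_pow, norm_inv, RCLike.norm_natCast]
  gcongr
  exact frobenius_norm_add_transpose_mul_self_le _

variable {Ω : Type*} [MeasurableSpace Ω] {P : Measure Ω}

theorem measureReal_le_integral_div [IsFiniteMeasure P] {S : Set Ω} {g : Ω → ℝ} {a : ℝ}
    (hg : Integrable g P) (hg0 : ∀ ω, 0 ≤ g ω) (ha : 0 < a) (hS : ∀ ω ∈ S, a ≤ g ω) :
    P.real S ≤ (∫ ω, g ω ∂P) / a := by
  rw [le_div_iff₀' ha]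
  exact (mul_le_mul_of_nonneg_left (measureReal_mono hS) ha.le).trans
    (mul_meas_ge_le_integral_of_nonneg (.of_forall hg0) hg a)

theorem integral_sum_sum_norm_sq_le {x : ℤ → ℤ → Ω → 𝕜} {V : ℝ} (hx : ∀ j k, MemLp (x j k) 2 P)
    (hV : ∀ j k, ∫ ω, ‖x j k ω‖ ^ 2 ∂P ≤ V) (N : ℕ) :
    ∫ ω, ∑ i : Fin N, ∑ j : Fin N, ‖x ((i : ℕ) + 1) ((j : ℕ) + 1) ω‖ ^ 2 ∂P ≤ (N : ℝ) ^ 2 * V := by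
  have hint (j k) : Integrable (fun ω => ‖x j k ω‖ ^ 2) P :=
    (hx j k).integrable_norm_pow two_ne_zero
  rw [integral_finsetSum _ fun i _ => integrable_finsetSum _ fun j _ => hint _ _]
  simp only [integral_finsetSum _ fun _ _ => hint _ _]
  calc _ ≤ ∑ _i : Fin N, ∑ _j : Fin N, V := by gcongr; exact hV _ _
    _ = (N : ℝ) ^ 2 * V := by simp [sq, mul_assoc]

theorem integrable_norm_scaledSymm_sq {x : ℤ → ℤ → Ω → 𝕜} (hx : ∀ j k, MemLp (x j k) 2 P) (N : ℕ) :
    Integrable (fun ω => ‖scaledSymm (x · · ω) N‖ ^ 2) P := by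
  simp only [frobenius_norm_sq_eq_sum]
  exact integrable_finsetSum _ fun i _ => integrable_finsetSum _ fun j _ =>
    (((hx _ _).add (hx _ _)).const_smul (N : 𝕜)⁻¹).integrable_norm_pow two_ne_zero

theorem integral_norm_scaledSymm_sq_le {x : ℤ → ℤ → Ω → 𝕜} {V : ℝ}
    (hx : ∀ j k, MemLp (x j k) 2 P) (hV : ∀ j k, ∫ ω, ‖x j k ω‖ ^ 2 ∂P ≤ V) (N : ℕ) :
    ∫ ω, ‖scaledSymm (x · · ω) N‖ ^ 2 ∂P ≤ 4 * V := by
  have hV0 : 0 ≤ V := (integral_nonneg fun ω => sq_nonneg ‖x 0 0 ω‖).trans (hV 0 0)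
  have hint : Integrable (fun ω => 4 * (N : ℝ)⁻¹ ^ 2 * ∑ i : Fin N, ∑ j : Fin N,
      ‖x ((i : ℕ) + 1) ((j : ℕ) + 1) ω‖ ^ 2) P :=
    (integrable_finsetSum _ fun i _ => integrable_finsetSum _ fun j _ =>
      (hx _ _).integrable_norm_pow two_ne_zero).const_mul _
  calc ∫ ω, ‖scaledSymm (x · · ω) N‖ ^ 2 ∂P
      ≤ ∫ ω, 4 * (N : ℝ)⁻¹ ^ 2 * ∑ i : Fin N, ∑ j : Fin N,
          ‖x ((i : ℕ) + 1) ((j : ℕ) + 1) ω‖ ^ 2 ∂P :=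
        integral_mono (integrable_norm_scaledSymm_sq hx N) hint fun ω =>
          frobenius_norm_scaledSymm_sq_le (x · · ω) N
    _ ≤ 4 * (N : ℝ)⁻¹ ^ 2 * ((N : ℝ) ^ 2 * V) := by
        rw [integral_const_mul]
        gcongr
        exact integral_sum_sum_norm_sq_le hx hV N
    _ = 4 * V * ((N : ℝ)⁻¹ * N) ^ 2 := by ring
    _ ≤ 4 * V * 1 ^ 2 := by gcongr; exact inv_mul_le_one
    _ = 4 * V := by ring

theorem measureReal_le_norm_scaledSymm_le [IsFiniteMeasure P] {x : ℤ → ℤ → Ω → 𝕜} {V : ℝ}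
    (hx : ∀ j k, MemLp (x j k) 2 P) (hV : ∀ j k, ∫ ω, ‖x j k ω‖ ^ 2 ∂P ≤ V) (N : ℕ) {R : ℝ}
    (hR : 0 < R) : P.real {ω | R ≤ ‖scaledSymm (x · · ω) N‖} ≤ 4 * V / R ^ 2 :=
  (measureReal_le_integral_div (integrable_norm_scaledSymm_sq hx N) (fun ω => sq_nonneg _)
    (pow_pos hR 2) fun _ hω => pow_le_pow_left₀ hR.le hω 2).trans <| by
    gcongr
    exact integral_norm_scaledSymm_sq_le hx hV N

theorem measureReal_le_norm_trace_pow_sub_le {n : Type*} [Fintype n] [DecidableEq n]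
    [IsFiniteMeasure P] {A B : Ω → Matrix n n 𝕜} {s : Ω → ℝ}
    (hleft : ∀ ω, ‖(A ω - B ω) * A ω‖ ≤ ‖A ω‖ * s ω)
    (hright : ∀ ω, ‖B ω * (A ω - B ω)‖ ≤ ‖B ω‖ * s ω) {R τ : ℝ} (hR : 0 < R) (hτ : 0 < τ) (m : ℕ) :
    P.real {ω | (m + 4) * R ^ (m + 3) * τ ≤ ‖(A ω ^ (m + 4)).trace - (B ω ^ (m + 4)).trace‖} ≤
      P.real {ω | R ≤ ‖A ω‖} + P.real {ω | R ≤ ‖B ω‖} + P.real {ω | τ ≤ s ω} := by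
  have hsub : {ω | (m + 4) * R ^ (m + 3) * τ ≤
        ‖(A ω ^ (m + 4)).trace - (B ω ^ (m + 4)).trace‖} ⊆
      {ω | R ≤ ‖A ω‖} ∪ {ω | R ≤ ‖B ω‖} ∪ {ω | τ ≤ s ω} := by
    intro ω
    contrapose!
    simp only [Set.mem_union, Set.mem_ofPred_eq, not_or, not_le, and_imp]
    intro hA hB hs
    have : max (s ω) 0 < τ := max_lt hs hτ
    have hmul {x : ℝ} (hx : 0 ≤ x) (hxR : x ≤ R) : x * s ω ≤ R * max (s ω) 0 :=
      (mul_le_mul_of_nonneg_left (le_max_left _ _) hx).trans (by gcongr)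
    calc _ ≤ (m + 4) * R ^ (m + 2) * (R * max (s ω) 0) :=
          norm_trace_pow_sub_trace_pow_le hA.le hB.le
            ((hleft ω).trans (hmul (norm_nonneg _) hA.le))
            ((hright ω).trans (hmul (norm_nonneg _) hB.le)) m
      _ < (m + 4) * R ^ (m + 2) * (R * τ) := by gcongr
      _ = (m + 4) * R ^ (m + 3) * τ := by ring
  exact (measureReal_mono hsub).trans ((measureReal_union_le _ _).trans
    (add_le_add_left (measureReal_union_le _ _) _))

theorem exists_forall_measureReal_trace_pow_sub_le [IsFiniteMeasure P] (𝕜 : Type*) [RCLike 𝕜]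
    (m : ℕ) (V : ℝ) {ε : ℝ} (hε : 0 < ε) :
    ∃ τ > 0, ∀ {N : ℕ} {A B : Ω → Matrix (Fin N) (Fin N) 𝕜} {s : Ω → ℝ},
      (∀ R > 0, P.real {ω | R ≤ ‖A ω‖} ≤ V / R ^ 2) →
      (∀ R > 0, P.real {ω | R ≤ ‖B ω‖} ≤ V / R ^ 2) →
      (∀ ω, ‖(A ω - B ω) * A ω‖ ≤ ‖A ω‖ * s ω) → (∀ ω, ‖B ω * (A ω - B ω)‖ ≤ ‖B ω‖ * s ω) →
      P.real {ω | τ ≤ s ω} ≤ τ →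
      P.real {ω | ε ≤ ‖(A ω ^ (m + 4)).trace - (B ω ^ (m + 4)).trace‖} ≤ ε := by
  have hlim : Tendsto (fun R : ℝ => V / R ^ 2) atTop (nhds 0) :=
    tendsto_const_nhds.div_atTop (tendsto_pow_atTop two_ne_zero)
  obtain ⟨R, hRV, hR⟩ := ((hlim.eventually_le_const (show 0 < ε / 3 by positivity)).and
    (eventually_gt_atTop 0)).exists
  refine ⟨min (ε / 3) (ε / ((m + 4) * R ^ (m + 3))), by positivity, ?_⟩
  intro N A B s hA hB hleft hright hs
  set τ := min (ε / 3) (ε / ((m + 4) * R ^ (m + 3)))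
  have hτ : (m + 4) * R ^ (m + 3) * τ ≤ ε :=
    (le_div_iff₀' (by positivity)).1 (min_le_right _ _)
  calc P.real {ω | ε ≤ ‖(A ω ^ (m + 4)).trace - (B ω ^ (m + 4)).trace‖}
      ≤ P.real {ω | (m + 4) * R ^ (m + 3) * τ ≤
          ‖(A ω ^ (m + 4)).trace - (B ω ^ (m + 4)).trace‖} :=
        measureReal_mono fun ω hω => hτ.trans hω
    _ ≤ P.real {ω | R ≤ ‖A ω‖} + P.real {ω | R ≤ ‖B ω‖} + P.real {ω | τ ≤ s ω} :=
        measureReal_le_norm_trace_pow_sub_le hleft hright hR (by positivity) m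
    _ ≤ ε / 3 + ε / 3 + ε / 3 := by
        gcongr
        exacts [(hA R hR).trans hRV, (hB R hR).trans hRV, hs.trans (min_le_left _ _)]
    _ = ε := by ring

theorem tendstoInMeasure_sqrt_norm_scaledSymm_mul_self [IsProbabilityMeasure P]
    {Y : ℤ → ℤ → Ω → ℝ} (hY : IsCenteredGaussian P fun (p : ℤ × ℤ) => Y p.1 p.2) {r : ℤ × ℤ → ℝ}
    (hr : ∀ p q : ℤ × ℤ, ∫ ω, Y p.1 p.2 ω * Y q.1 q.2 ω ∂P = r (q - p))
    (hr0 : Tendsto r cofinite (nhds 0)) :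
    TendstoInMeasure P (fun N ω => √‖scaledSymm (Y · · ω) N * scaledSymm (Y · · ω) N‖) atTop
      fun _ => 0 := by
  refine tendstoInMeasure_iff_eventually_measureReal_le.2 fun τ hτ => ?_
  filter_upwards [(tendsto_integral_frobenius_norm_corner_mul_transpose_sq hY hr
    hr0).eventually_le_const (show 0 < τ ^ 5 / 16 by positivity)] with N hN
  have hle (ω) (hω : ω ∈ {ω | τ ≤ dist √‖scaledSymm (Y · · ω) N * scaledSymm (Y · · ω) N‖ 0}) :
      τ ^ 4 ≤ 16 * (N : ℝ)⁻¹ ^ 4 * ‖corner (Y · · ω) N * (corner (Y · · ω) N)ᵀ‖ ^ 2 := by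
    rw [Set.mem_ofPred_eq, Real.dist_0_eq_abs, abs_of_nonneg (Real.sqrt_nonneg _),
      Real.le_sqrt' hτ] at hω
    calc τ ^ 4 = (τ ^ 2) ^ 2 := by ring
      _ ≤ ((N : ℝ)⁻¹ ^ 2 * (4 * ‖corner (Y · · ω) N * (corner (Y · · ω) N)ᵀ‖)) ^ 2 := by
          gcongr
          exact hω.trans (frobenius_norm_scaledSymm_mul_self_le _ _)
      _ = _ := by ring
  refine (measureReal_le_integral_div
    ((integrable_frobenius_norm_corner_mul_transpose_sq hY N).const_mul _)
    (fun ω => by positivity) (pow_pos hτ 4) hle).trans ?_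
  rw [integral_const_mul, div_le_iff₀ (by positivity)]
  calc _ = 16 * ((∫ ω, ‖corner (Y · · ω) N * (corner (Y · · ω) N)ᵀ‖ ^ 2 ∂P) / (N : ℝ) ^ 4) := by
        rw [inv_pow]
        ring
    _ ≤ 16 * (τ ^ 5 / 16) := by gcongr
    _ = τ * τ ^ 4 := by ring

theorem integral_norm_sq_le_two_mul_add {f g : Ω → 𝕜} (hf : MemLp f 2 P) (hg : MemLp g 2 P) :
    ∫ ω, ‖g ω‖ ^ 2 ∂P ≤ 2 * (∫ ω, ‖f ω‖ ^ 2 ∂P + ∫ ω, ‖f ω - g ω‖ ^ 2 ∂P) := by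
  have hf2 := hf.integrable_norm_pow two_ne_zero
  have hd2 : Integrable (fun ω => ‖f ω - g ω‖ ^ 2) P :=
    (hf.sub hg).integrable_norm_pow two_ne_zero
  rw [← integral_add hf2 hd2, ← integral_const_mul]
  refine integral_mono (hg.integrable_norm_pow two_ne_zero) ((hf2.add hd2).const_mul 2) fun ω => ?_
  calc ‖g ω‖ ^ 2 = ‖f ω - (f ω - g ω)‖ ^ 2 := by rw [sub_sub_cancel]
    _ ≤ (‖f ω‖ + ‖f ω - g ω‖) ^ 2 := by gcongr; exact norm_sub_le _ _
    _ ≤ 2 * (‖f ω‖ ^ 2 + ‖f ω - g ω‖ ^ 2) := add_sq_le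

theorem StatGauss.memLp {X : ℤ → ℤ → Ω → ℝ} (hX : StatGauss P X) (j k : ℤ) : MemLp (X j k) 2 P :=
  hX.isCenteredGaussian.memLp (j, k) 2

theorem StatGauss.integral_norm_sq {X : ℤ → ℤ → Ω → ℝ} (hX : StatGauss P X) (j k : ℤ) :
    ∫ ω, ‖X j k ω‖ ^ 2 ∂P = ∫ ω, ‖X 0 0 ω‖ ^ 2 ∂P := by
  simpa [sq] using hX.stat j k 0 0

namespace IsDiscretePart

variable {X Xd : ℤ → ℤ → Ω → ℝ} {νd : Measure (ℝ × ℝ)} (h : IsDiscretePart P X Xd νd)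

include h

theorem map_eq_gaussianReal (j k : ℤ) :
    P.map (Xd j k) = gaussianReal 0 (νd.real Set.univ).toNNReal := by
  have := h.map_sum (Finsupp.single (j, k) 1)
  rw [Finsupp.support_single _ one_ne_zero] at this
  simpa [torusChar.norm_eq_one] using this

theorem memLp (j k : ℤ) : MemLp (Xd j k) 2 P :=
  memLp_of_map_eq_gaussianReal (h.meas j k).aemeasurable (h.map_eq_gaussianReal j k) 2

theorem integral_norm_sq (j k : ℤ) : ∫ ω, ‖Xd j k ω‖ ^ 2 ∂P = νd.real Set.univ := by
  simp only [Real.norm_eq_abs, sq_abs]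
  rw [integral_sq_of_map_eq_gaussianReal (h.meas j k).aemeasurable (h.map_eq_gaussianReal j k),
    Real.coe_toNNReal _ measureReal_nonneg]

theorem tendstoInMeasure_trace_pow_sub [IsProbabilityMeasure P] (hX : StatGauss P X) (m : ℕ) :
    TendstoInMeasure P (fun N ω => (scaledSymm (X · · ω) N ^ (m + 4)).trace -
      (scaledSymm (Xd · · ω) N ^ (m + 4)).trace) atTop fun _ => 0 := by
  obtain ⟨r, hr0, hr⟩ := h.cov_sub
  set V := max (∫ ω, ‖X 0 0 ω‖ ^ 2 ∂P) (νd.real Set.univ)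
  have hs := tendstoInMeasure_sqrt_norm_scaledSymm_mul_self
    (Y := fun j k ω => X j k ω - Xd j k ω) h.gauss_sub hr hr0
  refine tendstoInMeasure_iff_eventually_measureReal_le.2 fun ε hε => ?_
  obtain ⟨τ, hτ, hcomp⟩ := exists_forall_measureReal_trace_pow_sub_le (P := P) ℝ m (4 * V) hε
  filter_upwards [tendstoInMeasure_iff_eventually_measureReal_le.1 hs τ hτ] with N hN
  simp only [scaledSymm_sub, Real.dist_0_eq_abs, abs_of_nonneg (Real.sqrt_nonneg _)] at hN ⊢
  have hherm (ω) : (scaledSymm (X · · ω) N - scaledSymm (Xd · · ω) N).IsHermitian :=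
    (isHermitian_scaledSymm _ N).sub (isHermitian_scaledSymm _ N)
  exact hcomp
    (fun R => measureReal_le_norm_scaledSymm_le hX.memLp
      (fun j k => (hX.integral_norm_sq j k).trans_le (le_max_left _ _)) N)
    (fun R => measureReal_le_norm_scaledSymm_le h.memLp
      (fun j k => (h.integral_norm_sq j k).trans_le (le_max_right _ _)) N)
    (fun ω => frobenius_norm_mul_le_mul_sqrt (hherm ω) _)
    (fun ω => frobenius_norm_mul_le_mul_sqrt' (hherm ω) _) hN

theorem exists_finset_measureReal_trace_pow_sub_le [IsProbabilityMeasure P] (m : ℕ) {ε : ℝ}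
    (hε : 0 < ε) :
    ∃ (F : Finset (ℝ × ℝ)) (Z : ℝ × ℝ → Ω → ℂ), (∀ a ∈ F, Measurable (Z a)) ∧
      ∀ N, P.real {ω | ε ≤ ‖(scaledSymm (fun j k => (Xd j k ω : ℂ)) N ^ (m + 4)).trace -
        (scaledSymm (fun j k => ∑ a ∈ F, torusChar (j, k) a * Z a ω) N ^ (m + 4)).trace‖} ≤ ε := by
  set V := νd.real Set.univ
  obtain ⟨τ, hτ, hcomp⟩ :=
    exists_forall_measureReal_trace_pow_sub_le (P := P) ℂ m (4 * (2 * (V + 1))) hε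
  obtain ⟨F, Z, hZ, hZ2, hclose⟩ := h.approx (min 1 (τ ^ 3 / 4)) (by positivity)
  have hV : 0 ≤ V := measureReal_nonneg
  have hXd2 (j k) : MemLp (fun ω => (Xd j k ω : ℂ)) 2 P := (h.memLp j k).ofReal (K := ℂ)
  have hXdV (j k) : ∫ ω, ‖(Xd j k ω : ℂ)‖ ^ 2 ∂P = V := by
    simpa only [Complex.norm_real] using h.integral_norm_sq j k
  have hS2 (j k : ℤ) : MemLp (fun ω => ∑ a ∈ F, torusChar (j, k) a * Z a ω) 2 P :=
    memLp_finsetSum _ fun a ha => (hZ2 a ha).const_mul _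
  refine ⟨F, Z, hZ, fun N => hcomp
    (s := fun ω => ‖scaledSymm (fun j k => (Xd j k ω : ℂ)) N -
      scaledSymm (fun j k => ∑ a ∈ F, torusChar (j, k) a * Z a ω) N‖)
    (fun R => measureReal_le_norm_scaledSymm_le hXd2 (fun j k => ?_) N)
    (fun R => measureReal_le_norm_scaledSymm_le hS2 (fun j k => ?_) N)
    (fun ω => ?_) (fun ω => Matrix.frobenius_norm_mul _ _) ?_⟩
  · linarith [hXdV j k]
  · have := (hclose (j, k)).trans (min_le_left _ _)
    linarith [integral_norm_sq_le_two_mul_add (hXd2 j k) (hS2 j k), hXdV j k]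
  · rw [mul_comm ‖scaledSymm _ N‖]
    exact Matrix.frobenius_norm_mul _ _
  · simp only [← scaledSymm_sub]
    refine (measureReal_le_norm_scaledSymm_le (fun j k => (hXd2 j k).sub (hS2 j k))
      (fun j k => (hclose (j, k)).trans (min_le_right _ _)) N hτ).trans_eq ?_
    field_simp

end IsDiscretePart

end ScaledSymm

/-! ### Traces of matrices of bounded rank -/

theorem trace_mul_pow_succ_comm {m n R : Type*} [Fintype m] [Fintype n] [DecidableEq m]
    [DecidableEq n] [CommSemiring R] (U : Matrix m n R) (V : Matrix n m R) (k : ℕ) :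
    ((U * V) ^ (k + 1)).trace = ((V * U) ^ (k + 1)).trace := by
  have hpow (k : ℕ) : (U * V) ^ (k + 1) = U * (V * U) ^ k * V := by
    induction k with
    | zero => simp
    | succ k ih => rw [pow_succ, ih, pow_succ (V * U)]; simp only [Matrix.mul_assoc]
  rw [hpow, Matrix.trace_mul_comm, ← Matrix.mul_assoc, ← pow_succ']

section TrigSum

variable {κ : Type*} (s t w : κ → ℂ) (N : ℕ)

/-- Left factor of the scaled symmetrised corner of `∑ b, s b ^ i * t b ^ j * w b`. -/
def trigLeft : Matrix (Fin N) κ ℂ := Matrix.of fun i b => (N : ℂ)⁻¹ * (s b ^ ((i : ℕ) + 1) * w b)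

/-- Right factor of the scaled symmetrised corner of `∑ b, s b ^ i * t b ^ j * w b`. -/
def trigRight : Matrix κ (Fin N) ℂ := Matrix.of fun b j => t b ^ ((j : ℕ) + 1)

theorem trigRight_mul_trigLeft_apply (b b' : κ) :
    (trigRight t N * trigLeft s w N) b b' =
      t b * s b' * geomAverage N (t b * s b') * w b' := by
  simp only [Matrix.mul_apply, trigLeft, trigRight, geomAverage, Matrix.of_apply, Finset.sum_range,
    Finset.mul_sum, Finset.sum_mul]
  exact Finset.sum_congr rfl fun j _ => by ring

open scoped Classical in
theorem tendsto_trigRight_mul_trigLeft {s t : κ → ℂ} (hs : ∀ b, ‖s b‖ = 1) (ht : ∀ b, ‖t b‖ = 1) :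
    Tendsto (fun N => trigRight t N * trigLeft s w N) atTop
      (nhds (Matrix.of fun b b' => if t b * s b' = 1 then w b' else 0)) := by
  refine tendsto_pi_nhds.2 fun b => tendsto_pi_nhds.2 fun b' => ?_
  have hnorm : ‖t b * s b'‖ = 1 := by rw [norm_mul, hs, ht, one_mul]
  have hlim := ((tendsto_geomAverage hnorm).const_mul (t b * s b')).mul_const (w b')
  simp_rw [trigRight_mul_trigLeft_apply]
  convert hlim using 2
  split_ifs with h <;> simp [h]

variable [Fintype κ]

theorem scaledSymm_trigSum_eq (u v z : κ → ℂ) :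
    scaledSymm (fun i j => ∑ a, u a ^ i * v a ^ j * z a) N =
      trigLeft (Sum.elim u v) (Sum.elim z z) N * trigRight (Sum.elim v u) N := by
  ext i j
  simp only [scaledSymm, corner, trigLeft, trigRight, Matrix.mul_apply, Fintype.sum_sum_type,
    Matrix.smul_apply, Matrix.add_apply, Matrix.transpose_apply, Matrix.of_apply, smul_eq_mul,
    Sum.elim_inl, Sum.elim_inr, mul_add, Finset.mul_sum]
  norm_cast
  congr 1 <;> exact Finset.sum_congr rfl fun a _ => by ring

theorem exists_tendsto_trace_scaledSymm_trigSum_pow {u v : κ → ℂ} (hu : ∀ a, ‖u a‖ = 1)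
    (hv : ∀ a, ‖v a‖ = 1) (z : κ → ℂ) (k : ℕ) :
    ∃ l, Tendsto (fun N => (scaledSymm (fun i j => ∑ a, u a ^ i * v a ^ j * z a) N ^ (k + 1)).trace)
      atTop (nhds l) := by
  classical
  have hcont : Continuous fun M : Matrix (κ ⊕ κ) (κ ⊕ κ) ℂ => (M ^ (k + 1)).trace := by fun_prop
  have hnorm : ∀ b, ‖Sum.elim u v b‖ = 1 ∧ ‖Sum.elim v u b‖ = 1 := by
    rintro (a | a) <;> exact ⟨by simp [hu, hv], by simp [hu, hv]⟩
  refine ⟨_, ((hcont.tendsto _).comp (tendsto_trigRight_mul_trigLeft (Sum.elim z z)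
    (fun b => (hnorm b).1) fun b => (hnorm b).2)).congr fun N => ?_⟩
  rw [scaledSymm_trigSum_eq, trace_mul_pow_succ_comm]
  rfl

theorem torusChar_apply_eq_zpow_mul_zpow (p : ℤ × ℤ) (q : ℝ × ℝ) :
    torusChar p q = torusChar (1, 0) q ^ p.1 * torusChar (0, 1) q ^ p.2 := by
  simp only [torusChar, ← Complex.exp_int_mul, ← Complex.exp_add]
  congr 1
  push_cast
  ring

theorem exists_tendsto_trace_scaledSymm_torusChar_sum_pow (F : Finset (ℝ × ℝ)) (z : ℝ × ℝ → ℂ)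
    (k : ℕ) : ∃ l, Tendsto (fun N =>
      (scaledSymm (fun i j => ∑ a ∈ F, torusChar (i, j) a * z a) N ^ (k + 1)).trace)
      atTop (nhds l) := by
  obtain ⟨l, hl⟩ := exists_tendsto_trace_scaledSymm_trigSum_pow
    (u := fun a : F => torusChar (1, 0) a) (v := fun a => torusChar (0, 1) a)
    (fun a => torusChar.norm_eq_one _ _) (fun a => torusChar.norm_eq_one _ _) (fun a => z a) k
  refine ⟨l, hl.congr fun N => ?_⟩
  congr! 5 with i j
  rw [← Finset.sum_coe_sort F]
  exact Finset.sum_congr rfl fun a _ => by rw [torusChar_apply_eq_zpow_mul_zpow (i, j)]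

end TrigSum

/-! ### Laws of arrays -/

section ProcessLaw

variable {Ω Ω' : Type*} [MeasurableSpace Ω] [MeasurableSpace Ω'] {P : Measure Ω} {P' : Measure Ω'}

theorem exists_finsupp_apply_restrict_eq_sum {ι : Type*} (I : Finset ι)
    (L : StrongDual ℝ (I → ℝ)) :
    ∃ c : ι →₀ ℝ, ∀ x : ι → ℝ, L (I.restrict x) = ∑ i ∈ c.support, c i * x i := by
  classical
  set c := Finsupp.indicator I fun i hi => L (Pi.single ⟨i, hi⟩ 1)
  have hsupport : c.support ⊆ I := Finsupp.support_indicator_subset I _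
  refine ⟨c, fun x => ?_⟩
  rw [Finset.sum_subset hsupport fun i _ hi => by rw [Finsupp.notMem_support_iff.1 hi, zero_mul],
    ← Finset.sum_coe_sort I, pi_eq_sum_univ' (I.restrict x), map_sum]
  refine Finset.sum_congr rfl fun i _ => ?_
  rw [map_smul, smul_eq_mul, mul_comm, Finsupp.indicator_of_mem i.2]
  rfl

theorem map_process_eq_of_forall_map_sum_eq [IsProbabilityMeasure P] [IsProbabilityMeasure P']
    {ι : Type*} {X : ι → Ω → ℝ} {X' : ι → Ω' → ℝ} (hX : ∀ i, Measurable (X i))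
    (hX' : ∀ i, Measurable (X' i))
    (h : ∀ c : ι →₀ ℝ, P'.map (fun ω => ∑ i ∈ c.support, c i * X' i ω) =
      P.map fun ω => ∑ i ∈ c.support, c i * X i ω) :
    P'.map (fun ω i => X' i ω) = P.map fun ω i => X i ω := by
  have hXmeas : Measurable fun ω => (X · ω) := measurable_pi_lambda _ hX
  have hXmeas' : Measurable fun ω => (X' · ω) := measurable_pi_lambda _ hX'
  have hlim := isProjectiveLimit_map (P := P) hXmeas.aemeasurable
  suffices hfin : ∀ I : Finset ι, P'.map (fun ω => I.restrict (X' · ω)) =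
      P.map fun ω => I.restrict (X · ω) by
    have hlim' := isProjectiveLimit_map (P := P') hXmeas'.aemeasurable
    simp only [hfin] at hlim'
    exact hlim'.unique hlim
  intro I
  have hI : Measurable fun ω => I.restrict (X · ω) := by fun_prop
  have hI' : Measurable fun ω => I.restrict (X' · ω) := by fun_prop
  refine Measure.ext_of_charFunDual (funext fun L => ?_)
  obtain ⟨c, hc⟩ := exists_finsupp_apply_restrict_eq_sum I L
  rw [charFunDual_eq_charFun_map_one, charFunDual_eq_charFun_map_one,
    Measure.map_map L.continuous.measurable hI, Measure.map_map L.continuous.measurable hI']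
  simp only [Function.comp_def, hc, h]

end ProcessLaw

section LimitTraces

theorem continuous_scaledSymm {𝕜 : Type*} [RCLike 𝕜] (N : ℕ) :
    Continuous fun x : ℤ × ℤ → 𝕜 => scaledSymm (fun j k => x (j, k)) N :=
  continuous_matrix fun i j => by
    simp only [scaledSymm, corner, Matrix.smul_apply, Matrix.add_apply, Matrix.transpose_apply,
      Matrix.of_apply]
    fun_prop

theorem continuous_EMcfg_scaledSymm (N : ℕ) :
    Continuous fun x : ℤ × ℤ → ℝ => EMcfg (scaledSymm (fun j k => x (j, k)) N) :=
  EMcfg.continuous_comp (continuous_scaledSymm N) fun _ => isHermitian_scaledSymm _ N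

variable {Ω : Type*} [MeasurableSpace Ω] {P : Measure Ω}

theorem measurable_trace_scaledSymm_pow {𝕜 : Type*} [RCLike 𝕜] {x : ℤ → ℤ → Ω → 𝕜}
    (hx : ∀ j k, Measurable (x j k)) (N k : ℕ) :
    Measurable fun ω => (scaledSymm (x · · ω) N ^ k).trace := by
  have hcont : Continuous fun y : ℤ × ℤ → 𝕜 => (scaledSymm (fun j k => y (j, k)) N ^ k).trace :=
    ((continuous_scaledSymm N).pow k).matrix_trace
  have hmeas : Measurable fun ω (p : ℤ × ℤ) => x p.1 p.2 ω :=
    measurable_pi_lambda _ fun p => hx p.1 p.2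
  simpa only [Function.comp_def] using hcont.measurable.comp hmeas

theorem measurable_EMcfg_scaledSymm {x : ℤ → ℤ → Ω → ℝ} (hx : ∀ j k, Measurable (x j k)) (N : ℕ) :
    Measurable fun ω => EMcfg (scaledSymm (x · · ω) N) := by
  have hmeas : Measurable fun ω (p : ℤ × ℤ) => x p.1 p.2 ω :=
    measurable_pi_lambda _ fun p => hx p.1 p.2
  simpa only [Function.comp_def] using (continuous_EMcfg_scaledSymm N).measurable.comp hmeas

namespace IsDiscretePart

variable {X Xd : ℤ → ℤ → Ω → ℝ} {νd : Measure (ℝ × ℝ)} (h : IsDiscretePart P X Xd νd)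

include h

theorem map_EMcfg_eq [IsProbabilityMeasure P] {Ω' : Type*} [MeasurableSpace Ω'] {P' : Measure Ω'}
    [IsProbabilityMeasure P'] {X' Xd' : ℤ → ℤ → Ω' → ℝ} (h' : IsDiscretePart P' X' Xd' νd) (N : ℕ) :
    P'.map (fun ω => EMcfg (scaledSymm (Xd' · · ω) N)) =
      P.map fun ω => EMcfg (scaledSymm (Xd · · ω) N) := by
  have hmap := map_process_eq_of_forall_map_sum_eq (P := P) (P' := P')
    (fun p : ℤ × ℤ => h.meas p.1 p.2) (fun p => h'.meas p.1 p.2)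
    fun c => (h'.map_sum c).trans (h.map_sum c).symm
  have hcont := (continuous_EMcfg_scaledSymm N).measurable
  have hpush := congrArg (Measure.map fun x : ℤ × ℤ → ℝ =>
    EMcfg (scaledSymm (fun j k => x (j, k)) N)) hmap
  rwa [Measure.map_map hcont (measurable_pi_lambda _ fun p => h'.meas p.1 p.2),
    Measure.map_map hcont (measurable_pi_lambda _ fun p => h.meas p.1 p.2)] at hpush

theorem cauchyInMeasure_trace_scaledSymm_pow [IsProbabilityMeasure P] (m : ℕ) :
    CauchyInMeasure P fun N ω => (scaledSymm (Xd · · ω) N ^ (m + 4)).trace := by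
  have hcomplex : CauchyInMeasure P fun N ω =>
      (scaledSymm (fun j k => (Xd j k ω : ℂ)) N ^ (m + 4)).trace := by
    refine cauchyInMeasure_of_forall_exists_close fun ε hε => ?_
    obtain ⟨F, Z, hZ, hclose⟩ := h.exists_finset_measureReal_trace_pow_sub_le m hε
    choose l hl using fun ω =>
      exists_tendsto_trace_scaledSymm_torusChar_sum_pow F (fun a => Z a ω) (m + 3)
    refine ⟨_, cauchyInMeasure_of_tendstoInMeasure (tendstoInMeasure_of_tendsto_ae
      (fun N => (measurable_trace_scaledSymm_pow (fun j k => ?_) N (m + 4)).aestronglyMeasurable)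
      (ae_of_all _ hl)), fun N => by simpa only [dist_eq_norm] using hclose N⟩
    exact Finset.measurable_fun_sum _ fun a ha => (hZ a ha).const_mul _
  simpa only [CauchyInMeasure, trace_scaledSymm_ofReal_pow, Complex.isometry_ofReal.dist_eq]
    using hcomplex

theorem exists_tendstoInMeasure_trace_scaledSymm_pow [IsProbabilityMeasure P] (hX : StatGauss P X)
    (m : ℕ) :
    ∃ T : Ω → ℝ,
      TendstoInMeasure P (fun N ω => (scaledSymm (Xd · · ω) N ^ (m + 4)).trace) atTop T ∧
      TendstoInMeasure P (fun N ω => (scaledSymm (X · · ω) N ^ (m + 4)).trace) atTop T := by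
  obtain ⟨T, hT⟩ := (h.cauchyInMeasure_trace_scaledSymm_pow m).exists_tendstoInMeasure
    fun N => (measurable_trace_scaledSymm_pow h.meas N (m + 4)).aemeasurable
  refine ⟨T, hT, ?_⟩
  exact tendstoInMeasure_of_tendstoInMeasure_sub (h.tendstoInMeasure_trace_pow_sub hX m) hT

end IsDiscretePart

end LimitTraces

/-! ### Convergence of the eigen measures -/

section EigenMeasureLimit

open scoped Matrix.Norms.Frobenius

variable {Ω : Type*} [MeasurableSpace Ω] {P : Measure Ω}

theorem IsDiscretePart.exists_subseqAETendsto [IsProbabilityMeasure P] {X Xd : ℤ → ℤ → Ω → ℝ}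
    {νd : Measure (ℝ × ℝ)} (h : IsDiscretePart P X Xd νd) (hX : StatGauss P X) :
    ∃ ξ : Ω → PtCfg, AEMeasurable ξ P ∧
      SubseqAETendsto P (fun N ω => EMcfg (scaledSymm (X · · ω) N)) ξ ∧
      SubseqAETendsto P (fun N ω => EMcfg (scaledSymm (Xd · · ω) N)) ξ := by
  choose T hTd hT using fun m => h.exists_tendstoInMeasure_trace_scaledSymm_pow hX m
  have hmem (x : ℤ → ℤ → Ω → ℝ) (N : ℕ) (ω : Ω) : EMcfg (scaledSymm (x · · ω) N) ∈
      PtCfg.decaySet ((EMcfg (scaledSymm (x · · ω) N)).moment 4) := by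
    rw [EMcfg.moment_eq_trace (isHermitian_scaledSymm _ N) four_ne_zero]
    exact EMcfg.mem_decaySet (isHermitian_scaledSymm _ N)
  have hmoment {x : ℤ → ℤ → Ω → ℝ} (hx : ∀ m, TendstoInMeasure P
      (fun N ω => (scaledSymm (x · · ω) N ^ (m + 4)).trace) atTop (T m)) (k : ℕ) (hk : k ≥ 4) :
      TendstoInMeasure P (fun N ω => (EMcfg (scaledSymm (x · · ω) N)).moment k) atTop
        (T (k - 4)) := by
    obtain ⟨m, rfl⟩ := Nat.exists_eq_add_of_le' hk
    simpa only [EMcfg.moment_eq_trace (isHermitian_scaledSymm _ _) (show m + 4 ≠ 0 by omega),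
      Nat.add_sub_cancel] using hx m
  obtain ⟨ξ, hξ, hlim⟩ := exists_forall_subseqAETendsto
    (fun N => (measurable_EMcfg_scaledSymm h.meas N).aemeasurable) (hmem Xd) (hmoment hTd)
  exact ⟨ξ, hξ, hlim _ (hmem X) (hmoment hT), hlim _ (hmem Xd) (hmoment hTd)⟩

theorem lintegral_sqSum_EMcfg_scaledSymm_le {x : ℤ → ℤ → Ω → ℝ} {V : ℝ}
    (hx : ∀ j k, MemLp (x j k) 2 P) (hV : ∀ j k, ∫ ω, ‖x j k ω‖ ^ 2 ∂P ≤ V) (N : ℕ) :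
    ∫⁻ ω, (EMcfg (scaledSymm (x · · ω) N)).sqSum ∂P ≤ ENNReal.ofReal (4 * V) := by
  have hnorm (ω : Ω) : (EMcfg (scaledSymm (x · · ω) N)).sqSum =
      ENNReal.ofReal (‖scaledSymm (x · · ω) N‖ ^ 2) := by
    have hherm := isHermitian_scaledSymm (x · · ω) N
    rw [EMcfg.sqSum_eq hherm, sq]
    nth_rw 1 [← hherm.eq]
    rw [← frobenius_norm_sq_eq_trace]
    rfl
  simp only [hnorm]
  rw [← ofReal_integral_eq_lintegral_ofReal (integrable_norm_scaledSymm_sq hx N)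
    (ae_of_all _ fun ω => sq_nonneg _)]
  exact ENNReal.ofReal_le_ofReal (integral_norm_scaledSymm_sq_le hx hV N)

theorem memC_EMcfg_scaledSymm (x : ℤ → ℤ → ℝ) (N : ℕ) : MemC 2 (EMcfg (scaledSymm x N)) :=
  PtCfg.memC_two_of_sqSum_ne_top <| by
    rw [EMcfg.sqSum_eq (isHermitian_scaledSymm x N)]
    exact ENNReal.ofReal_ne_top

theorem tendstoInMeasure_dPt_zero_iff {p : ℕ} {F : ℕ → Ω → PtCfg} {ξ : Ω → PtCfg} :
    TendstoInMeasure P (fun n ω => dPt p (F n ω) (ξ ω)) atTop 0 ↔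
      ∀ ε > 0, Tendsto (fun n => P {ω | ε ≤ dPt p (F n ω) (ξ ω)}) atTop (nhds 0) := by
  have hnonneg (s t : PtCfg) : 0 ≤ dPt p s t := by unfold dPt; positivity
  simp only [tendstoInMeasure_iff_norm, Pi.zero_apply, sub_zero, Real.norm_of_nonneg (hnonneg _ _)]

theorem StatGauss.ae_memC_two_and_tendstoInMeasure_dPt_four [IsProbabilityMeasure P]
    {X : ℤ → ℤ → Ω → ℝ} (hX : StatGauss P X) {ξ : Ω → PtCfg} (hξ : AEMeasurable ξ P)
    (h : SubseqAETendsto P (fun N ω => EMcfg (scaledW1 X N ω)) ξ) :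
    (∀ᵐ ω ∂P, MemC 2 (ξ ω)) ∧
      TendstoInMeasure P (fun N ω => dPt 4 (EMcfg (scaledW1 X N ω)) (ξ ω)) atTop 0 := by
  simp only [scaledW1_eq_scaledSymm] at h ⊢
  have hmeas (N : ℕ) := (measurable_EMcfg_scaledSymm hX.meas N).aemeasurable (μ := P)
  have hbound :=
    lintegral_sqSum_EMcfg_scaledSymm_le hX.memLp fun j k => (hX.integral_norm_sq j k).le
  exact ⟨(h.ae_sqSum_ne_top hmeas hξ ENNReal.ofReal_ne_top hbound).mono
      fun _ => PtCfg.memC_two_of_sqSum_ne_top,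
    h.tendstoInMeasure_dPt_four hmeas hξ
      (fun N ω => EMcfg.sorted (isHermitian_scaledSymm (X · · ω) N)) ENNReal.ofReal_ne_top hbound⟩

theorem ae_eq_of_tendstoInMeasure_dPt_four {X : ℤ → ℤ → Ω → ℝ} {ξ ξ' : Ω → PtCfg}
    (hξ : ∀ᵐ ω ∂P, MemC 2 (ξ ω)) (hξ' : ∀ᵐ ω ∂P, MemC 2 (ξ' ω))
    (h : TendstoInMeasure P (fun N ω => dPt 4 (EMcfg (scaledW1 X N ω)) (ξ ω)) atTop 0)
    (h' : TendstoInMeasure P (fun N ω => dPt 4 (EMcfg (scaledW1 X N ω)) (ξ' ω)) atTop 0) :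
    ξ =ᵐ[P] ξ' := by
  have hmono (s : PtCfg) (hs : MemC 2 s) : MemC 4 s :=
    PtCfg.memC_mono two_ne_zero (by norm_num) hs
  exact ae_eq_of_tendstoInMeasure_dPt four_ne_zero
    (fun N ω => hmono _ (memC_EMcfg_scaledSymm (X · · ω) N))
    (hξ.mono fun ω => hmono _) (hξ'.mono fun ω => hmono _) h h'

end EigenMeasureLimit

/-- **Theorem 6 (eigen measures).** There is a random point measure `ξ`,
almost surely in `𝒞₂`, with `d₄(EM(W_N/N), ξ) → 0` in probability; the law of
`ξ` is determined by the discrete component `ν_d` of the spectral measure. -/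
theorem statement6 {Ω : Type} [MeasurableSpace Ω] (P : Measure Ω)
    [IsProbabilityMeasure P] (X : ℤ → ℤ → Ω → ℝ) (ν νd : Measure (ℝ × ℝ))
    (f : ℝ × ℝ → ℝ) (hX : StatGauss P X) (hν : SpectralDecomp P X ν νd f) :
    ∃ ξ : Ω → PtCfg, AEMeasurable ξ P ∧ (∀ᵐ ω ∂P, MemC 2 (ξ ω)) ∧
      (∀ ε > 0, Tendsto
        (fun N => P {ω | ε ≤ dPt 4 (EMcfg (scaledW1 X N ω)) (ξ ω)})
        atTop (nhds 0)) ∧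
      ∀ {Ω' : Type} [MeasurableSpace Ω'] (P' : Measure Ω')
        [IsProbabilityMeasure P'] (X' : ℤ → ℤ → Ω' → ℝ)
        (ν' : Measure (ℝ × ℝ)) (f' : ℝ × ℝ → ℝ),
        StatGauss P' X' → SpectralDecomp P' X' ν' νd f' →
        ∀ ξ' : Ω' → PtCfg, AEMeasurable ξ' P' → (∀ᵐ ω ∂P', MemC 2 (ξ' ω)) →
          (∀ ε > 0, Tendsto
            (fun N => P' {ω | ε ≤ dPt 4 (EMcfg (scaledW1 X' N ω)) (ξ' ω)})
            atTop (nhds 0)) →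
          P'.map ξ' = P.map ξ := by
  obtain ⟨Xd, hXd⟩ := hν.exists_isDiscretePart hX
  obtain ⟨ξ, hξ, hlim, hlimd⟩ := hXd.exists_subseqAETendsto hX
  obtain ⟨hmem, hdist⟩ := hX.ae_memC_two_and_tendstoInMeasure_dPt_four hξ hlim
  refine ⟨ξ, hξ, hmem, tendstoInMeasure_dPt_zero_iff.1 hdist, ?_⟩
  intro Ω' _ P' _ X' ν' f' hX' hν' ξ' _ hmem' hdist'
  obtain ⟨Xd', hXd'⟩ := hν'.exists_isDiscretePart hX'
  obtain ⟨η, hη, hlim', hlimd'⟩ := hXd'.exists_subseqAETendsto hX'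
  obtain ⟨hmemη, hdistη⟩ := hX'.ae_memC_two_and_tendstoInMeasure_dPt_four hη hlim'
  calc P'.map ξ' = P'.map η := Measure.map_congr <|
        ae_eq_of_tendstoInMeasure_dPt_four hmem' hmemη
          (tendstoInMeasure_dPt_zero_iff.2 hdist') hdistη
    _ = P.map ξ := hlimd.map_eq hlimd'
        (fun N => (measurable_EMcfg_scaledSymm hXd.meas N).aemeasurable)
        (fun N => (measurable_EMcfg_scaledSymm hXd'.meas N).aemeasurable) (hXd.map_EMcfg_eq hXd')

end
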